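/- Let d ≥ 2, let Σ ⊂ GL_d(ℝ) be a compact subset, and let μ₀, μ₁ be Borel probability measures supported in Σ. Assume supp(μ₀) = Σ and L_1(μ₀) > L_2(μ₀). Then the map t ↦ L_1((1−t)μ₀ + tμ₁) is given by a convergent power series near 0: there exist ε > 0 and real coefficients (a_k)_{k≥0} with Σ_k |a_k| ε^k < ∞ such that L_1((1−t)μ₀ + tμ₁) = Σ_{k≥0} a_k t^k for all t ∈ [0, ε). -/

import Mathlib

open MeasureTheory Filter
open scoped LinearAlgebra.Projectivization

noncomputable section

abbrev GLd (d : ℕ) := GL (Fin d) ℝ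
abbrev Ed (d : ℕ) := EuclideanSpace ℝ (Fin d)
abbrev Pd (d : ℕ) := ℙ ℝ (Ed d)

variable {d : ℕ}

instance : MeasurableSpace (GLd d) := borel _
instance : BorelSpace (GLd d) := ⟨rfl⟩

instance : TopologicalSpace (Pd d) :=
  (instTopologicalSpaceQuotient : TopologicalSpace (Quotient (projectivizationSetoid ℝ (Ed d))))
instance : MeasurableSpace (Pd d) := borel _
instance : BorelSpace (Pd d) := ⟨rfl⟩

/-- The continuous linear map on Euclidean space induced by `g ∈ GL_d(ℝ)`. -/
def glCLM (g : GLd d) : Ed d →L[ℝ] Ed d :=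
  Matrix.toEuclideanCLM (𝕜 := ℝ) (g : Matrix (Fin d) (Fin d) ℝ)

/-- The operator norm of `g ∈ GL_d(ℝ)`. -/
def gnorm (g : GLd d) : ℝ := ‖glCLM g‖

lemma glCLM_leftInv (g : GLd d) (v : Ed d) : glCLM g⁻¹ (glCLM g v) = v := by
  have h : glCLM (d := d) g⁻¹ * glCLM g = 1 := by
    rw [glCLM, glCLM, ← map_mul]
    norm_cast
    rw [inv_mul_cancel g]
    exact map_one _
  calc glCLM g⁻¹ (glCLM g v) = (glCLM g⁻¹ * glCLM g) v := rfl
    _ = v := by rw [h]; rfl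

lemma glLinear_injective (g : GLd d) : Function.Injective (glCLM g).toLinearMap :=
  Function.LeftInverse.injective (g := (glCLM g⁻¹)) (fun v => glCLM_leftInv g v)

/-- The projective action of `g ∈ GL_d(ℝ)` on `ℙ(ℝ^d)`. -/
def pact (g : GLd d) : Pd d → Pd d :=
  Projectivization.map (glCLM g).toLinearMap (glLinear_injective g)

/-- The projective distance `δ` on `ℙ(ℝ^d)`, computed on representatives. -/
def pdelta (x y : Pd d) : ℝ :=
  Real.sqrt (‖x.rep‖ ^ 2 * ‖y.rep‖ ^ 2 - (inner ℝ x.rep y.rep : ℝ) ^ 2) /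
    (‖x.rep‖ * ‖y.rep‖)

/-- Convolution of two measures on `GL_d(ℝ)`. -/
def mconv (μ ν : Measure (GLd d)) : Measure (GLd d) :=
  (μ.prod ν).map (fun p => p.1 * p.2)

/-- `n`-fold convolution power of a measure on `GL_d(ℝ)`. -/
def mconvN (μ : Measure (GLd d)) : ℕ → Measure (GLd d)
  | 0 => Measure.dirac 1
  | n + 1 => if n = 0 then μ else mconv (mconvN μ n) μ

/-- The top Lyapunov exponent of a (compactly supported) measure on `GL_d(ℝ)`. -/
def L1 (μ : Measure (GLd d)) : ℝ :=
  limUnder atTop (fun n : ℕ => (n : ℝ)⁻¹ * ∫ g, Real.log (gnorm g) ∂(mconvN μ n))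

/-- `N₂ g = s₁(g)s₂(g)`, the product of the two largest singular values. -/
def N2 (g : GLd d) : ℝ :=
  sSup { x | ∃ p q : Ed d, ‖p‖ = 1 ∧ ‖q‖ = 1 ∧ (inner ℝ p q : ℝ) = 0 ∧
    x = Real.sqrt (‖glCLM g p‖ ^ 2 * ‖glCLM g q‖ ^ 2 -
      (inner ℝ (glCLM g p) (glCLM g q) : ℝ) ^ 2) }

/-- `L₁(μ) + L₂(μ)`. -/
def L12 (μ : Measure (GLd d)) : ℝ :=
  limUnder atTop (fun n : ℕ => (n : ℝ)⁻¹ * ∫ g, Real.log (N2 g) ∂(mconvN μ n))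

/-- The second Lyapunov exponent. -/
def L2 (μ : Measure (GLd d)) : ℝ := L12 μ - L1 μ

/-- The top Lyapunov exponent of the restriction of `μ` to an (invariant) subspace `V`. -/
def L1rest (μ : Measure (GLd d)) (V : Submodule ℝ (Ed d)) : ℝ :=
  limUnder atTop (fun n : ℕ => (n : ℝ)⁻¹ *
    ∫ g, Real.log ‖LinearMap.toContinuousLinearMap ((glCLM g).toLinearMap.domRestrict V)‖
      ∂(mconvN μ n))

/-- Quasi-irreducibility of a measure on `GL_d(ℝ)`. -/
def QuasiIrreducible (μ : Measure (GLd d)) : Prop :=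
  ¬ ∃ V : Submodule ℝ (Ed d), V ≠ ⊥ ∧ V ≠ ⊤ ∧
    (∀ᵐ g ∂μ, V.map (glCLM g).toLinearMap = V) ∧ L1rest μ V < L1 μ

/-- Irreducibility of a measure on `GL_d(ℝ)`. -/
def Irred (μ : Measure (GLd d)) : Prop :=
  ¬ ∃ V : Submodule ℝ (Ed d), V ≠ ⊥ ∧ V ≠ ⊤ ∧
    (∀ᵐ g ∂μ, V.map (glCLM g).toLinearMap = V)

/-- The Markov operator associated with a measure on `GL_d(ℝ)`. -/
def Qop (μ : Measure (GLd d)) (φ : Pd d → ℝ) : Pd d → ℝ :=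
  fun v => ∫ g, φ (pact g v) ∂μ

/-- The average `α`-Hölder constant of a measure on `GL_d(ℝ)`. -/
def kalpha (α : ℝ) (μ : Measure (GLd d)) : ℝ :=
  sSup { x | ∃ v₁ v₂ : Pd d, v₁ ≠ v₂ ∧
    x = ∫ g, (pdelta (pact g v₁) (pact g v₂) / pdelta v₁ v₂) ^ α ∂μ }

/-- The `α`-Hölder seminorm of an observable on `ℙ(ℝ^d)`. -/
def valpha (α : ℝ) (φ : Pd d → ℝ) : ℝ :=
  sSup { x | ∃ v₁ v₂ : Pd d, v₁ ≠ v₂ ∧ x = |φ v₁ - φ v₂| / pdelta v₁ v₂ ^ α }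

/-- `φ` is `α`-Hölder: `v_α(φ) < ∞`. -/
def IsHolder (α : ℝ) (φ : Pd d → ℝ) : Prop :=
  BddAbove { x | ∃ v₁ v₂ : Pd d, v₁ ≠ v₂ ∧ x = |φ v₁ - φ v₂| / pdelta v₁ v₂ ^ α }

/-- The total variation distance between two finite measures. -/
def tvDist (μ ν : Measure (GLd d)) [IsFiniteMeasure μ] [IsFiniteMeasure ν] : ℝ :=
  ((μ.toSignedMeasure - ν.toSignedMeasure).totalVariation Set.univ).toReal

/-- A measure is compactly supported. -/
def CompactlySupported (μ : Measure (GLd d)) : Prop :=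
  ∃ K : Set (GLd d), IsCompact K ∧ μ Kᶜ = 0

/-- `S` is the (topological) support of `μ`. -/
def IsSupport (μ : Measure (GLd d)) (S : Set (GLd d)) : Prop :=
  μ Sᶜ = 0 ∧ ∀ x ∈ S, ∀ U : Set (GLd d), IsOpen U → x ∈ U → 0 < μ U

/-- A measure `η` on `ℙ(ℝ^d)` is `μ`-stationary. -/
def Stationary (μ : Measure (GLd d)) (η : Measure (Pd d)) : Prop :=
  ∀ φ : Pd d → ℝ, Continuous φ → (∃ C, ∀ v, |φ v| ≤ C) →
    ∫ v, φ v ∂η = ∫ g, ∫ v, φ (pact g v) ∂η ∂μ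


open scoped ENNReal
set_option linter.unusedSectionVars false
namespace LyapAux

section conv
variable {G : Type*} [Monoid G] [MeasurableSpace G]

/-- Convolution powers of a measure on a measurable monoid. -/
def cp (ν : Measure G) : ℕ → Measure G
  | 0 => Measure.dirac 1
  | n + 1 => cp ν n ∗ₘ ν

variable [MeasurableMul₂ G] (ν : Measure G) [IsProbabilityMeasure ν]

instance cp_prob (n : ℕ) : IsProbabilityMeasure (cp ν n) := by
  induction n with
  | zero => unfold cp; infer_instance
  | succ n ih => unfold cp; infer_instance

lemma cp_one : cp ν 1 = ν := by
  unfold cp cp; exact Measure.dirac_one_mconv ν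

lemma cp_add (a b : ℕ) : cp ν (a + b) = cp ν a ∗ₘ cp ν b := by
  induction b with
  | zero => exact (Measure.mconv_dirac_one _).symm
  | succ b ih =>
    show cp ν (a + b) ∗ₘ ν = cp ν a ∗ₘ (cp ν b ∗ₘ ν)
    rw [ih, Measure.mconv_assoc]

lemma ae_mconv {μ ν : Measure G} [SFinite μ] [SFinite ν] {s t u : Set G} (hu : MeasurableSet u)
    (hs : ∀ᵐ x ∂μ, x ∈ s) (ht : ∀ᵐ x ∂ν, x ∈ t) (h : ∀ x ∈ s, ∀ y ∈ t, x * y ∈ u) :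
    ∀ᵐ x ∂(μ ∗ₘ ν), x ∈ u := by
  unfold Measure.mconv
  refine (ae_map_iff (p := fun x => x ∈ u) (by fun_prop) hu).2 ?_
  have h1 : ∀ᵐ p ∂(μ.prod ν), p.1 ∈ s := Measure.quasiMeasurePreserving_fst.ae hs
  have h2 : ∀ᵐ p ∂(μ.prod ν), p.2 ∈ t := Measure.quasiMeasurePreserving_snd.ae ht
  filter_upwards [h1, h2] with p hp1 hp2 using h _ hp1 _ hp2

/-- Push-forward of convolution powers under a map multiplicative on a sub-semigroup. -/
lemma cp_map {G' : Type*} [Monoid G'] [MeasurableSpace G'] [MeasurableMul₂ G'] (c : G → G')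
    (hc : Measurable c) (K : Set G) (hK : MeasurableSet K) (h1 : (1 : G) ∈ K)
    (hmul : ∀ x ∈ K, ∀ y ∈ K, x * y ∈ K) (c1 : c 1 = 1)
    (cmul : ∀ x ∈ K, ∀ y ∈ K, c (x * y) = c x * c y) (hν : ∀ᵐ x ∂ν, x ∈ K) (n : ℕ) :
    (∀ᵐ x ∂(cp ν n), x ∈ K) ∧ (cp ν n).map c = cp (ν.map c) n := by
  have := Measure.isProbabilityMeasure_map (μ := ν) hc.aemeasurable
  induction n with
  | zero =>
    refine ⟨?_, ?_⟩
    · unfold cp; exact (ae_dirac_iff (p := fun x => x ∈ K) hK).2 h1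
    · unfold cp; rw [Measure.map_dirac' hc, c1]
  | succ n ih =>
    refine ⟨ae_mconv hK ih.1 hν hmul, ?_⟩
    show (cp ν n ∗ₘ ν).map c = cp (ν.map c) n ∗ₘ ν.map c
    rw [← ih.2]
    unfold Measure.mconv
    rw [Measure.map_map hc (by fun_prop), Measure.map_prod_map _ _ hc hc,
      Measure.map_map (by fun_prop) (by fun_prop)]
    apply Measure.map_congr
    have h1 : ∀ᵐ p ∂((cp ν n).prod ν), p.1 ∈ K := Measure.quasiMeasurePreserving_fst.ae ih.1
    have h2 : ∀ᵐ p ∂((cp ν n).prod ν), p.2 ∈ K := Measure.quasiMeasurePreserving_snd.ae hν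
    filter_upwards [h1, h2] with p hp1 hp2
    simpa using cmul _ hp1 _ hp2

end conv

lemma exp_moment {Ω : Type*} [MeasurableSpace Ω] (P : Measure Ω) [IsProbabilityMeasure P]
    {Z : Ω → ℝ} (hZ : AEStronglyMeasurable Z P) {B α : ℝ} (hB : ∀ᵐ ω ∂P, |Z ω| ≤ B) (hα : 0 ≤ α)
    (hαB : α * B ≤ 1) :
    Integrable (fun ω => Real.exp (α * Z ω)) P ∧
    ∫ ω, Real.exp (α * Z ω) ∂P ≤ 1 + α * ∫ ω, Z ω ∂P + α ^ 2 * B ^ 2 := by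
  have hZi : Integrable Z P := Integrable.of_bound hZ B (by simpa using hB)
  have hpt : ∀ᵐ ω ∂P, Real.exp (α * Z ω) ≤ 1 + α * Z ω + α ^ 2 * B ^ 2 := by
    filter_upwards [hB] with ω h
    have h0 : |α * Z ω| ≤ 1 := by
      rw [abs_mul, abs_of_nonneg hα]
      exact (mul_le_mul_of_nonneg_left h hα).trans hαB
    have h1 := (abs_le.1 (Real.abs_exp_sub_one_sub_id_le h0)).2
    have h2 : (Z ω) ^ 2 ≤ B ^ 2 := sq_le_sq' (by linarith [(abs_le.1 h).1]) (abs_le.1 h).2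
    have h3 : (α * Z ω) ^ 2 ≤ α ^ 2 * B ^ 2 := by
      rw [mul_pow]; exact mul_le_mul_of_nonneg_left h2 (sq_nonneg _)
    linarith
  have hi : Integrable (fun ω => Real.exp (α * Z ω)) P := by
    refine Integrable.of_bound ((Real.continuous_exp.comp_aestronglyMeasurable
      (hZ.const_mul α))) (Real.exp 1) ?_
    filter_upwards [hB] with ω h
    rw [Real.norm_eq_abs, abs_of_pos (Real.exp_pos _), Real.exp_le_exp]
    exact (mul_le_mul_of_nonneg_left ((le_abs_self _).trans h) hα).trans hαB
  refine ⟨hi, ?_⟩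
  have h := integral_mono_ae hi (((integrable_const (1:ℝ)).add (hZi.const_mul α)).add
    (integrable_const (α ^ 2 * B ^ 2))) hpt
  refine h.trans (le_of_eq ?_)
  rw [integral_add' (((integrable_const (1:ℝ)).add (hZi.const_mul α)))
    (integrable_const (α ^ 2 * B ^ 2)), integral_add' (integrable_const (1:ℝ)) (hZi.const_mul α)]
  simp [integral_const_mul]

section bd
variable {V : Type*} [NormedAddCommGroup V] [InnerProductSpace ℝ V]

/-- Operators with two-sided bounds. -/
def Bd (m M : ℝ) : Set (V →L[ℝ] V) := {A | ∀ v, m * ‖v‖ ≤ ‖A v‖ ∧ ‖A v‖ ≤ M * ‖v‖}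

lemma Bd_closed (m M : ℝ) : IsClosed (Bd m M : Set (V →L[ℝ] V)) := by
  have : (Bd m M : Set (V →L[ℝ] V)) = ⋂ v, ({A | m * ‖v‖ ≤ ‖A v‖} ∩ {A | ‖A v‖ ≤ M * ‖v‖}) := by
    ext A; simp [Bd]
  rw [this]
  refine isClosed_iInter fun v => IsClosed.inter ?_ ?_
  · exact isClosed_le (by fun_prop) (by fun_prop)
  · exact isClosed_le (by fun_prop) (by fun_prop)

lemma Bd_mul {m M m' M' : ℝ} (hm : 0 ≤ m) (hM : 0 ≤ M) {A B : V →L[ℝ] V}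
    (hA : A ∈ Bd m M) (hB : B ∈ Bd m' M') : A * B ∈ (Bd (m * m') (M * M') : Set (V →L[ℝ] V)) := by
  intro v
  have h1 := hA (B v)
  have h2 := hB v
  refine ⟨?_, ?_⟩
  · calc m * m' * ‖v‖ = m * (m' * ‖v‖) := by ring
      _ ≤ m * ‖B v‖ := mul_le_mul_of_nonneg_left h2.1 hm
      _ ≤ _ := h1.1
  · calc ‖A (B v)‖ ≤ M * ‖B v‖ := h1.2
      _ ≤ M * (M' * ‖v‖) := mul_le_mul_of_nonneg_left h2.2 hM
      _ = _ := by ring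

lemma Bd_ne {m M : ℝ} (hm : 0 < m) {A : V →L[ℝ] V} (hA : A ∈ Bd m M) {v : V} (hv : v ≠ 0) :
    A v ≠ 0 := by
  have := (hA v).1
  have h2 : 0 < m * ‖v‖ := mul_pos hm (norm_pos_iff.2 hv)
  exact norm_pos_iff.1 (h2.trans_le this)

lemma Bd_log {m M : ℝ} (hm : 0 < m) {A : V →L[ℝ] V} (hA : A ∈ Bd m M) {v : V} (hv : v ≠ 0) :
    Real.log m + Real.log ‖v‖ ≤ Real.log ‖A v‖ ∧ Real.log ‖A v‖ ≤ Real.log M + Real.log ‖v‖ := by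
  have hv' := norm_pos_iff.2 hv
  have h := hA v
  have h0 : 0 < m * ‖v‖ := mul_pos hm hv'
  have hM : 0 < M := by
    by_contra hh
    have := mul_nonpos_of_nonpos_of_nonneg (not_lt.1 hh) hv'.le
    linarith [h.1, h.2]
  rw [← Real.log_mul hm.ne' hv'.ne', ← Real.log_mul hM.ne' hv'.ne']
  exact ⟨Real.log_le_log h0 h.1, Real.log_le_log (h0.trans_le h.1) h.2⟩

lemma Bd_norm {m M : ℝ} (hM : 0 ≤ M) {A : V →L[ℝ] V} (hA : A ∈ Bd m M) : ‖A‖ ≤ M :=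
  A.opNorm_le_bound hM fun v => (hA v).2

variable [FiniteDimensional ℝ V]

/-- Good measures: supported on operators with uniform two-sided bounds. -/
structure Good (ν : Measure (V →L[ℝ] V)) (m M : ℝ) : Prop where
  prob : IsProbabilityMeasure ν
  m0 : 0 < m
  m1 : m ≤ 1
  M1 : 1 ≤ M
  ae : ∀ᵐ A ∂ν, A ∈ Bd m M

variable {ν : Measure (V →L[ℝ] V)} {m M : ℝ}

lemma Good.M0 (h : Good ν m M) : 0 < M := by linarith [h.M1]

lemma Good.cp (h : Good ν m M) (n : ℕ) : Good (cp ν n) (m ^ n) (M ^ n) := by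
  have := h.prob
  refine ⟨inferInstance, pow_pos h.m0 n, pow_le_one₀ h.m0.le h.m1, one_le_pow₀ h.M1, ?_⟩
  induction n with
  | zero =>
    unfold LyapAux.cp; refine (ae_dirac_iff (p := fun A => A ∈ Bd (m ^ 0) (M ^ 0)) (Bd_closed _ _).measurableSet).2 ?_; intro v; simp
  | succ n ih =>
    exact ae_mconv (Bd_closed _ _).measurableSet ih h.ae fun x hx y hy =>
      Bd_mul (pow_nonneg h.m0.le n) (pow_nonneg h.M0.le n) hx hy

lemma Good.integrable (h : Good ν m M) {f : (V →L[ℝ] V) → ℝ} (hf : Measurable f) {C : ℝ}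
    (hb : ∀ A ∈ Bd m M, |f A| ≤ C) : Integrable f ν := by
  have := h.prob
  refine Integrable.of_bound hf.aestronglyMeasurable C ?_
  filter_upwards [h.ae] with A hA using hb A hA

lemma Good.integral_add (h : Good ν m M) {a b : ℕ} {f : (V →L[ℝ] V) → ℝ} (hf : Measurable f) {C : ℝ}
    (hb : ∀ A ∈ Bd (m ^ (a + b)) (M ^ (a + b)), |f A| ≤ C) :
    ∫ A, f A ∂(LyapAux.cp ν (a + b)) =
      ∫ B, ∫ A, f (A * B) ∂(LyapAux.cp ν a) ∂(LyapAux.cp ν b) := by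
  have := h.prob
  have hi := (h.cp (a + b)).integrable hf hb
  rw [cp_add] at hi ⊢
  rw [integral_mconv hi]
  have hi2 : Integrable (fun p : (V →L[ℝ] V) × (V →L[ℝ] V) => f (p.1 * p.2))
      ((LyapAux.cp ν a).prod (LyapAux.cp ν b)) := by
    unfold Measure.mconv at hi
    rw [integrable_map_measure hf.aestronglyMeasurable (by fun_prop)] at hi
    exact hi
  rw [integral_integral_swap (f := fun x y => f (x * y)) hi2]

end bd

section H
variable {V : Type*} [NormedAddCommGroup V] [InnerProductSpace ℝ V] [FiniteDimensional ℝ V]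
  [MeasurableSpace V] [BorelSpace V]
variable {ν : Measure (V →L[ℝ] V)} {m M : ℝ}

/-- Mean logarithmic growth of a vector. -/
def H (ν : Measure (V →L[ℝ] V)) (n : ℕ) (v : V) : ℝ := ∫ A, Real.log ‖A v‖ ∂(cp ν n)

lemma meas_log (v : V) : Measurable (fun A : V →L[ℝ] V => Real.log ‖A v‖) := by
  have : Continuous (fun A : V →L[ℝ] V => ‖A v‖) := by fun_prop
  exact Real.measurable_log.comp this.measurable

lemma log_bd (hm : 0 < m) {A : V →L[ℝ] V} (hA : A ∈ Bd m M) {v : V} (hv : v ≠ 0) :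
    |Real.log ‖A v‖| ≤ |Real.log m| + |Real.log M| + |Real.log ‖v‖| := by
  have h := Bd_log hm hA hv
  rw [abs_le]
  constructor
  · linarith [neg_abs_le (Real.log m), neg_abs_le (Real.log ‖v‖), abs_nonneg (Real.log M)]
  · linarith [le_abs_self (Real.log M), le_abs_self (Real.log ‖v‖), abs_nonneg (Real.log m)]

lemma Good.int_log (h : Good ν m M) {v : V} (hv : v ≠ 0) :
    Integrable (fun A => Real.log ‖A v‖) ν :=
  h.integrable (meas_log v) fun _ hA => log_bd h.m0 hA hv

lemma H_zero (v : V) : H ν 0 v = Real.log ‖v‖ := by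
  unfold H cp
  rw [integral_dirac]; simp

lemma H_add (h : Good ν m M) (a b : ℕ) {v : V} (hv : v ≠ 0) :
    H ν (a + b) v = ∫ B, H ν a (B v) ∂(cp ν b) := by
  unfold H
  rw [h.integral_add (meas_log v) fun _ hA => log_bd (h.cp (a + b)).m0 hA hv]
  rfl

lemma H_bd (h : Good ν m M) (n : ℕ) {v : V} (hv : v ≠ 0) :
    n * Real.log m + Real.log ‖v‖ ≤ H ν n v ∧ H ν n v ≤ n * Real.log M + Real.log ‖v‖ := by
  have := (h.cp n).prob
  have hi := (h.cp n).int_log hv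
  constructor
  · calc n * Real.log m + Real.log ‖v‖ = ∫ A, (n * Real.log m + Real.log ‖v‖) ∂(cp ν n) := by simp
      _ ≤ _ := integral_mono_ae (integrable_const _) hi (by
        filter_upwards [(h.cp n).ae] with A hA
        have := (Bd_log (h.cp n).m0 hA hv).1
        rwa [Real.log_pow] at this)
  · calc H ν n v ≤ ∫ A, (n * Real.log M + Real.log ‖v‖) ∂(cp ν n) :=
        integral_mono_ae hi (integrable_const _) (by
        filter_upwards [(h.cp n).ae] with A hA
        have := (Bd_log (h.cp n).m0 hA hv).2
        rwa [Real.log_pow] at this)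
      _ = _ := by simp

lemma H_smul (h : Good ν m M) (n : ℕ) {v : V} (hv : v ≠ 0) {c : ℝ} (hc : c ≠ 0) :
    H ν n (c • v) = Real.log |c| + H ν n v := by
  have := (h.cp n).prob
  unfold H
  have : ∀ᵐ A ∂(cp ν n), Real.log ‖A (c • v)‖ = Real.log |c| + Real.log ‖A v‖ := by
    filter_upwards [(h.cp n).ae] with A hA
    rw [map_smul, norm_smul, Real.norm_eq_abs, Real.log_mul (abs_ne_zero.2 hc)
      (norm_ne_zero_iff.2 (Bd_ne (h.cp n).m0 hA hv))]
  rw [integral_congr_ae this, integral_add (integrable_const _) ((h.cp n).int_log hv)]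
  simp

lemma H_normalize (h : Good ν m M) (n : ℕ) {v : V} (hv : v ≠ 0) :
    H ν n v = Real.log ‖v‖ + H ν n (‖v‖⁻¹ • v) := by
  have h0 := norm_ne_zero_iff.2 hv
  rw [H_smul h n hv (inv_ne_zero h0), abs_of_nonneg (by positivity), Real.log_inv]; ring

lemma unit_ne {v : V} (hv : ‖v‖ = 1) : v ≠ 0 := by
  rintro rfl; simp at hv

lemma norm_unit {v : V} (hv : v ≠ 0) : ‖(‖v‖⁻¹ • v : V)‖ = 1 := by
  rw [norm_smul, norm_inv, norm_norm, inv_mul_cancel₀ (norm_ne_zero_iff.2 hv)]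

lemma H_cont (h : Good ν m M) (n : ℕ) : ContinuousOn (H ν n) {v : V | v ≠ 0} := by
  have := (h.cp n).prob
  intro v hv
  have hv : v ≠ 0 := hv
  apply ContinuousAt.continuousWithinAt
  have hl : ContinuousAt (fun w : V => Real.log ‖w‖) v :=
    (Real.continuousAt_log (norm_ne_zero_iff.2 hv)).comp (by fun_prop)
  have h1 : ∀ᶠ w in nhds v, |Real.log ‖w‖| < |Real.log ‖v‖| + 1 :=
    (hl.abs).eventually (gt_mem_nhds (by linarith))
  have h2 : ∀ᶠ w in nhds v, w ≠ 0 := isOpen_ne.mem_nhds hv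
  refine continuousAt_of_dominated (μ := cp ν n) (F := fun w (A : V →L[ℝ] V) => Real.log ‖A w‖)
    (bound := fun _ => |Real.log (m ^ n)| + |Real.log (M ^ n)| + (|Real.log ‖v‖| + 1)) ?_ ?_ ?_ ?_
  · exact Eventually.of_forall fun w => (meas_log w).aestronglyMeasurable
  · filter_upwards [h1, h2] with w hw1 hw2
    filter_upwards [(h.cp n).ae] with A hA
    have := log_bd (h.cp n).m0 hA hw2
    rw [Real.norm_eq_abs]; linarith
  · exact integrable_const _
  · filter_upwards [(h.cp n).ae] with A hA
    have : A v ≠ 0 := Bd_ne (h.cp n).m0 hA hv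
    exact ContinuousAt.log (by fun_prop) (norm_ne_zero_iff.2 this)

/-- A vector whose mean growth never exceeds `k β`. -/
lemma exists_slow_vec (h : Good ν m M) [Nontrivial V] (β : ℝ)
    (hβ : ∀ n : ℕ, 1 ≤ n → ∃ v : V, ‖v‖ = 1 ∧ H ν n v ≤ n * β) :
    ∃ v : V, ‖v‖ = 1 ∧ ∀ k : ℕ, H ν k v ≤ k * β := by
  by_contra hcon
  push Not at hcon
  -- compactness
  let O : ℕ → Set V := fun N => {v | v ≠ 0} ∩ ⋃ k ∈ Finset.range (N + 1),
    ({v | v ≠ 0} ∩ (H ν k) ⁻¹' Set.Ioi (k * β + 1 / (N + 1 : ℝ)))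
  have hO : ∀ N, IsOpen (O N) := by
    intro N
    refine isOpen_ne.inter (isOpen_biUnion fun k _ => ?_)
    exact (H_cont h k).isOpen_inter_preimage isOpen_ne isOpen_Ioi
  have hmono : Monotone O := by
    intro a b hab v hv
    refine ⟨hv.1, ?_⟩
    obtain ⟨k, hk, hk2⟩ := Set.mem_iUnion₂.1 hv.2
    refine Set.mem_iUnion₂.2 ⟨k, ?_, hk2.1, ?_⟩
    · simp only [Finset.mem_range] at hk ⊢; omega
    · have h1 : (1:ℝ) / (b + 1 : ℝ) ≤ 1 / (a + 1 : ℝ) := by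
        apply one_div_le_one_div_of_le (by positivity)
        have : (a:ℝ) ≤ b := by exact_mod_cast hab
        linarith
      have h2 := hk2.2
      simp only [Set.mem_preimage, Set.mem_Ioi] at h2 ⊢
      linarith
  have hcov : Metric.sphere (0 : V) 1 ⊆ ⋃ N, O N := by
    intro v hv
    have hv1 : ‖v‖ = 1 := by simpa using hv
    obtain ⟨k, hk⟩ := hcon v hv1
    obtain ⟨j, hj⟩ := exists_nat_one_div_lt (sub_pos.2 hk)
    refine Set.mem_iUnion.2 ⟨max j k, unit_ne hv1, Set.mem_iUnion₂.2 ⟨k, ?_, unit_ne hv1, ?_⟩⟩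
    · simp only [Finset.mem_range]; omega
    · simp only [Set.mem_preimage, Set.mem_Ioi]
      have h1 : (1:ℝ) / ((max j k : ℕ) + 1 : ℝ) ≤ 1 / (j + 1 : ℝ) := by
        apply one_div_le_one_div_of_le (by positivity)
        have : (j:ℝ) ≤ (max j k : ℕ) := by exact_mod_cast le_max_left j k
        linarith
      linarith
  obtain ⟨N, hN⟩ := (isCompact_sphere (0 : V) 1).elim_directed_cover O hO hcov
    hmono.directed_le
  set η : ℝ := 1 / (N + 1 : ℝ) with hη
  have hη0 : 0 < η := by positivity
  have hstep : ∀ v : V, ‖v‖ = 1 → ∃ k : ℕ, 1 ≤ k ∧ k ≤ N ∧ k * β + η < H ν k v := by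
    intro v hv
    have := hN (show v ∈ Metric.sphere (0:V) 1 by simpa using hv)
    obtain ⟨k, hk, hk2⟩ := Set.mem_iUnion₂.1 this.2
    have h2 := hk2.2
    simp only [Set.mem_preimage, Set.mem_Ioi] at h2
    refine ⟨k, ?_, by simp only [Finset.mem_range] at hk; omega, h2⟩
    rcases Nat.eq_zero_or_pos k with rfl | hk'
    · rw [H_zero, hv] at h2; simp at h2; linarith
    · exact hk'
  obtain ⟨v0, hv0⟩ := exists_norm_eq (E := V) (zero_le_one)
  have hN1 : 1 ≤ N := by obtain ⟨k, h1, h2, _⟩ := hstep v0 hv0; omega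
  have hN0 : (0:ℝ) < N := by exact_mod_cast hN1
  set D : ℝ := N * (|Real.log m| + |β|) + η with hD
  have hmain : ∀ n : ℕ, ∀ v : V, ‖v‖ = 1 → n * β + η * n / N - D ≤ H ν n v := by
    intro n
    induction n using Nat.strong_induction_on with
    | _ n ih =>
    intro v hv
    rcases lt_or_ge n N with hn | hn
    · have hb := (H_bd h n (unit_ne hv)).1
      rw [hv, Real.log_one, add_zero] at hb
      have hn' : (n:ℝ) ≤ N := by exact_mod_cast hn.le
      have h1 : η * n / N ≤ η := by
        rw [div_le_iff₀ hN0]; exact mul_le_mul_of_nonneg_left hn' hη0.le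
      have h2 : n * β ≤ N * |β| := by
        calc n * β ≤ n * |β| := mul_le_mul_of_nonneg_left (le_abs_self _) (by positivity)
          _ ≤ _ := mul_le_mul_of_nonneg_right hn' (abs_nonneg _)
      have h3 : -(N * |Real.log m|) ≤ n * Real.log m := by
        have : n * |Real.log m| ≤ N * |Real.log m| :=
          mul_le_mul_of_nonneg_right hn' (abs_nonneg _)
        have h4 : n * (-|Real.log m|) ≤ n * Real.log m :=
          mul_le_mul_of_nonneg_left (neg_abs_le _) (by positivity)
        linarith
      have h5 : D = N * |Real.log m| + N * |β| + η := by rw [hD]; ring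
      linarith
    · obtain ⟨k, hk1, hk2, hk3⟩ := hstep v hv
      have hsplit : n = (n - k) + k := by omega
      have hkc : ((n - k : ℕ) : ℝ) = n - k := by rw [Nat.cast_sub (by omega)]
      have := (h.cp k).prob
      rw [hsplit, H_add h _ _ (unit_ne hv)]
      have hlow : ∀ᵐ B ∂(cp ν k), Real.log ‖B v‖ +
          (((n - k : ℕ) : ℝ) * β + η * ((n - k : ℕ) : ℝ) / N - D) ≤ H ν (n - k) (B v) := by
        filter_upwards [(h.cp k).ae] with B hB
        have hB0 := Bd_ne (h.cp k).m0 hB (unit_ne hv)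
        rw [H_normalize h _ hB0]
        have := ih (n - k) (by omega) _ (norm_unit hB0)
        linarith
      have hiH : Integrable (fun B => H ν (n - k) (B v)) (cp ν k) := by
        have hmeas : AEStronglyMeasurable (fun B => H ν (n - k) (B v)) (cp ν k) := by
          apply Measurable.aestronglyMeasurable
          have hm1 : Measurable (H ν (n - k)) :=
            measurable_of_continuousOn_compl_singleton 0 (H_cont h (n - k))
          exact hm1.comp (show Continuous (fun B : V →L[ℝ] V => B v) by fun_prop).measurable
        refine Integrable.of_bound hmeas (|((n - k : ℕ) : ℝ) * Real.log m| +
          |((n - k : ℕ) : ℝ) * Real.log M| + (|Real.log (m ^ k)| + |Real.log (M ^ k)| +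
            |Real.log ‖v‖|)) ?_
        filter_upwards [(h.cp k).ae] with B hB
        have hB0 := Bd_ne (h.cp k).m0 hB (unit_ne hv)
        have h1 := H_bd h (n - k) hB0
        have h2 := abs_le.1 (log_bd (h.cp k).m0 hB (unit_ne hv))
        rw [Real.norm_eq_abs, abs_le]
        constructor
        · linarith [neg_abs_le (((n - k : ℕ) : ℝ) * Real.log m),
            abs_nonneg (((n - k : ℕ) : ℝ) * Real.log M)]
        · linarith [le_abs_self (((n - k : ℕ) : ℝ) * Real.log M),
            abs_nonneg (((n - k : ℕ) : ℝ) * Real.log m)]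
      have hii := integral_mono_ae (((h.cp k).int_log (unit_ne hv)).add (integrable_const _))
        hiH hlow
      rw [integral_add' ((h.cp k).int_log (unit_ne hv)) (integrable_const _)] at hii
      simp only [integral_const, probReal_univ, one_smul] at hii
      have hHk : H ν k v = ∫ A, Real.log ‖A v‖ ∂(cp ν k) := rfl
      rw [← hHk] at hii
      refine le_trans ?_ hii
      have hk2' : (k:ℝ) ≤ N := by exact_mod_cast hk2
      have e1 : η * ((n:ℝ) - k) / N = η * n / N - η * k / N := by ring
      have e2 : η * k / N ≤ η := by
        rw [div_le_iff₀ hN0]; exact mul_le_mul_of_nonneg_left hk2' hη0.le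
      push_cast
      rw [hkc, e1]
      have e3 : (n:ℝ) - k + k = n := by ring
      rw [e3]
      linarith
  obtain ⟨n, hn⟩ := exists_nat_gt (D / (η / N))
  obtain ⟨v, hv, hv2⟩ := hβ (n + 1) (by omega)
  have := hmain (n + 1) v hv
  rw [div_lt_iff₀ (by positivity)] at hn
  have e : η * ((n + 1 : ℕ) : ℝ) / N = n * (η / N) + η / N := by push_cast; ring
  have : 0 < η / N := by positivity
  linarith

end H

section neg
variable {V : Type*} [NormedAddCommGroup V] [InnerProductSpace ℝ V] [FiniteDimensional ℝ V]
  [MeasurableSpace V] [BorelSpace V]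
variable {ν : Measure (V →L[ℝ] V)} {m M : ℝ}

lemma exp_log_bd (hm : 0 < m) {A : V →L[ℝ] V} (hA : A ∈ Bd m M) {v : V} (hv : v ≠ 0) (α : ℝ) :
    |Real.exp (α * Real.log ‖A v‖)| ≤
      Real.exp (|α| * (|Real.log m| + |Real.log M| + |Real.log ‖v‖|)) := by
  rw [abs_of_pos (Real.exp_pos _), Real.exp_le_exp]
  calc α * Real.log ‖A v‖ ≤ |α * Real.log ‖A v‖| := le_abs_self _
    _ = |α| * |Real.log ‖A v‖| := abs_mul _ _
    _ ≤ _ := mul_le_mul_of_nonneg_left (log_bd hm hA hv) (abs_nonneg _)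

lemma meas_exp_log (v : V) (α : ℝ) :
    Measurable (fun A : V →L[ℝ] V => Real.exp (α * Real.log ‖A v‖)) :=
  Real.measurable_exp.comp ((meas_log v).const_mul α)

lemma Good.int_exp_log (h : Good ν m M) {v : V} (hv : v ≠ 0) (α : ℝ) :
    Integrable (fun A => Real.exp (α * Real.log ‖A v‖)) ν :=
  h.integrable (meas_exp_log v α) fun _ hA => exp_log_bd h.m0 hA hv α

/-- Uniform negative moment decay. -/
lemma neg_moment (h : Good ν m M) {n : ℕ} (hn : 1 ≤ n) {c c0 : ℝ} (hc : c < c0)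
    (hlow : ∀ v : V, ‖v‖ = 1 → n * c0 ≤ H ν n v) :
    ∃ α C : ℝ, 0 < α ∧ 0 < C ∧ ∀ k : ℕ, ∀ v : V, v ≠ 0 →
      ∫ A, Real.exp (-α * Real.log ‖A v‖) ∂(cp ν k) ≤
        C * Real.exp (-α * (c * k)) * Real.exp (-α * Real.log ‖v‖) := by
  have hn0 : (0:ℝ) < n := by exact_mod_cast hn
  set B : ℝ := |Real.log (m ^ n)| + |Real.log (M ^ n)| + 1 with hB
  have hB0 : 0 < B := by positivity
  set α : ℝ := min (1 / B) (n * (c0 - c) / B ^ 2) with hα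
  have hα0 : 0 < α := lt_min (by positivity) (by
    have : 0 < c0 - c := by linarith
    positivity)
  have hαB : α * B ≤ 1 := by
    calc α * B ≤ 1 / B * B := mul_le_mul_of_nonneg_right (min_le_left _ _) hB0.le
      _ = 1 := by field_simp
  have hαB2 : α * B ^ 2 ≤ n * (c0 - c) := by
    calc α * B ^ 2 ≤ n * (c0 - c) / B ^ 2 * B ^ 2 :=
          mul_le_mul_of_nonneg_right (min_le_right _ _) (by positivity)
      _ = _ := by field_simp
  have := (h.cp n).prob
  -- one block
  have hblock : ∀ v : V, v ≠ 0 → ∫ A, Real.exp (-α * Real.log ‖A v‖) ∂(cp ν n) ≤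
      Real.exp (-α * (c * n)) * Real.exp (-α * Real.log ‖v‖) := by
    intro v hv
    have hZ : ∀ᵐ A ∂(cp ν n), |Real.log ‖v‖ - Real.log ‖A v‖| ≤ B := by
      filter_upwards [(h.cp n).ae] with A hA
      have h2 := Bd_log (h.cp n).m0 hA hv
      rw [abs_le]
      constructor
      · linarith [le_abs_self (Real.log (M ^ n)), abs_nonneg (Real.log (m ^ n))]
      · linarith [neg_abs_le (Real.log (m ^ n)), abs_nonneg (Real.log (M ^ n))]
    have hmo := (exp_moment (cp ν n) (Z := fun A => Real.log ‖v‖ - Real.log ‖A v‖)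
      ((meas_log v).const_sub _).aestronglyMeasurable hZ hα0.le hαB).2
    have hintg : ∫ A, (Real.log ‖v‖ - Real.log ‖A v‖) ∂(cp ν n) ≤ - (n * c0) := by
      rw [integral_sub (integrable_const _) ((h.cp n).int_log hv)]
      have h1 := hlow _ (norm_unit hv)
      have h2 := H_normalize h n hv
      have : H ν n v = ∫ A, Real.log ‖A v‖ ∂(cp ν n) := rfl
      rw [← this]
      simp only [integral_const, probReal_univ, one_smul]
      linarith
    have hle : ∫ A, Real.exp (α * (Real.log ‖v‖ - Real.log ‖A v‖)) ∂(cp ν n) ≤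
        Real.exp (-α * (c * n)) := by
      refine hmo.trans ?_
      have h1 : α * ∫ A, (Real.log ‖v‖ - Real.log ‖A v‖) ∂(cp ν n) ≤ α * (-(n * c0)) :=
        mul_le_mul_of_nonneg_left hintg hα0.le
      have h2 : α * (α * B ^ 2) ≤ α * (n * (c0 - c)) := mul_le_mul_of_nonneg_left hαB2 hα0.le
      have h3 := Real.add_one_le_exp (-α * (c * n))
      nlinarith
    have heq : ∀ A : V →L[ℝ] V, Real.exp (-α * Real.log ‖A v‖) =
        Real.exp (α * (Real.log ‖v‖ - Real.log ‖A v‖)) * Real.exp (-α * Real.log ‖v‖) := by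
      intro A; rw [← Real.exp_add]; congr 1; ring
    simp_rw [heq]
    rw [integral_mul_const]
    exact mul_le_mul_of_nonneg_right hle (Real.exp_pos _).le
  set C : ℝ := Real.exp (α * (n * (|c| + |Real.log m|))) with hC
  refine ⟨α, C, hα0, Real.exp_pos _, ?_⟩
  intro k
  induction k using Nat.strong_induction_on with
  | _ k ih =>
  intro v hv
  rcases lt_or_ge k n with hk | hk
  · have := (h.cp k).prob
    calc ∫ A, Real.exp (-α * Real.log ‖A v‖) ∂(cp ν k)
        ≤ ∫ A, C * Real.exp (-α * (c * k)) * Real.exp (-α * Real.log ‖v‖) ∂(cp ν k) := by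
          refine integral_mono_ae ((h.cp k).int_exp_log hv _) (integrable_const _) ?_
          filter_upwards [(h.cp k).ae] with A hA
          have h2 := (Bd_log (h.cp k).m0 hA hv).1
          rw [Real.log_pow] at h2
          show Real.exp (-α * Real.log ‖A v‖) ≤ _
          rw [hC, ← Real.exp_add, ← Real.exp_add, Real.exp_le_exp]
          have hk' : (k:ℝ) ≤ n := by exact_mod_cast hk.le
          have h3 : -(n * |Real.log m|) ≤ k * Real.log m := by
            have h5 : k * |Real.log m| ≤ n * |Real.log m| :=
              mul_le_mul_of_nonneg_right hk' (abs_nonneg _)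
            have h4 : k * (-|Real.log m|) ≤ k * Real.log m :=
              mul_le_mul_of_nonneg_left (neg_abs_le _) (by positivity)
            linarith
          have h4 : c * k ≤ n * |c| := by
            calc c * k ≤ |c| * k := mul_le_mul_of_nonneg_right (le_abs_self _) (by positivity)
              _ ≤ |c| * n := mul_le_mul_of_nonneg_left hk' (abs_nonneg _)
              _ = _ := by ring
          have h5 : -(Real.log ‖A v‖) ≤ n * (|c| + |Real.log m|) - c * k - Real.log ‖v‖ := by
            linarith
          have h6 := mul_le_mul_of_nonneg_left h5 hα0.le
          linarith
      _ = _ := by simp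
  · have hsplit : k = (k - n) + n := by omega
    have hkc : ((k - n : ℕ) : ℝ) = k - n := by rw [Nat.cast_sub hk]
    have hfub := h.integral_add (a := k - n) (b := n) (meas_exp_log v (-α))
      (fun _ hA => exp_log_bd (h.cp (k - n + n)).m0 hA hv (-α))
    rw [← hsplit] at hfub
    rw [hfub]
    calc ∫ B, ∫ A, Real.exp (-α * Real.log ‖(A * B) v‖) ∂(cp ν (k - n)) ∂(cp ν n)
        ≤ ∫ B, C * Real.exp (-α * (c * ((k - n : ℕ) : ℝ))) * Real.exp (-α * Real.log ‖B v‖)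
          ∂(cp ν n) := by
          refine integral_mono_of_nonneg (Eventually.of_forall fun B =>
            integral_nonneg fun A => (Real.exp_pos _).le)
            (((h.cp n).int_exp_log hv _).const_mul _) ?_
          filter_upwards [(h.cp n).ae] with B hB
          exact ih (k - n) (by omega) (B v) (Bd_ne (h.cp n).m0 hB hv)
      _ = C * Real.exp (-α * (c * ((k - n : ℕ) : ℝ))) *
          ∫ B, Real.exp (-α * Real.log ‖B v‖) ∂(cp ν n) := integral_const_mul _ _
      _ ≤ C * Real.exp (-α * (c * ((k - n : ℕ) : ℝ))) *
          (Real.exp (-α * (c * n)) * Real.exp (-α * Real.log ‖v‖)) :=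
          mul_le_mul_of_nonneg_left (hblock v hv) (by positivity)
      _ = _ := by
          have : Real.exp (-α * (c * ((k - n : ℕ) : ℝ))) * Real.exp (-α * (c * n)) =
              Real.exp (-α * (c * k)) := by
            rw [← Real.exp_add, hkc]; congr 1; ring
          rw [← this]; ring

lemma meas_plog (a : ℝ) (v : V) :
    Measurable (fun A : V →L[ℝ] V => Real.posLog (a * ‖A v‖)) := by
  have : Continuous (fun A : V →L[ℝ] V => Real.posLog (a * ‖A v‖)) :=
    Real.continuous_posLog.comp (by fun_prop)
  exact this.measurable

lemma plog_bd (hM : 0 ≤ M) {A : V →L[ℝ] V} (hA : A ∈ Bd m M) {a : ℝ} (ha : 0 ≤ a) (v : V) :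
    |Real.posLog (a * ‖A v‖)| ≤ Real.posLog (a * (M * ‖v‖)) := by
  rw [abs_of_nonneg Real.posLog_nonneg]
  exact Real.posLog_le_posLog (by positivity) (mul_le_mul_of_nonneg_left (hA v).2 ha)

/-- Positive part estimate. -/
lemma pos_part (h : Good ν m M) {β : ℝ}
    (hlow : ∀ ε > 0, ∃ n : ℕ, 1 ≤ n ∧ ∀ v : V, ‖v‖ = 1 → n * (β - ε) ≤ H ν n v)
    {v : V} (hv : ‖v‖ = 1) (hup : ∀ k : ℕ, H ν k v ≤ k * β) {ε : ℝ} (hε : 0 < ε) :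
    ∃ C : ℝ, ∀ k : ℕ,
      ∫ A, Real.posLog (Real.exp (-(k * β)) * ‖A v‖) ∂(cp ν k) ≤ ε * k + C := by
  obtain ⟨n, hn, hn2⟩ := hlow (ε / 2) (by linarith)
  obtain ⟨α, C, hα, hC, hneg⟩ := neg_moment h hn (c := β - ε) (by linarith) hn2
  refine ⟨C / α, fun k => ?_⟩
  have hv0 := unit_ne hv
  have := (h.cp k).prob
  have hil := (h.cp k).int_log hv0
  have hie := (h.cp k).int_exp_log hv0 (-α)
  have hpt : ∀ᵐ A ∂(cp ν k), Real.posLog (Real.exp (-(k * β)) * ‖A v‖) ≤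
      Real.log ‖A v‖ + ((-(k * β) + ε * k) + (Real.exp (α * ((β - ε) * k)) / α) *
        Real.exp (-α * Real.log ‖A v‖)) := by
    filter_upwards [(h.cp k).ae] with A hA
    have hA0 := norm_pos_iff.2 (Bd_ne (h.cp k).m0 hA hv0)
    rw [Real.posLog_apply, Real.log_mul (Real.exp_pos _).ne' hA0.ne', Real.log_exp]
    set X := Real.log ‖A v‖
    have he : Real.exp (α * ((β - ε) * k)) / α * Real.exp (-α * X) =
        Real.exp (α * ((β - ε) * k - X)) / α := by
      rw [div_mul_eq_mul_div, ← Real.exp_add]; congr 2; ring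
    rw [he]
    have h1 : (β - ε) * k - X ≤ Real.exp (α * ((β - ε) * k - X)) / α := by
      rw [le_div_iff₀ hα]
      linarith [Real.add_one_le_exp (α * ((β - ε) * k - X))]
    have h2 : 0 < Real.exp (α * ((β - ε) * k - X)) / α := by positivity
    have h3 : 0 ≤ ε * k := by positivity
    refine max_le ?_ ?_
    · linarith
    · linarith
  have hi1 : Integrable (fun A => Real.posLog (Real.exp (-(k * β)) * ‖A v‖)) (cp ν k) :=
    (h.cp k).integrable (meas_plog _ v) fun _ hA =>
      plog_bd (h.cp k).M0.le hA (Real.exp_pos _).le v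
  have hi2 := (hie.const_mul (Real.exp (α * ((β - ε) * k)) / α))
  have hi3 := (integrable_const (μ := cp ν k) (-(k * β) + ε * k)).add hi2
  have := integral_mono_ae hi1 (hil.add hi3) hpt
  rw [integral_add' hil hi3, integral_add' (integrable_const _) hi2, integral_const_mul] at this
  simp only [integral_const, probReal_univ, one_smul] at this
  have hH : H ν k v = ∫ A, Real.log ‖A v‖ ∂(cp ν k) := rfl
  rw [← hH] at this
  have h4 := hneg k v hv0
  rw [hv, Real.log_one, mul_zero, Real.exp_zero, mul_one] at h4
  have h5 := mul_le_mul_of_nonneg_left h4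
    (show 0 ≤ Real.exp (α * ((β - ε) * k)) / α by positivity)
  have h6 : Real.exp (α * ((β - ε) * k)) / α * (C * Real.exp (-α * ((β - ε) * k))) = C / α := by
    have : Real.exp (α * ((β - ε) * k)) * Real.exp (-α * ((β - ε) * k)) = 1 := by
      rw [← Real.exp_add]; simp
    calc Real.exp (α * ((β - ε) * k)) / α * (C * Real.exp (-α * ((β - ε) * k)))
        = (Real.exp (α * ((β - ε) * k)) * Real.exp (-α * ((β - ε) * k))) * (C / α) := by ring
      _ = C / α := by rw [this, one_mul]
  linarith [hup k]

end neg

section sub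
variable {V : Type*} [NormedAddCommGroup V] [InnerProductSpace ℝ V] [FiniteDimensional ℝ V]
  [MeasurableSpace V] [BorelSpace V]
variable {ν : Measure (V →L[ℝ] V)} {m M : ℝ}

/-- A computable bound for the norm of the restriction to a subspace. -/
def bn (W : Submodule ℝ V) (A : V →L[ℝ] V) : ℝ :=
  ∑ i, ‖A (stdOrthonormalBasis ℝ W i : V)‖

lemma bn_cont (W : Submodule ℝ V) : Continuous (bn W) := by
  unfold bn; fun_prop

lemma bn_le (W : Submodule ℝ V) (A : V →L[ℝ] V) {v : V} (hv : v ∈ W) : ‖A v‖ ≤ bn W A * ‖v‖ := by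
  have hrep := (stdOrthonormalBasis ℝ W).sum_repr ⟨v, hv⟩
  have h2 : v = ∑ i, ((stdOrthonormalBasis ℝ W).repr ⟨v, hv⟩ i) •
      (stdOrthonormalBasis ℝ W i : V) := by
    have := congrArg (Subtype.val) hrep
    simp only [Submodule.coe_sum, Submodule.coe_smul] at this
    exact this.symm
  have hc : ∀ i, |(stdOrthonormalBasis ℝ W).repr ⟨v, hv⟩ i| ≤ ‖v‖ := by
    intro i
    rw [OrthonormalBasis.repr_apply_apply]
    refine (abs_real_inner_le_norm _ _).trans ?_
    rw [(stdOrthonormalBasis ℝ W).norm_eq_one, one_mul]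
    rfl
  calc ‖A v‖ = ‖∑ i, ((stdOrthonormalBasis ℝ W).repr ⟨v, hv⟩ i) •
        A (stdOrthonormalBasis ℝ W i : V)‖ := by
        conv_lhs => rw [h2]
        rw [map_sum]; simp only [map_smul]
    _ ≤ ∑ i, ‖((stdOrthonormalBasis ℝ W).repr ⟨v, hv⟩ i) • A (stdOrthonormalBasis ℝ W i : V)‖ :=
        norm_sum_le _ _
    _ ≤ ∑ i, ‖A (stdOrthonormalBasis ℝ W i : V)‖ * ‖v‖ := by
        refine Finset.sum_le_sum fun i _ => ?_
        rw [norm_smul, Real.norm_eq_abs, mul_comm]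
        exact mul_le_mul_of_nonneg_left (hc i) (norm_nonneg _)
    _ = _ := by rw [bn, Finset.sum_mul]

lemma basis_norm (W : Submodule ℝ V) (i) : ‖(stdOrthonormalBasis ℝ W i : V)‖ = 1 := by
  have := (stdOrthonormalBasis ℝ W).norm_eq_one i
  exact this

lemma bn_bd {W : Submodule ℝ V} (hW : W ≠ ⊥) {A : V →L[ℝ] V} (hA : A ∈ Bd m M) :
    m ≤ bn W A ∧ bn W A ≤ Module.finrank ℝ W * M := by
  constructor
  · obtain ⟨v, hv, hv0⟩ := W.ne_bot_iff.1 hW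
    have h1 := (hA v).1.trans (bn_le W A hv)
    exact le_of_mul_le_mul_right h1 (norm_pos_iff.2 hv0)
  · unfold bn
    calc _ ≤ ∑ i : Fin (Module.finrank ℝ W), M := Finset.sum_le_sum fun i _ => by
          have := (hA (stdOrthonormalBasis ℝ W i : V)).2
          rwa [basis_norm, mul_one] at this
      _ = _ := by simp

/-- Weighted positive growth (truncated at level `β`). -/
def Fl (ν : Measure (V →L[ℝ] V)) (β : ℝ) (k : ℕ) (w : V) : ℝ≥0∞ :=
  ∫⁻ A, ENNReal.ofReal (Real.posLog (Real.exp (-(k * β)) * ‖A w‖)) ∂(cp ν k)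

lemma meas_plog_ofReal (a : ℝ) : Measurable (fun p : V × (V →L[ℝ] V) =>
    ENNReal.ofReal (Real.posLog (a * ‖p.2 p.1‖))) := by
  have : Continuous (fun p : V × (V →L[ℝ] V) => Real.posLog (a * ‖p.2 p.1‖)) :=
    Real.continuous_posLog.comp (by fun_prop)
  exact ENNReal.measurable_ofReal.comp this.measurable

lemma meas_plog_ofReal' (a : ℝ) (w : V) : Measurable (fun A : V →L[ℝ] V =>
    ENNReal.ofReal (Real.posLog (a * ‖A w‖))) :=
  ENNReal.measurable_ofReal.comp (meas_plog a w)

lemma Fl_meas (h : Good ν m M) (β : ℝ) (k : ℕ) : Measurable (Fl ν β k) := by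
  have := (h.cp k).prob
  exact Measurable.lintegral_prod_right' (meas_plog_ofReal _)

lemma Fl_add (h : Good ν m M) (β : ℝ) (k : ℕ) (w w' : V) :
    Fl ν β k (w + w') ≤ ENNReal.ofReal (Real.log 2) + (Fl ν β k w + Fl ν β k w') := by
  have := (h.cp k).prob
  unfold Fl
  rw [← lintegral_add_left (meas_plog_ofReal' _ w)]
  have hc : ENNReal.ofReal (Real.log 2) =
      ∫⁻ A, ENNReal.ofReal (Real.log 2) ∂(cp ν k) := by simp
  rw [hc, ← lintegral_add_left measurable_const]
  refine lintegral_mono fun A => ?_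
  simp only
  rw [← ENNReal.ofReal_add Real.posLog_nonneg Real.posLog_nonneg,
    ← ENNReal.ofReal_add (Real.log_nonneg (by norm_num))
      (add_nonneg Real.posLog_nonneg Real.posLog_nonneg)]
  apply ENNReal.ofReal_le_ofReal
  have h1 : Real.exp (-(k * β)) * ‖A (w + w')‖ ≤
      Real.exp (-(k * β)) * ‖A w‖ + Real.exp (-(k * β)) * ‖A w'‖ := by
    rw [map_add, ← mul_add]
    exact mul_le_mul_of_nonneg_left (norm_add_le _ _) (Real.exp_pos _).le
  have := (Real.posLog_le_posLog (by positivity) h1).trans Real.posLog_add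
  linarith

lemma Fl_smul (h : Good ν m M) (β : ℝ) (k : ℕ) (c : ℝ) (w : V) :
    Fl ν β k (c • w) ≤ ENNReal.ofReal (Real.posLog c) + Fl ν β k w := by
  have := (h.cp k).prob
  unfold Fl
  have hc : ENNReal.ofReal (Real.posLog c) =
      ∫⁻ A, ENNReal.ofReal (Real.posLog c) ∂(cp ν k) := by simp
  rw [hc, ← lintegral_add_left measurable_const]
  refine lintegral_mono fun A => ?_
  simp only
  rw [← ENNReal.ofReal_add Real.posLog_nonneg Real.posLog_nonneg]
  apply ENNReal.ofReal_le_ofReal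
  rw [map_smul, norm_smul, Real.norm_eq_abs]
  have : Real.exp (-(k * β)) * (|c| * ‖A w‖) = |c| * (Real.exp (-(k * β)) * ‖A w‖) := by ring
  rw [this]
  refine Real.posLog_mul.trans ?_
  rw [Real.posLog_abs]

lemma Fl_step (h : Good ν m M) (β : ℝ) (k : ℕ) (w : V) :
    ∫⁻ A, Fl ν β k (A w) ∂ν ≤ ENNReal.ofReal (Real.posLog M) + Fl ν β k w := by
  have := h.prob
  have := (h.cp k).prob
  have hmp : Measurable (fun p : (V →L[ℝ] V) × (V →L[ℝ] V) =>
      ENNReal.ofReal (Real.posLog (Real.exp (-(k * β)) * ‖p.2 (p.1 w)‖))) := by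
    have : Continuous (fun p : (V →L[ℝ] V) × (V →L[ℝ] V) =>
        Real.posLog (Real.exp (-(k * β)) * ‖p.2 (p.1 w)‖)) :=
      Real.continuous_posLog.comp (by fun_prop)
    exact ENNReal.measurable_ofReal.comp this.measurable
  have e1 : ∫⁻ A, Fl ν β k (A w) ∂ν =
      ∫⁻ C, ENNReal.ofReal (Real.posLog (Real.exp (-(k * β)) * ‖C w‖)) ∂(cp ν k ∗ₘ ν) := by
    rw [Measure.lintegral_mconv (meas_plog_ofReal' _ w)]
    exact lintegral_lintegral_swap hmp.aemeasurable
  have e2 : cp ν k ∗ₘ ν = ν ∗ₘ cp ν k := by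
    have h1 : cp ν k ∗ₘ ν = cp ν (k + 1) := rfl
    rw [h1, add_comm, cp_add, cp_one]
  rw [e1, e2, Measure.lintegral_mconv (meas_plog_ofReal' _ w)]
  have hb : ∀ᵐ A ∂ν, ∫⁻ B, ENNReal.ofReal (Real.posLog (Real.exp (-(k * β)) * ‖(A * B) w‖)) ∂(cp ν k)
      ≤ ENNReal.ofReal (Real.posLog M) + Fl ν β k w := by
    filter_upwards [h.ae] with A hA
    unfold Fl
    have hc : ENNReal.ofReal (Real.posLog M) =
        ∫⁻ A, ENNReal.ofReal (Real.posLog M) ∂(cp ν k) := by simp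
    rw [hc, ← lintegral_add_left measurable_const]
    refine lintegral_mono fun B => ?_
    simp only
    rw [← ENNReal.ofReal_add Real.posLog_nonneg Real.posLog_nonneg]
    apply ENNReal.ofReal_le_ofReal
    have h1 : Real.exp (-(k * β)) * ‖(A * B) w‖ ≤ M * (Real.exp (-(k * β)) * ‖B w‖) := by
      calc Real.exp (-(k * β)) * ‖A (B w)‖ ≤ Real.exp (-(k * β)) * (M * ‖B w‖) :=
            mul_le_mul_of_nonneg_left (hA (B w)).2 (Real.exp_pos _).le
        _ = _ := by ring
    exact (Real.posLog_le_posLog (by positivity) h1).trans Real.posLog_mul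
  calc _ ≤ ∫⁻ _, (ENNReal.ofReal (Real.posLog M) + Fl ν β k w) ∂ν := lintegral_mono_ae hb
    _ = _ := by simp

lemma slow_subspace (h : Good ν m M) {β : ℝ}
    (hlow : ∀ ε > 0, ∃ n : ℕ, 1 ≤ n ∧ ∀ v : V, ‖v‖ = 1 → n * (β - ε) ≤ H ν n v)
    {v : V} (hv : ‖v‖ = 1) (hup : ∀ k : ℕ, H ν k v ≤ k * β) :
    ∃ W : Submodule ℝ V, v ∈ W ∧ (∀ᵐ A ∂ν, ∀ w ∈ W, A w ∈ W) ∧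
      ∀ c > β, ∃ n : ℕ, 1 ≤ n ∧ ∫ A, Real.log (bn W A) ∂(cp ν n) < n * c := by
  have := h.prob
  -- the sparse sequence
  have hk : ∀ j : ℕ, ∃ k : ℕ, 2 ^ j ≤ k ∧
      ∫ A, Real.posLog (Real.exp (-(k * β)) * ‖A v‖) ∂(cp ν k) ≤ (1/2 : ℝ) ^ j * k := by
    intro j
    obtain ⟨C, hC⟩ := pos_part h hlow hv hup (ε := (1/2 : ℝ) ^ j / 2) (by positivity)
    obtain ⟨k, hk⟩ := exists_nat_gt (C / ((1/2 : ℝ) ^ j / 2))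
    refine ⟨max k (2 ^ j), le_max_right _ _, (hC _).trans ?_⟩
    have h1 : (k:ℝ) ≤ (max k (2 ^ j) : ℕ) := by exact_mod_cast le_max_left _ _
    have h2 := hk.trans_le h1
    rw [div_lt_iff₀ (by positivity)] at h2
    linarith
  choose k hk1 hk2 using hk
  have hk0 : ∀ j, 0 < k j := fun j => (by positivity : 0 < 2 ^ j).trans_le (hk1 j)
  set a : ℕ → ℝ≥0∞ := fun j => ENNReal.ofReal (1 / (k j : ℝ)) with ha
  have ha_sum : ∑' j, a j ≠ ⊤ := by
    have h1 : ∀ j, a j ≤ ENNReal.ofReal ((1/2 : ℝ) ^ j) := fun j => by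
      apply ENNReal.ofReal_le_ofReal
      rw [div_pow, one_pow]
      apply one_div_le_one_div_of_le (by positivity)
      exact_mod_cast hk1 j
    refine ne_top_of_le_ne_top ?_ (ENNReal.tsum_le_tsum h1)
    exact (summable_geometric_of_lt_one (by norm_num) (by norm_num)).tsum_ofReal_ne_top
  set G : V → ℝ≥0∞ := fun w => ∑' j, a j * Fl ν β (k j) w with hG
  have hGc : ∀ (K : ℝ≥0∞) (F : ℕ → ℝ≥0∞), ∑' j, a j * (K + F j) =
      (∑' j, a j) * K + ∑' j, a j * F j := by
    intro K F
    simp_rw [mul_add]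
    rw [ENNReal.tsum_add, ENNReal.tsum_mul_right]
  have hGv : G v ≠ ⊤ := by
    have h1 : ∀ j, a j * Fl ν β (k j) v ≤ ENNReal.ofReal ((1/2 : ℝ) ^ j) := fun j => by
      have hi1 : Integrable (fun A => Real.posLog (Real.exp (-(k j * β)) * ‖A v‖)) (cp ν (k j)) :=
        (h.cp (k j)).integrable (meas_plog _ v) fun _ hA =>
          plog_bd (h.cp (k j)).M0.le hA (Real.exp_pos _).le v
      have : Fl ν β (k j) v ≤ ENNReal.ofReal ((1/2 : ℝ) ^ j * k j) := by
        unfold Fl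
        rw [← ofReal_integral_eq_lintegral_ofReal hi1
          (Eventually.of_forall fun _ => Real.posLog_nonneg)]
        exact ENNReal.ofReal_le_ofReal (hk2 j)
      refine (mul_le_mul_right this _).trans (le_of_eq ?_)
      rw [ha, ← ENNReal.ofReal_mul (by positivity)]
      congr 1
      have : (k j : ℝ) ≠ 0 := by exact_mod_cast (hk0 j).ne'
      field_simp
    refine ne_top_of_le_ne_top ?_ (ENNReal.tsum_le_tsum h1)
    exact (summable_geometric_of_lt_one (by norm_num) (by norm_num)).tsum_ofReal_ne_top
  let W : Submodule ℝ V :=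
    { carrier := {w | G w ≠ ⊤}
      zero_mem' := by
        have : G 0 = 0 := by simp [hG, Fl]
        show G 0 ≠ ⊤
        rw [this]; simp
      add_mem' := by
        intro x y hx hy
        have h1 : G (x + y) ≤ (∑' j, a j) * ENNReal.ofReal (Real.log 2) + (G x + G y) := by
          calc G (x + y) ≤ ∑' j, a j * (ENNReal.ofReal (Real.log 2) +
                (Fl ν β (k j) x + Fl ν β (k j) y)) :=
                ENNReal.tsum_le_tsum fun j => mul_le_mul_right (Fl_add h β (k j) x y) _
            _ = _ := by
                rw [hGc]; congr 1; simp_rw [mul_add]; rw [ENNReal.tsum_add]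
        exact ne_top_of_le_ne_top (ENNReal.add_ne_top.2
          ⟨ENNReal.mul_ne_top ha_sum ENNReal.ofReal_ne_top, ENNReal.add_ne_top.2 ⟨hx, hy⟩⟩) h1
      smul_mem' := by
        intro c x hx
        have h1 : G (c • x) ≤ (∑' j, a j) * ENNReal.ofReal (Real.posLog c) + G x := by
          calc G (c • x) ≤ ∑' j, a j * (ENNReal.ofReal (Real.posLog c) + Fl ν β (k j) x) :=
                ENNReal.tsum_le_tsum fun j => mul_le_mul_right (Fl_smul h β (k j) c x) _
            _ = _ := hGc _ _
        exact ne_top_of_le_ne_top (ENNReal.add_ne_top.2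
          ⟨ENNReal.mul_ne_top ha_sum ENNReal.ofReal_ne_top, hx⟩) h1 }
  have hWmem : ∀ w, w ∈ W ↔ G w ≠ ⊤ := fun w => Iff.rfl
  have hGm : Measurable G := by
    apply Measurable.ennreal_tsum
    intro j
    exact (Fl_meas h β (k j)).const_mul _
  refine ⟨W, hGv, ?_, ?_⟩
  · have hone : ∀ w ∈ W, ∀ᵐ A ∂ν, A w ∈ W := by
      intro w hw
      have h1 : ∫⁻ A, G (A w) ∂ν ≤ (∑' j, a j) * ENNReal.ofReal (Real.posLog M) + G w := by
        have hev : Measurable (fun A : V →L[ℝ] V => A w) :=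
          (show Continuous (fun A : V →L[ℝ] V => A w) by fun_prop).measurable
        calc ∫⁻ A, G (A w) ∂ν = ∑' j, ∫⁻ A, a j * Fl ν β (k j) (A w) ∂ν :=
              lintegral_tsum fun j =>
                (((Fl_meas h β (k j)).comp hev).const_mul _).aemeasurable
          _ = ∑' j, a j * ∫⁻ A, Fl ν β (k j) (A w) ∂ν := by
              congr 1; ext j
              exact lintegral_const_mul _ ((Fl_meas h β (k j)).comp hev)
          _ ≤ ∑' j, a j * (ENNReal.ofReal (Real.posLog M) + Fl ν β (k j) w) :=
              ENNReal.tsum_le_tsum fun j => mul_le_mul_right (Fl_step h β (k j) w) _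
          _ = _ := hGc _ _
      have h2 : ∫⁻ A, G (A w) ∂ν ≠ ⊤ := ne_top_of_le_ne_top (ENNReal.add_ne_top.2
          ⟨ENNReal.mul_ne_top ha_sum ENNReal.ofReal_ne_top, hw⟩) h1
      have hev : Measurable (fun A : V →L[ℝ] V => A w) :=
          (show Continuous (fun A : V →L[ℝ] V => A w) by fun_prop).measurable
      filter_upwards [ae_lt_top (hGm.comp hev) h2] with A hA
      exact hA.ne
    have hall : ∀ᵐ A ∂ν, ∀ i, A (stdOrthonormalBasis ℝ W i : V) ∈ W :=
      ae_all_iff.2 fun i => hone _ (stdOrthonormalBasis ℝ W i).2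
    filter_upwards [hall] with A hA w hw
    have hrep := (stdOrthonormalBasis ℝ W).sum_repr ⟨w, hw⟩
    have h2 := congrArg (Subtype.val) hrep
    simp only [Submodule.coe_sum, Submodule.coe_smul] at h2
    rw [← h2, map_sum]
    refine W.sum_mem fun i _ => ?_
    rw [map_smul]
    exact W.smul_mem _ (hA i)
  · intro c hc
    have hW : W ≠ ⊥ := W.ne_bot_iff.2 ⟨v, hGv, unit_ne hv⟩
    set r := Module.finrank ℝ W with hr
    -- real-valued positive part
    let F : ℕ → Fin r → ℝ := fun j i =>
      ∫ A, Real.posLog (Real.exp (-(k j * β)) * ‖A (stdOrthonormalBasis ℝ W i : V)‖) ∂(cp ν (k j))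
    have hFi : ∀ j (w : V), Integrable
        (fun A => Real.posLog (Real.exp (-(k j * β)) * ‖A w‖)) (cp ν (k j)) := fun j w =>
        (h.cp (k j)).integrable (meas_plog _ w) fun _ hA =>
          plog_bd (h.cp (k j)).M0.le hA (Real.exp_pos _).le w
    have hFt : ∀ i, Tendsto (fun j => 1 / (k j : ℝ) * F j i) atTop (nhds 0) := by
      intro i
      have hGi : G (stdOrthonormalBasis ℝ W i : V) ≠ ⊤ := (stdOrthonormalBasis ℝ W i).2
      have h1 := ENNReal.tendsto_atTop_zero_of_tsum_ne_top hGi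
      have h2 := (ENNReal.tendsto_toReal ENNReal.zero_ne_top).comp h1
      simp only [ENNReal.toReal_zero] at h2
      refine h2.congr fun j => ?_
      simp only [Function.comp, ha, Fl, F]
      rw [← ofReal_integral_eq_lintegral_ofReal (hFi j _)
          (Eventually.of_forall fun _ => Real.posLog_nonneg), ENNReal.toReal_mul,
          ENNReal.toReal_ofReal (by positivity),
          ENNReal.toReal_ofReal (integral_nonneg fun _ => Real.posLog_nonneg)]
    have hkt : Tendsto (fun j => 1 / (k j : ℝ) * Real.log r) atTop (nhds 0) := by
      have h1 : Tendsto (fun j => 1 / (k j : ℝ)) atTop (nhds 0) := by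
        have h2 := ENNReal.tendsto_atTop_zero_of_tsum_ne_top ha_sum
        have h3 := (ENNReal.tendsto_toReal ENNReal.zero_ne_top).comp h2
        simp only [ENNReal.toReal_zero] at h3
        refine h3.congr fun j => ?_
        simp only [Function.comp, ha]
        rw [ENNReal.toReal_ofReal (by positivity)]
      simpa using h1.mul_const (Real.log r)
    have htot := hkt.add (tendsto_finsetSum Finset.univ fun i _ => hFt i)
    simp only [Finset.sum_const_zero, add_zero] at htot
    obtain ⟨j, hj⟩ := (htot.eventually (gt_mem_nhds (sub_pos.2 hc))).exists
    refine ⟨k j, hk0 j, ?_⟩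
    have hkj : (0:ℝ) < k j := by exact_mod_cast hk0 j
    have := (h.cp (k j)).prob
    have hpt : ∀ᵐ A ∂(cp ν (k j)), Real.log (bn W A) ≤ (k j * β + Real.log r) +
        ∑ i, Real.posLog (Real.exp (-(k j * β)) * ‖A (stdOrthonormalBasis ℝ W i : V)‖) := by
      filter_upwards [(h.cp (k j)).ae] with A hA
      have hpos : 0 < bn W A := (h.cp (k j)).m0.trans_le (bn_bd hW hA).1
      have h1 : Real.log (Real.exp (-(k j * β)) * bn W A) ≤ Real.log r +
          ∑ i, Real.posLog (Real.exp (-(k j * β)) * ‖A (stdOrthonormalBasis ℝ W i : V)‖) := by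
        have h2 := Real.posLog_sum Finset.univ
          (fun i => Real.exp (-(k j * β)) * ‖A (stdOrthonormalBasis ℝ W i : V)‖)
        rw [← Finset.mul_sum] at h2
        have h3 : (Finset.univ : Finset (Fin (Module.finrank ℝ W))).card = r := by simp [hr]
        rw [h3] at h2
        exact (le_max_right _ _).trans h2
      rw [Real.log_mul (Real.exp_pos _).ne' hpos.ne', Real.log_exp] at h1
      linarith
    have hil : Integrable (fun A => Real.log (bn W A)) (cp ν (k j)) := by
      refine (h.cp (k j)).integrable (Real.measurable_log.comp (bn_cont W).measurable)
        (C := |Real.log (m ^ k j)| + |Real.log (r * M ^ k j)|) fun A hA => ?_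
      have hb := bn_bd hW hA
      have hm0 := (h.cp (k j)).m0
      have h1 := Real.log_le_log hm0 hb.1
      have h2 := Real.log_le_log (hm0.trans_le hb.1) hb.2
      rw [abs_le]
      constructor
      · linarith [neg_abs_le (Real.log (m ^ k j)), abs_nonneg (Real.log (r * M ^ k j))]
      · linarith [le_abs_self (Real.log (r * M ^ k j)), abs_nonneg (Real.log (m ^ k j))]
    have his : Integrable (fun A => ∑ i, Real.posLog (Real.exp (-(k j * β)) *
        ‖A (stdOrthonormalBasis ℝ W i : V)‖)) (cp ν (k j)) :=
      integrable_finsetSum _ fun i _ => hFi j _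
    have hle := integral_mono_ae hil ((integrable_const _).add his) hpt
    rw [integral_add' (integrable_const _) his, integral_finsetSum _ fun i _ => hFi j _] at hle
    simp only [integral_const, probReal_univ, one_smul] at hle
    refine hle.trans_lt ?_
    rw [← Finset.mul_sum, ← mul_add, div_mul_eq_mul_div, one_mul, div_lt_iff₀ hkj] at hj
    have : (c - β) * (k j : ℝ) = k j * c - k j * β := by ring
    simp only [F] at hj
    linarith

end sub

section D
variable {V : Type*} [NormedAddCommGroup V] [InnerProductSpace ℝ V] [FiniteDimensional ℝ V]
  [MeasurableSpace V] [BorelSpace V]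
variable {ν : Measure (V →L[ℝ] V)} {m M : ℝ}

/-- A gauge of degree `α` contracted on average at rate `c` on the set `W`. -/
structure OneStep (ν : Measure (V →L[ℝ] V)) (α C c : ℝ) (W : Set V) (T : V → ℝ) : Prop where
  meas : Measurable T
  lo : ∀ v, ‖v‖ ^ α ≤ T v
  up : ∀ v, T v ≤ C * ‖v‖ ^ α
  step : ∀ v ∈ W, ∫ A, T (A v) ∂ν ≤ Real.exp (α * c) * T v

lemma OneStep.nonneg {α C c : ℝ} {W : Set V} {T : V → ℝ} (hT : OneStep ν α C c W T) (v : V) :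
    0 ≤ T v := (Real.rpow_nonneg (norm_nonneg v) α).trans (hT.lo v)

lemma meas_app (v : V) : Measurable (fun A : V →L[ℝ] V => A v) := by
  have : Continuous (fun A : V →L[ℝ] V => A v) := by fun_prop
  exact this.measurable

lemma gauge_int (h : Good ν m M) {α C : ℝ} (hα : 0 ≤ α) (hC : 0 ≤ C) {T : V → ℝ} (hm : Measurable T)
    (lo : ∀ v, 0 ≤ T v) (up : ∀ v, T v ≤ C * ‖v‖ ^ α) (v : V) :
    Integrable (fun A => T (A v)) ν := by
  refine h.integrable (C := C * (M * ‖v‖) ^ α) (hm.comp (meas_app v)) fun A hA => ?_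
  rw [abs_of_nonneg (lo _)]
  exact (up _).trans (mul_le_mul_of_nonneg_left
    (Real.rpow_le_rpow (norm_nonneg _) (hA v).2 hα) hC)

lemma rpow_sub {α : ℝ} (h0 : 0 ≤ α) (h1 : α ≤ 1) (v w : V) :
    ‖v + w‖ ^ α ≤ ‖v‖ ^ α + ‖w‖ ^ α :=
  (Real.rpow_le_rpow (norm_nonneg _) (norm_add_le v w) h0).trans
    (Real.rpow_add_le_add_rpow (norm_nonneg _) (norm_nonneg _) h0 h1)

/-- moments -/
def Gm (ν : Measure (V →L[ℝ] V)) (α : ℝ) (k : ℕ) (v : V) : ℝ := ∫ A, ‖A v‖ ^ α ∂(cp ν k)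

lemma Gm_nonneg (α : ℝ) (k : ℕ) (v : V) : 0 ≤ Gm ν α k v :=
  integral_nonneg fun _ => Real.rpow_nonneg (norm_nonneg _) _

lemma Gm_zero (α : ℝ) (v : V) : Gm ν α 0 v = ‖v‖ ^ α := by
  unfold Gm cp; rw [integral_dirac]; simp

lemma norm_rpow_cont {α : ℝ} (hα : 0 ≤ α) : Continuous (fun v : V => ‖v‖ ^ α) :=
  continuous_norm.rpow_const fun _ => Or.inr hα

lemma Gm_int (h : Good ν m M) {α : ℝ} (hα : 0 ≤ α) (k : ℕ) (v : V) :
    Integrable (fun A : V →L[ℝ] V => ‖A v‖ ^ α) (cp ν k) :=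
  gauge_int (h.cp k) hα zero_le_one (T := fun v : V => ‖v‖ ^ α) (norm_rpow_cont hα).measurable
    (fun _ => Real.rpow_nonneg (norm_nonneg _) _) (fun _ => by simp) v

lemma Gm_meas (h : Good ν m M) {α : ℝ} (hα : 0 ≤ α) (k : ℕ) : Measurable (Gm ν α k) := by
  have := (h.cp k).prob
  have hc : Continuous (fun p : V × (V →L[ℝ] V) => ‖p.2 p.1‖ ^ α) :=
    (norm_rpow_cont hα).comp (by fun_prop)
  exact (hc.measurable.stronglyMeasurable.integral_prod_right' (ν := cp ν k)).measurable

lemma Gm_up (h : Good ν m M) {α : ℝ} (hα : 0 ≤ α) (k : ℕ) (v : V) :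
    Gm ν α k v ≤ (M ^ k) ^ α * ‖v‖ ^ α := by
  have := (h.cp k).prob
  calc Gm ν α k v ≤ ∫ _, (M ^ k) ^ α * ‖v‖ ^ α ∂(cp ν k) := by
        refine integral_mono_ae (Gm_int h hα k v) (integrable_const _) ?_
        filter_upwards [(h.cp k).ae] with A hA
        rw [← Real.mul_rpow (h.cp k).M0.le (norm_nonneg _)]
        exact Real.rpow_le_rpow (norm_nonneg _) (hA v).2 hα
    _ = _ := by simp

lemma Gm_step (h : Good ν m M) {α : ℝ} (hα : 0 ≤ α) (k : ℕ) (v : V) :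
    ∫ B, Gm ν α k (B v) ∂ν = Gm ν α (k + 1) v := by
  have := h.prob
  unfold Gm
  have hc : Measurable (fun A : V →L[ℝ] V => ‖A v‖ ^ α) :=
    (norm_rpow_cont hα).measurable.comp (meas_app v)
  rw [h.integral_add (C := (M ^ (k + 1) * ‖v‖) ^ α) hc, cp_one]
  · rfl
  · intro A hA
    rw [abs_of_nonneg (Real.rpow_nonneg (norm_nonneg _) _)]
    exact Real.rpow_le_rpow (norm_nonneg _) (hA v).2 hα

lemma Gm_sub (h : Good ν m M) {α : ℝ} (hα : 0 ≤ α) (h1 : α ≤ 1) (k : ℕ) (v w : V) :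
    Gm ν α k (v + w) ≤ Gm ν α k v + Gm ν α k w := by
  unfold Gm
  rw [← integral_add (Gm_int h hα k v) (Gm_int h hα k w)]
  refine integral_mono (Gm_int h hα k _) ((Gm_int h hα k v).add (Gm_int h hα k w)) fun A => ?_
  simp only [map_add]
  exact rpow_sub hα h1 _ _

/-- the slow gauge property of a subspace -/
def Slow (ν : Measure (V →L[ℝ] V)) (W : Submodule ℝ V) (c : ℝ) : Prop :=
  ∃ α : ℝ, 0 < α ∧ α ≤ 1 ∧ ∃ (C : ℝ) (T : V → ℝ), 0 < C ∧ OneStep ν α C c W T ∧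
    ∀ v w, T (v + w) ≤ T v + T w

lemma bn_pos {W : Submodule ℝ V} (hW : W ≠ ⊥) (hm : 0 < m) {A : V →L[ℝ] V} (hA : A ∈ Bd m M) :
    0 < bn W A := hm.trans_le (bn_bd hW hA).1

lemma bn_log_bd {W : Submodule ℝ V} (hW : W ≠ ⊥) (hm : 0 < m) {A : V →L[ℝ] V} (hA : A ∈ Bd m M) :
    |Real.log (bn W A)| ≤ |Real.log m| + |Real.log (Module.finrank ℝ W * M)| := by
  have h := bn_bd hW hA
  have h1 := Real.log_le_log hm h.1
  have h2 := Real.log_le_log (bn_pos hW hm hA) h.2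
  rw [abs_le]
  constructor
  · linarith [neg_abs_le (Real.log m), abs_nonneg (Real.log (Module.finrank ℝ W * M))]
  · linarith [le_abs_self (Real.log (Module.finrank ℝ W * M)), abs_nonneg (Real.log m)]

lemma bn_log_meas (W : Submodule ℝ V) : Measurable (fun A : V →L[ℝ] V => Real.log (bn W A)) :=
  Real.measurable_log.comp (bn_cont W).measurable

lemma slow_of_log (h : Good ν m M) {W : Submodule ℝ V} (hW : W ≠ ⊥) {n : ℕ} (hn : 1 ≤ n) {c : ℝ}
    (hc : ∫ A, Real.log (bn W A) ∂(cp ν n) < n * c) : Slow ν W c := by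
  have := h.prob
  have hg := h.cp n
  set B : ℝ := |Real.log (m ^ n)| + |Real.log (Module.finrank ℝ W * M ^ n)| with hB
  have hB0 : 0 ≤ B := by positivity
  set g : ℝ := n * c - ∫ A, Real.log (bn W A) ∂(cp ν n) with hgd
  have hg0 : 0 < g := by simp only [hgd]; linarith
  obtain ⟨α, hα0, hα1, hαB, hαg⟩ : ∃ α : ℝ, 0 < α ∧ α ≤ 1 ∧ α * B ≤ 1 ∧ α * B ^ 2 ≤ g := by
    refine ⟨min 1 (min (1 / (B + 1)) (g / (B ^ 2 + 1))), by positivity, min_le_left _ _, ?_, ?_⟩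
    · calc _ ≤ 1 / (B + 1) * B := by
            gcongr; exact (min_le_right _ _).trans (min_le_left _ _)
        _ ≤ 1 := by rw [one_div_mul_eq_div, div_le_one (by positivity)]; linarith
    · calc _ ≤ g / (B ^ 2 + 1) * B ^ 2 := by
            gcongr; exact (min_le_right _ _).trans (min_le_right _ _)
        _ ≤ g := by
            rw [div_mul_eq_mul_div, div_le_iff₀ (by positivity)]; nlinarith
  have hmom := exp_moment (cp ν n) (Z := fun A => Real.log (bn W A)) (B := B) (α := α)
    (bn_log_meas W).aestronglyMeasurable
    (by filter_upwards [hg.ae] with A hA using bn_log_bd hW hg.m0 hA) hα0.le hαB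
  have hmom2 : ∫ A, Real.exp (α * Real.log (bn W A)) ∂(cp ν n) ≤ Real.exp (α * (n * c)) := by
    refine hmom.2.trans ?_
    have h1 := Real.add_one_le_exp (α * (n * c))
    have h2 : α * (α * B ^ 2) ≤ α * g := mul_le_mul_of_nonneg_left hαg hα0.le
    have h3 : α * g = α * (n * c) - α * ∫ A, Real.log (bn W A) ∂(cp ν n) := by
      simp only [hgd]; ring
    nlinarith
  have hGn : ∀ v ∈ W, Gm ν α n v ≤ Real.exp (α * (n * c)) * ‖v‖ ^ α := by
    intro v hv
    calc Gm ν α n v ≤ ∫ A, Real.exp (α * Real.log (bn W A)) * ‖v‖ ^ α ∂(cp ν n) := by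
          refine integral_mono_ae (Gm_int h hα0.le n v) (hmom.1.mul_const _) ?_
          filter_upwards [hg.ae] with A hA
          have hp := bn_pos hW hg.m0 hA
          have : Real.exp (α * Real.log (bn W A)) = bn W A ^ α := by
            rw [Real.rpow_def_of_pos hp, mul_comm]
          rw [this, ← Real.mul_rpow hp.le (norm_nonneg _)]
          exact Real.rpow_le_rpow (norm_nonneg _) (bn_le W A hv) hα0.le
      _ = (∫ A, Real.exp (α * Real.log (bn W A)) ∂(cp ν n)) * ‖v‖ ^ α := integral_mul_const _ _
      _ ≤ _ := mul_le_mul_of_nonneg_right hmom2 (Real.rpow_nonneg (norm_nonneg _) _)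
  let e : ℕ → ℝ := fun k => Real.exp (-(α * c * k))
  let T : V → ℝ := fun v => ∑ k ∈ Finset.range n, e k * Gm ν α k v
  have he : ∀ k, 0 < e k := fun k => Real.exp_pos _
  have hC : 0 < ∑ k ∈ Finset.range n, e k * (M ^ k) ^ α := by
    refine Finset.sum_pos (fun k _ => mul_pos (he k) (Real.rpow_pos_of_pos (pow_pos h.M0 k) _)) ?_
    exact ⟨0, by simp; omega⟩
  refine ⟨α, hα0, hα1, ∑ k ∈ Finset.range n, e k * (M ^ k) ^ α, T, hC, ⟨?_, ?_, ?_, ?_⟩, ?_⟩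
  · exact Finset.measurable_sum _ fun k _ => (Gm_meas h hα0.le k).const_mul _
  · intro v
    have h0 : e 0 * Gm ν α 0 v = ‖v‖ ^ α := by simp [e, Gm_zero]
    rw [← h0]
    exact Finset.single_le_sum (f := fun k => e k * Gm ν α k v)
      (fun k _ => mul_nonneg (he k).le (Gm_nonneg _ _ _)) (by simp; omega)
  · intro v
    rw [Finset.sum_mul]
    refine Finset.sum_le_sum fun k _ => ?_
    rw [mul_assoc]
    exact mul_le_mul_of_nonneg_left (Gm_up h hα0.le k v) (he k).le
  · intro v hv
    have hi : ∀ k, Integrable (fun A : V →L[ℝ] V => Gm ν α k (A v)) ν := fun k =>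
      gauge_int h hα0.le (Real.rpow_nonneg (pow_nonneg h.M0.le k) _) (Gm_meas h hα0.le k)
        (Gm_nonneg _ _) (Gm_up h hα0.le k) v
    have h1 : ∫ A, T (A v) ∂ν = ∑ k ∈ Finset.range n, e k * Gm ν α (k + 1) v := by
      simp only [T]
      rw [integral_finsetSum _ fun k _ => (hi k).const_mul _]
      refine Finset.sum_congr rfl fun k _ => ?_
      rw [integral_const_mul, Gm_step h hα0.le]
    have h2 : ∀ k, e k = Real.exp (α * c) * e (k + 1) := by
      intro k; simp only [e]; rw [← Real.exp_add]; congr 1; push_cast; ring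
    rw [h1]
    have h3 : ∑ k ∈ Finset.range n, e k * Gm ν α (k + 1) v =
        Real.exp (α * c) * ∑ k ∈ Finset.range n, e (k + 1) * Gm ν α (k + 1) v := by
      rw [Finset.mul_sum]
      refine Finset.sum_congr rfl fun k _ => ?_
      rw [h2 k]; ring
    rw [h3]
    refine mul_le_mul_of_nonneg_left ?_ (Real.exp_pos _).le
    have h4 := Finset.sum_range_succ' (fun k => e k * Gm ν α k v) n
    rw [Finset.sum_range_succ] at h4
    have h5 : e n * Gm ν α n v ≤ e 0 * Gm ν α 0 v := by
      have := mul_le_mul_of_nonneg_left (hGn v hv) (he n).le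
      refine this.trans (le_of_eq ?_)
      rw [Gm_zero, ← mul_assoc]
      simp only [e]
      rw [← Real.exp_add]
      simp only [Nat.cast_zero]
      congr 2; ring
    simp only [T]; linarith
  · intro v w
    simp only [T]
    rw [← Finset.sum_add_distrib]
    refine Finset.sum_le_sum fun k _ => ?_
    rw [← mul_add]
    exact mul_le_mul_of_nonneg_left (Gm_sub h hα0.le hα1 k v w) (he k).le

/-- Powers of gauges. -/
lemma OneStep.pow {α C c s : ℝ} {W : Set V} {T : V → ℝ} (h : Good ν m M) (hα : 0 ≤ α) (hC : 0 ≤ C)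
    (hT : OneStep ν α C c W T) (hs : 0 < s) (hs1 : s ≤ 1) :
    OneStep ν (α * s) (C ^ s) c W (fun v => T v ^ s) := by
  have := h.prob
  refine ⟨hT.meas.pow_const s, fun v => ?_, fun v => ?_, fun v hv => ?_⟩
  · rw [Real.rpow_mul (norm_nonneg _)]
    exact Real.rpow_le_rpow (Real.rpow_nonneg (norm_nonneg _) _) (hT.lo v) hs.le
  · rw [Real.rpow_mul (norm_nonneg _), ← Real.mul_rpow hC (Real.rpow_nonneg (norm_nonneg _) _)]
    exact Real.rpow_le_rpow (hT.nonneg v) (hT.up v) hs.le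
  · rcases eq_or_lt_of_le (hT.nonneg v) with h0 | h0
    · have hi := gauge_int h hα hC hT.meas hT.nonneg hT.up v
      have hz : ∫ A, T (A v) ∂ν ≤ 0 := by simpa [← h0] using hT.step v hv
      have hz2 : ∫ A, T (A v) ∂ν = 0 := le_antisymm hz (integral_nonneg fun A => hT.nonneg _)
      rw [integral_eq_zero_iff_of_nonneg (fun A => hT.nonneg _) hi] at hz2
      have : ∫ A, T (A v) ^ s ∂ν = 0 := by
        refine integral_eq_zero_of_ae ?_
        filter_upwards [hz2] with A hA
        simp only [Pi.zero_apply] at hA ⊢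
        rw [hA, Real.zero_rpow hs.ne']
      rw [this, ← h0, Real.zero_rpow hs.ne']; simp
    · set y := Real.exp (α * c) * T v with hy
      have hy0 : 0 < y := mul_pos (Real.exp_pos _) h0
      have hi := gauge_int h hα hC hT.meas hT.nonneg hT.up v
      have hpt : ∀ A : V →L[ℝ] V, T (A v) ^ s ≤ y ^ s * (1 - s) + (y ^ s * s / y) * T (A v) := by
        intro A
        have hx : 0 ≤ T (A v) / y := div_nonneg (hT.nonneg _) hy0.le
        have h1 := _root_.rpow_one_add_le_one_add_mul_self (s := T (A v) / y - 1) (by linarith) hs.le hs1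
        have h2 : T (A v) ^ s = y ^ s * (1 + (T (A v) / y - 1)) ^ s := by
          rw [← Real.mul_rpow hy0.le (by linarith)]
          congr 1; field_simp; ring
        rw [h2]
        refine (mul_le_mul_of_nonneg_left h1 (Real.rpow_nonneg hy0.le _)).trans (le_of_eq ?_)
        field_simp; ring
      have hi2 : Integrable (fun A : V →L[ℝ] V => y ^ s * (1 - s) + (y ^ s * s / y) * T (A v)) ν :=
        (integrable_const _).add (hi.const_mul _)
      calc ∫ A, T (A v) ^ s ∂ν ≤ ∫ A, (y ^ s * (1 - s) + (y ^ s * s / y) * T (A v)) ∂ν :=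
            integral_mono_of_nonneg (Eventually.of_forall fun A => Real.rpow_nonneg (hT.nonneg _) _) hi2
              (Eventually.of_forall hpt)
        _ = y ^ s * (1 - s) + (y ^ s * s / y) * ∫ A, T (A v) ∂ν := by
            rw [integral_add (integrable_const _) (hi.const_mul _), integral_const, integral_const_mul]
            simp
        _ ≤ y ^ s * (1 - s) + (y ^ s * s / y) * y := by
            have := hT.step v hv
            gcongr
        _ = y ^ s * 1 := by field_simp; ring
        _ = Real.exp (α * s * c) * T v ^ s := by
            rw [mul_one, hy, Real.mul_rpow (Real.exp_pos _).le h0.le, ← Real.exp_mul]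
            congr 2; ring

lemma sub_pow {T : V → ℝ} (h0 : ∀ v, 0 ≤ T v) (hT : ∀ v w, T (v + w) ≤ T v + T w) {s : ℝ}
    (hs : 0 ≤ s) (hs1 : s ≤ 1) (v w : V) : T (v + w) ^ s ≤ T v ^ s + T w ^ s :=
  (Real.rpow_le_rpow (h0 _) (hT v w) hs).trans (Real.rpow_add_le_add_rpow (h0 _) (h0 _) hs hs1)

end D

section D2
variable {V : Type*} [NormedAddCommGroup V] [InnerProductSpace ℝ V] [FiniteDimensional ℝ V]
  [MeasurableSpace V] [BorelSpace V]
variable {ν : Measure (V →L[ℝ] V)} {m M : ℝ}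

lemma mm2 : MeasurableMul₂ (V →L[ℝ] V) := inferInstance

/-- compression to the orthogonal complement -/
def compr (W : Submodule ℝ V) (A : V →L[ℝ] V) : Wᗮ →L[ℝ] Wᗮ :=
  (Wᗮ.orthogonalProjectionOnto) ∘L A ∘L Wᗮ.subtypeL

/-- operators preserving `W` -/
def Pres (W : Submodule ℝ V) : Set (V →L[ℝ] V) := {A | ∀ w ∈ W, A w ∈ W}

lemma compr_apply (W : Submodule ℝ V) (A : V →L[ℝ] V) (u : Wᗮ) :
    compr W A u = Wᗮ.orthogonalProjectionOnto (A u) := rfl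

lemma compr_cont (W : Submodule ℝ V) : Continuous (compr W) := by
  unfold compr
  fun_prop

lemma Pres_closed (W : Submodule ℝ V) : IsClosed (Pres W) := by
  have : Pres W = ⋂ w ∈ W, {A : V →L[ℝ] V | A w ∈ W} := by ext A; simp [Pres]
  rw [this]
  refine isClosed_biInter fun w _ => ?_
  have hW : IsClosed (W : Set V) := W.closed_of_finiteDimensional
  exact hW.preimage (f := fun A : V →L[ℝ] V => A w) (by fun_prop)

lemma proj_W (W : Submodule ℝ V) {w : V} (hw : w ∈ W) : Wᗮ.orthogonalProjectionOnto w = 0 := by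
  rw [Submodule.orthogonalProjectionOnto_eq_zero_iff]
  simpa using hw

lemma decomp (W : Submodule ℝ V) (v : V) :
    (W.orthogonalProjectionOnto v : V) + (Wᗮ.orthogonalProjectionOnto v : V) = v :=
  Submodule.starProjection_add_starProjection_orthogonal (K := W) v

lemma proj_comp {W : Submodule ℝ V} {A : V →L[ℝ] V} (hA : A ∈ Pres W) (v : V) :
    Wᗮ.orthogonalProjectionOnto (A v) = compr W A (Wᗮ.orthogonalProjectionOnto v) := by
  conv_lhs => rw [← decomp W v]
  rw [map_add, map_add, proj_W W (hA _ (W.orthogonalProjectionOnto v).2), zero_add, compr_apply]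

lemma compr_mul {W : Submodule ℝ V} {A B : V →L[ℝ] V} (hA : A ∈ Pres W) :
    compr W (A * B) = compr W A * compr W B := by
  ext u
  show ((compr W (A * B) u : Wᗮ) : V) = (compr W A (compr W B u) : Wᗮ)
  rw [compr_apply, mul_apply_eq_comp, proj_comp hA]; rfl

lemma compr_one (W : Submodule ℝ V) : compr W 1 = 1 := by
  ext u
  rw [compr_apply]; simp

lemma compr_norm_le (W : Submodule ℝ V) (A : V →L[ℝ] V) (u : Wᗮ) : ‖compr W A u‖ ≤ ‖A u‖ := by
  rw [compr_apply]; exact Wᗮ.norm_orthogonalProjectionOnto_apply_le _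

lemma pres_surj {W : Submodule ℝ V} (hm : 0 < m) {A : V →L[ℝ] V} (hA : A ∈ Pres W)
    (hb : A ∈ Bd m M) {x : V} (hx : x ∈ W) : ∃ w ∈ W, A w = x := by
  let f : W →ₗ[ℝ] W := A.toLinearMap.restrict hA
  have hinj : Function.Injective f := by
    rw [← LinearMap.ker_eq_bot, LinearMap.ker_eq_bot']
    intro w hw
    by_contra hne
    have h1 : (w : V) ≠ 0 := by simpa using hne
    have h2 := Bd_ne hm hb h1
    exact h2 (congrArg Subtype.val hw)
  obtain ⟨w, hw⟩ := (LinearMap.injective_iff_surjective.1 hinj) ⟨x, hx⟩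
  exact ⟨w, w.2, congrArg Subtype.val hw⟩

lemma compr_Bd {W : Submodule ℝ V} (hm : 0 < m) {A : V →L[ℝ] V} (hA : A ∈ Pres W)
    (hb : A ∈ Bd m M) : compr W A ∈ (Bd m M : Set (Wᗮ →L[ℝ] Wᗮ)) := by
  intro u
  refine ⟨?_, (compr_norm_le W A u).trans (hb u).2⟩
  obtain ⟨w, hw, hw2⟩ := pres_surj hm hA hb (W.orthogonalProjectionOnto (A u)).2
  have h1 : A ((u : V) - w) = (compr W A u : V) := by
    rw [map_sub, hw2, compr_apply]
    have := decomp W (A u)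
    nth_rewrite 1 [← this]
    simp
  have h2 := (hb ((u : V) - w)).1
  rw [h1] at h2
  have h3 : ‖(u : V)‖ ≤ ‖(u : V) - w‖ := by
    have h4 : inner ℝ (u : V) w = 0 := by
      rw [real_inner_comm]; exact u.2 w hw
    have h5 := norm_sub_sq_real (u : V) w
    rw [h4] at h5
    have : ‖(u : V)‖ ^ 2 ≤ ‖(u : V) - w‖ ^ 2 := by nlinarith [sq_nonneg ‖w‖]
    exact le_of_sq_le_sq this (norm_nonneg _)
  calc m * ‖u‖ ≤ m * ‖(u : V) - w‖ := mul_le_mul_of_nonneg_left h3 hm.le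
    _ ≤ _ := h2

lemma good_compr {W : Submodule ℝ V} (h : Good ν m M) (hinv : ∀ᵐ A ∂ν, A ∈ Pres W) :
    Good (ν.map (compr W)) m M := by
  have := h.prob
  refine ⟨Measure.isProbabilityMeasure_map (compr_cont W).measurable.aemeasurable, h.m0, h.m1, h.M1, ?_⟩
  refine (ae_map_iff (p := fun x => x ∈ Bd m M) (compr_cont W).measurable.aemeasurable (Bd_closed _ _).measurableSet).2 ?_
  filter_upwards [hinv, h.ae] with A h1 h2 using compr_Bd h.m0 h1 h2

lemma cp_compr {W : Submodule ℝ V} (h : Good ν m M) (hinv : ∀ᵐ A ∂ν, A ∈ Pres W) (n : ℕ) :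
    (∀ᵐ A ∂(cp ν n), A ∈ Pres W) ∧ (cp ν n).map (compr W) = cp (ν.map (compr W)) n := by
  have := h.prob
  have := mm2 (V := Wᗮ)
  refine cp_map ν (compr W) (compr_cont W).measurable (Pres W) (Pres_closed W).measurableSet ?_ ?_
    (compr_one W) (fun x hx y _ => compr_mul hx) hinv n
  · intro w hw; exact hw
  · intro x hx y hy w hw; exact hx _ (hy _ hw)

lemma combine {W : Submodule ℝ V} (h : Good ν m M) (hinv : ∀ᵐ A ∂ν, A ∈ Pres W)
    {α C₁ C₂ c₁ c₂ c : ℝ} (hα : 0 < α) (hα1 : α ≤ 1) (hC₁ : 0 < C₁) (hC₂ : 0 < C₂)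
    {T₁ : V → ℝ} (hT₁ : OneStep ν α C₁ c₁ W T₁) (hs₁ : ∀ v w, T₁ (v + w) ≤ T₁ v + T₁ w)
    {V' : Set Wᗮ} {T₂ : Wᗮ → ℝ} (hT₂ : OneStep (ν.map (compr W)) α C₂ c₂ V' T₂)
    (hc₁ : c₁ ≤ c) (hc₂ : c₂ < c) :
    ∃ (C : ℝ) (T : V → ℝ), 0 < C ∧
      OneStep ν α C c {v | Wᗮ.orthogonalProjectionOnto v ∈ V'} T ∧
      ((∀ v w, T₂ (v + w) ≤ T₂ v + T₂ w) → ∀ v w, T (v + w) ≤ T v + T w) := by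
  have := h.prob
  have hge : Real.exp (α * c₂) < Real.exp (α * c) :=
    Real.exp_lt_exp.2 (mul_lt_mul_of_pos_left hc₂ hα)
  have hMα : 0 ≤ M ^ α := Real.rpow_nonneg h.M0.le _
  obtain ⟨K, hK1, hK⟩ : ∃ K : ℝ, 1 ≤ K ∧ C₁ * M ^ α + K * Real.exp (α * c₂) ≤ K * Real.exp (α * c) := by
    refine ⟨max 1 (C₁ * M ^ α / (Real.exp (α * c) - Real.exp (α * c₂))), le_max_left _ _, ?_⟩
    have h1 := le_max_right 1 (C₁ * M ^ α / (Real.exp (α * c) - Real.exp (α * c₂)))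
    rw [div_le_iff₀ (by linarith)] at h1
    linarith
  have hK0 : 0 < K := by linarith
  let P := Wᗮ.orthogonalProjectionOnto
  let PW : V → V := fun v => (W.orthogonalProjectionOnto v : V)
  have hPWc : Continuous PW := by simp only [PW]; fun_prop
  have hPc : Continuous P := by simp only [P]; fun_prop
  have hPWn : ∀ v, ‖PW v‖ ≤ ‖v‖ := fun v => W.norm_orthogonalProjectionOnto_apply_le v
  have hPn : ∀ v, ‖P v‖ ≤ ‖v‖ := fun v => Wᗮ.norm_orthogonalProjectionOnto_apply_le v
  have hPWadd : ∀ v w, PW (v + w) = PW v + PW w := fun v w => by simp [PW]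
  let T : V → ℝ := fun v => T₁ (PW v) + K * T₂ (P v)
  refine ⟨C₁ + K * C₂, T, by positivity, ⟨?_, ?_, ?_, ?_⟩, ?_⟩
  · exact (hT₁.meas.comp hPWc.measurable).add ((hT₂.meas.comp hPc.measurable).const_mul _)
  · intro v
    have h1 := rpow_sub hα.le hα1 (PW v) (P v : V)
    rw [show PW v + (P v : V) = v from decomp W v] at h1
    have h2 := hT₁.lo (PW v)
    have h3 := hT₂.lo (P v)
    have h4 := hT₂.nonneg (P v)
    have h5 : ‖((P v : Wᗮ) : V)‖ = ‖P v‖ := rfl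
    rw [h5] at h1
    simp only [T]; nlinarith
  · intro v
    have h2 := (hT₁.up (PW v)).trans (mul_le_mul_of_nonneg_left
      (Real.rpow_le_rpow (norm_nonneg _) (hPWn v) hα.le) hC₁.le)
    have h3 := (hT₂.up (P v)).trans (mul_le_mul_of_nonneg_left
      (Real.rpow_le_rpow (norm_nonneg _) (hPn v) hα.le) hC₂.le)
    have h4 := mul_le_mul_of_nonneg_left h3 hK0.le
    simp only [T]; linarith
  · intro v hv
    have hv : P v ∈ V' := hv
    have hw : PW v ∈ W := (W.orthogonalProjectionOnto v).2
    have hg2 := good_compr h hinv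
    have i1 := gauge_int h hα.le hC₁.le hT₁.meas hT₁.nonneg hT₁.up (PW v)
    have i2' := gauge_int hg2 hα.le hC₂.le hT₂.meas hT₂.nonneg hT₂.up (P v)
    have hmap : ∫ B, T₂ (B (P v)) ∂(ν.map (compr W)) = ∫ A, T₂ (compr W A (P v)) ∂ν :=
      integral_map (compr_cont W).measurable.aemeasurable i2'.1
    have i2 : Integrable (fun A => T₂ (compr W A (P v))) ν :=
      (integrable_map_measure i2'.1 (compr_cont W).measurable.aemeasurable).1 i2'
    have hb : ∀ᵐ A ∂ν, T (A v) ≤ T₁ (A (PW v)) + C₁ * M ^ α * T₂ (P v) + K * T₂ (compr W A (P v)) := by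
      filter_upwards [hinv, h.ae] with A h1 h2
      have e1 : P (A v) = compr W A (P v) := proj_comp h1 v
      have e2 : PW (A v) = A (PW v) + PW (A (P v : V)) := by
        have : A v = A (PW v) + A (P v : V) := by rw [← map_add]; congr 1; exact (decomp W v).symm
        rw [this, hPWadd]
        congr 1
        exact Submodule.starProjection_eq_self_iff.2 (h1 _ hw)
      have e3 : T₁ (PW (A (P v : V))) ≤ C₁ * M ^ α * T₂ (P v) := by
        refine (hT₁.up _).trans ?_
        rw [mul_assoc]
        refine mul_le_mul_of_nonneg_left ?_ hC₁.le
        calc ‖PW (A (P v : V))‖ ^ α ≤ (M * ‖P v‖) ^ α :=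
              Real.rpow_le_rpow (norm_nonneg _) ((hPWn _).trans (h2 _).2) hα.le
          _ = M ^ α * ‖P v‖ ^ α := Real.mul_rpow h.M0.le (norm_nonneg _)
          _ ≤ _ := mul_le_mul_of_nonneg_left (hT₂.lo _) hMα
      simp only [T]
      rw [e1, e2]
      have := hs₁ (A (PW v)) (PW (A (P v : V)))
      linarith
    have hT0 : ∀ v, 0 ≤ T v := fun v => add_nonneg (hT₁.nonneg _) (mul_nonneg hK0.le (hT₂.nonneg _))
    have i3 : Integrable (fun A => T₁ (A (PW v)) + C₁ * M ^ α * T₂ (P v)) ν := i1.add (integrable_const _)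
    calc ∫ A, T (A v) ∂ν ≤ ∫ A, (T₁ (A (PW v)) + C₁ * M ^ α * T₂ (P v) + K * T₂ (compr W A (P v))) ∂ν :=
          integral_mono_of_nonneg (Eventually.of_forall fun A => hT0 _) (i3.add (i2.const_mul K)) hb
      _ = ∫ A, T₁ (A (PW v)) ∂ν + C₁ * M ^ α * T₂ (P v) + K * ∫ A, T₂ (compr W A (P v)) ∂ν := by
          rw [integral_add i3 (i2.const_mul K), integral_add i1 (integrable_const _), integral_const,
            integral_const_mul]
          simp
      _ ≤ Real.exp (α * c) * T₁ (PW v) + C₁ * M ^ α * T₂ (P v) + K * (Real.exp (α * c₂) * T₂ (P v)) := by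
          have s1 := hT₁.step (PW v) hw
          have s2 := hT₂.step (P v) hv
          rw [hmap] at s2
          have s3 : Real.exp (α * c₁) * T₁ (PW v) ≤ Real.exp (α * c) * T₁ (PW v) :=
            mul_le_mul_of_nonneg_right (Real.exp_le_exp.2 (mul_le_mul_of_nonneg_left hc₁ hα.le)) (hT₁.nonneg _)
          have s4 := mul_le_mul_of_nonneg_left s2 hK0.le
          linarith
      _ ≤ Real.exp (α * c) * T v := by
          have := mul_le_mul_of_nonneg_right hK (hT₂.nonneg (P v))
          simp only [T]; nlinarith
  · intro hs₂ v w
    have h1 := hs₁ (PW v) (PW w)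
    rw [← hPWadd] at h1
    have h2 := hs₂ (P v) (P w)
    rw [← map_add] at h2
    have h3 := mul_le_mul_of_nonneg_left h2 hK0.le
    simp only [T]; linarith

lemma OneStep.iter {α C c : ℝ} {T : V → ℝ} (h : Good ν m M) (hα : 0 ≤ α) (hC : 0 ≤ C)
    (hT : OneStep ν α C c Set.univ T) (n : ℕ) (v : V) :
    ∫ A, T (A v) ∂(cp ν n) ≤ Real.exp (α * c * n) * T v := by
  have := h.prob
  induction n generalizing v with
  | zero => unfold cp; rw [integral_dirac]; simp
  | succ n ih =>
    have hi := gauge_int h hα hC hT.meas hT.nonneg hT.up v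
    have hb : ∀ A ∈ (Bd (m ^ (n + 1)) (M ^ (n + 1)) : Set (V →L[ℝ] V)),
        |T (A v)| ≤ C * (M ^ (n + 1) * ‖v‖) ^ α := fun A hA => by
      rw [abs_of_nonneg (hT.nonneg _)]
      exact (hT.up _).trans (mul_le_mul_of_nonneg_left
        (Real.rpow_le_rpow (norm_nonneg _) (hA v).2 hα) hC)
    rw [h.integral_add (f := fun A : V →L[ℝ] V => T (A v)) (hT.meas.comp (meas_app v)) hb, cp_one]
    calc ∫ B, ∫ A, T ((A * B) v) ∂(cp ν n) ∂ν ≤ ∫ B, Real.exp (α * c * n) * T (B v) ∂ν :=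
          integral_mono_of_nonneg (Eventually.of_forall fun B => integral_nonneg fun A => hT.nonneg _)
            (hi.const_mul _) (Eventually.of_forall fun B => ih (B v))
      _ = Real.exp (α * c * n) * ∫ B, T (B v) ∂ν := integral_const_mul _ _
      _ ≤ Real.exp (α * c * n) * (Real.exp (α * c) * T v) :=
          mul_le_mul_of_nonneg_left (hT.step v trivial) (Real.exp_pos _).le
      _ = _ := by
          rw [← mul_assoc, ← Real.exp_add]; congr 2; push_cast; ring

lemma norm_bd [Nontrivial V] {A : V →L[ℝ] V} (hM : 0 ≤ M) (hA : A ∈ Bd m M) : m ≤ ‖A‖ ∧ ‖A‖ ≤ M := by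
  refine ⟨?_, Bd_norm hM hA⟩
  obtain ⟨v, hv⟩ := exists_ne (0 : V)
  have := (hA v).1.trans (A.le_opNorm v)
  exact le_of_mul_le_mul_right this (norm_pos_iff.2 hv)

lemma lognorm_bd [Nontrivial V] {A : V →L[ℝ] V} (hm : 0 < m) (hM : 0 ≤ M) (hA : A ∈ Bd m M) :
    |Real.log ‖A‖| ≤ |Real.log m| + |Real.log M| := by
  have h := norm_bd hM hA
  have h1 := Real.log_le_log hm h.1
  have h2 := Real.log_le_log (hm.trans_le h.1) h.2
  rw [abs_le]
  constructor
  · linarith [neg_abs_le (Real.log m), abs_nonneg (Real.log M)]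
  · linarith [le_abs_self (Real.log M), abs_nonneg (Real.log m)]

lemma int_lognorm [Nontrivial V] (h : Good ν m M) :
    Integrable (fun A : V →L[ℝ] V => Real.log ‖A‖) ν :=
  h.integrable (Real.measurable_log.comp continuous_norm.measurable)
    fun _ hA => lognorm_bd h.m0 h.M0.le hA

/-- A global gauge bounds the growth rate. -/
lemma OneStep.upper [Nontrivial V] {α C c : ℝ} {T : V → ℝ} (h : Good ν m M) (hα : 0 < α) (hC : 0 ≤ C)
    (hT : OneStep ν α C c Set.univ T) :
    ∃ C' : ℝ, ∀ n : ℕ, ∫ A, Real.log ‖A‖ ∂(cp ν n) ≤ c * n + C' := by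
  have := h.prob
  let b := fun i => (stdOrthonormalBasis ℝ (⊤ : Submodule ℝ V) i : V)
  let D : ℝ := Module.finrank ℝ (⊤ : Submodule ℝ V)
  have hD : 0 < D := by
    simp only [D]
    rw [finrank_top]; exact_mod_cast Module.finrank_pos
  refine ⟨Real.log D + α⁻¹ * (∑ i, T (b i) - 1), fun n => ?_⟩
  have hg := h.cp n
  set y := Real.exp (α * c * n) with hy
  have hy0 : 0 < y := Real.exp_pos _
  have hi : ∀ i, Integrable (fun A : V →L[ℝ] V => T (A (b i))) (cp ν n) := fun i =>
    gauge_int hg hα.le hC hT.meas hT.nonneg hT.up (b i)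
  have hR : Integrable (fun A : V →L[ℝ] V => ∑ i, T (A (b i))) (cp ν n) :=
    integrable_finsetSum _ fun i _ => hi i
  have hpt : ∀ᵐ A ∂(cp ν n), Real.log ‖A‖ ≤
      (Real.log D + α⁻¹ * (α * c * n - 1)) + (α⁻¹ * y⁻¹) * ∑ i, T (A (b i)) := by
    filter_upwards [hg.ae] with A hA
    have hA0 : 0 < ‖A‖ := hg.m0.trans_le (norm_bd hg.M0.le hA).1
    set R := ∑ i, T (A (b i)) with hRd
    have hR0 : 0 ≤ R := Finset.sum_nonneg fun i _ => hT.nonneg _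
    have h1 : ∀ i, ‖A (b i)‖ ≤ R ^ α⁻¹ := by
      intro i
      have h2 : ‖A (b i)‖ ^ α ≤ R := (hT.lo _).trans
        (Finset.single_le_sum (f := fun i => T (A (b i))) (fun i _ => hT.nonneg _) (Finset.mem_univ i))
      have := Real.rpow_le_rpow (Real.rpow_nonneg (norm_nonneg _) _) h2 (inv_nonneg.2 hα.le)
      rwa [← Real.rpow_mul (norm_nonneg _), mul_inv_cancel₀ hα.ne', Real.rpow_one] at this
    have h3 : bn ⊤ A ≤ D * R ^ α⁻¹ := by
      unfold bn
      calc _ ≤ ∑ _i : Fin (Module.finrank ℝ (⊤ : Submodule ℝ V)), R ^ α⁻¹ := Finset.sum_le_sum fun i _ => h1 i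
        _ = _ := by simp [D]
    have h4 : ‖A‖ ≤ D * R ^ α⁻¹ :=
      A.opNorm_le_bound (by positivity) fun v =>
        (bn_le ⊤ A (Submodule.mem_top (x := v))).trans (mul_le_mul_of_nonneg_right h3 (norm_nonneg _))
    have hRp : 0 < R := by
      rcases eq_or_lt_of_le hR0 with h0 | h0
      · rw [← h0, Real.zero_rpow (inv_ne_zero hα.ne')] at h4
        simp at h4; rw [h4] at hA0; simp at hA0
      · exact h0
    have h5 := Real.log_le_log hA0 h4
    rw [Real.log_mul hD.ne' (Real.rpow_pos_of_pos hRp _).ne', Real.log_rpow hRp] at h5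
    have h6 := Real.log_le_sub_one_of_pos (mul_pos (inv_pos.2 hy0) hRp)
    rw [Real.log_mul (inv_pos.2 hy0).ne' hRp.ne', Real.log_inv, hy, Real.log_exp, ← hy] at h6
    have h7 : α⁻¹ * Real.log R ≤ α⁻¹ * (α * c * n - 1 + y⁻¹ * R) :=
      mul_le_mul_of_nonneg_left (by linarith) (inv_nonneg.2 hα.le)
    calc Real.log ‖A‖ ≤ _ := h5
      _ ≤ _ := by linarith
  calc ∫ A, Real.log ‖A‖ ∂(cp ν n) ≤ ∫ A, ((Real.log D + α⁻¹ * (α * c * n - 1)) +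
          (α⁻¹ * y⁻¹) * ∑ i, T (A (b i))) ∂(cp ν n) :=
        integral_mono_ae (int_lognorm hg) ((integrable_const _).add (hR.const_mul _)) hpt
    _ = (Real.log D + α⁻¹ * (α * c * n - 1)) + (α⁻¹ * y⁻¹) * ∑ i, ∫ A, T (A (b i)) ∂(cp ν n) := by
        rw [integral_add (integrable_const _) (hR.const_mul _), integral_const, integral_const_mul,
          integral_finsetSum _ fun i _ => hi i]
        simp
    _ ≤ (Real.log D + α⁻¹ * (α * c * n - 1)) + (α⁻¹ * y⁻¹) * ∑ i, y * T (b i) := by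
        have : ∑ i, ∫ A, T (A (b i)) ∂(cp ν n) ≤ ∑ i, y * T (b i) :=
          Finset.sum_le_sum fun i _ => hT.iter h hα.le hC n (b i)
        have h2 : 0 ≤ α⁻¹ * y⁻¹ := by positivity
        linarith [mul_le_mul_of_nonneg_left this h2]
    _ = _ := by
        rw [← Finset.mul_sum]
        field_simp; ring

end D2

section D3
variable {V : Type*} [NormedAddCommGroup V] [InnerProductSpace ℝ V] [FiniteDimensional ℝ V]
  [MeasurableSpace V] [BorelSpace V]
variable {ν : Measure (V →L[ℝ] V)} {m M : ℝ}

lemma slow_bot (ν : Measure (V →L[ℝ] V)) (c : ℝ) : Slow ν (⊥ : Submodule ℝ V) c := by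
  refine ⟨1, one_pos, le_refl _, 1, fun v => ‖v‖, one_pos, ⟨measurable_norm, ?_, ?_, ?_⟩, ?_⟩
  · intro v; simp
  · intro v; simp
  · intro v hv
    have : v = 0 := by simpa using hv
    subst this; simp
  · exact fun v w => norm_add_le v w

/-- The measure-theoretic form of the minimal growth dichotomy. -/
lemma slow_of_low [Nontrivial V] (h : Good ν m M) {c' : ℝ}
    (hno : ∀ n : ℕ, 1 ≤ n → ∃ u : V, ‖u‖ = 1 ∧ H ν n u < n * c') {c : ℝ} (hc : c' < c) :
    ∃ W : Submodule ℝ V, W ≠ ⊥ ∧ (∀ᵐ A ∂ν, A ∈ Pres W) ∧ Slow ν W c := by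
  let S : Set ℝ := {b | ∃ n : ℕ, 1 ≤ n ∧ ∀ u : V, ‖u‖ = 1 → n * b ≤ H ν n u}
  have hne : S.Nonempty := by
    refine ⟨Real.log m, 1, le_refl _, fun u hu => ?_⟩
    have := (H_bd h 1 (unit_ne hu)).1
    rw [hu] at this; simpa using this
  have hub : ∀ b ∈ S, b ≤ c' := by
    rintro b ⟨n, hn, hb⟩
    obtain ⟨u, hu, hu2⟩ := hno n hn
    have h1 := (hb u hu).trans_lt hu2
    have hn0 : (0:ℝ) < n := by exact_mod_cast hn
    exact (lt_of_mul_lt_mul_left h1 hn0.le).le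
  have hbdd : BddAbove S := ⟨c', hub⟩
  set β := sSup S with hβ
  have hβc : β ≤ c' := csSup_le hne hub
  have hlow : ∀ ε > 0, ∃ n : ℕ, 1 ≤ n ∧ ∀ v : V, ‖v‖ = 1 → n * (β - ε) ≤ H ν n v := by
    intro ε hε
    obtain ⟨b, ⟨n, hn, hb⟩, hb2⟩ := exists_lt_of_lt_csSup hne (show β - ε < sSup S by linarith)
    refine ⟨n, hn, fun v hv => (mul_le_mul_of_nonneg_left hb2.le (by positivity)).trans (hb v hv)⟩
  have hmin : ∀ n : ℕ, 1 ≤ n → ∃ v : V, ‖v‖ = 1 ∧ H ν n v ≤ n * β := by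
    intro n hn
    have hn0 : (0:ℝ) < n := by exact_mod_cast hn
    have hsub : Metric.sphere (0 : V) 1 ⊆ {v | v ≠ 0} := fun v hv => unit_ne (by simpa using hv)
    obtain ⟨v, hv, hmin⟩ := (isCompact_sphere (0 : V) 1).exists_isMinOn
      (NormedSpace.sphere_nonempty.2 zero_le_one) ((H_cont h n).mono hsub)
    have hv1 : ‖v‖ = 1 := by simpa using hv
    refine ⟨v, hv1, ?_⟩
    have : H ν n v / n ∈ S := by
      refine ⟨n, hn, fun u hu => ?_⟩
      rw [mul_div_cancel₀ _ hn0.ne']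
      exact hmin (show u ∈ Metric.sphere (0:V) 1 by simpa using hu)
    have := le_csSup hbdd this
    rw [div_le_iff₀ hn0] at this; linarith
  obtain ⟨v, hv, hup⟩ := exists_slow_vec h β hmin
  obtain ⟨W, hvW, hinv, hW⟩ := slow_subspace h hlow hv hup
  have hWb : W ≠ ⊥ := fun hb => by
    rw [hb] at hvW; exact unit_ne hv (by simpa using hvW)
  obtain ⟨n, hn, hn2⟩ := hW c (by linarith)
  exact ⟨W, hWb, hinv, slow_of_log h hWb hn hn2⟩

/-- The maximal slow invariant subspace. -/
lemma exists_max_slow [Nontrivial V] (h : Good ν m M) {l : ℝ}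
    (hl : Tendsto (fun n : ℕ => (n : ℝ)⁻¹ * ∫ A, Real.log ‖A‖ ∂(cp ν n)) atTop (nhds l)) :
    ∃ W : Submodule ℝ V, (∀ᵐ A ∂ν, A ∈ Pres W) ∧ (∃ c < l, Slow ν W c) ∧ W ≠ ⊤ ∧
      ∀ c' < l, ∃ n : ℕ, 1 ≤ n ∧ ∀ u : Wᗮ, ‖u‖ = 1 → n * c' ≤ H (ν.map (compr W)) n u := by
  let S : Set (Submodule ℝ V) := {W | (∀ᵐ A ∂ν, A ∈ Pres W) ∧ (∃ c < l, Slow ν W c)}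
  have hbot : (⊥ : Submodule ℝ V) ∈ S := by
    refine ⟨Eventually.of_forall fun A w hw => ?_, l - 1, by linarith, slow_bot ν _⟩
    have : w = 0 := by simpa using hw
    subst this; simp
  obtain ⟨W, hWS, hmax⟩ := (wellFounded_gt (α := Submodule ℝ V)).has_min S ⟨⊥, hbot⟩
  obtain ⟨hinv, c, hcl, α, hα0, hα1, C, T, hC, hT, hTs⟩ := hWS
  have htop : W ≠ ⊤ := by
    intro htop
    have hT2 : OneStep ν α C c Set.univ T := ⟨hT.meas, hT.lo, hT.up, fun v _ => hT.step v (by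
      rw [htop]; trivial)⟩
    obtain ⟨C', hC'⟩ := hT2.upper h hα0 hC.le
    have h1 : ∀ᶠ n : ℕ in atTop, (n : ℝ)⁻¹ * ∫ A, Real.log ‖A‖ ∂(cp ν n) ≤ c + C' * (n:ℝ)⁻¹ := by
      filter_upwards [eventually_ge_atTop 1] with n hn
      have hn0 : (0:ℝ) < n := by exact_mod_cast hn
      have := mul_le_mul_of_nonneg_left (hC' n) (inv_nonneg.2 hn0.le)
      refine this.trans (le_of_eq ?_)
      field_simp
    have h2 : Tendsto (fun n : ℕ => c + C' * (n:ℝ)⁻¹) atTop (nhds (c + C' * 0)) :=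
      (tendsto_inv_atTop_nhds_zero_nat.const_mul C').const_add c
    have := le_of_tendsto_of_tendsto hl h2 h1
    linarith
  refine ⟨W, hinv, ⟨c, hcl, α, hα0, hα1, C, T, hC, hT, hTs⟩, htop, ?_⟩
  intro c' hc'
  by_contra hcon
  push Not at hcon
  have hgU := good_compr h hinv
  have : Nontrivial Wᗮ := by
    rw [Submodule.nontrivial_iff_ne_bot]
    intro hb
    exact htop ((Submodule.orthogonal_eq_bot_iff).1 hb)
  obtain ⟨W', hW'b, hinv', α', hα'0, hα'1, C', T', hC', hT', hT's⟩ :=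
    slow_of_low hgU hcon (show c' < (c' + l) / 2 by linarith)
  have e1 := hT.pow h hα0.le hC.le hα'0 hα'1
  have e2 := hT'.pow hgU hα'0.le hC'.le hα0 hα1
  rw [mul_comm α' α] at e2
  obtain ⟨C₃, T₃, hC₃, hT₃, hs₃⟩ := combine (c := max c (((c' + l) / 2 + l) / 2)) h hinv
    (mul_pos hα0 hα'0) (by nlinarith) (Real.rpow_pos_of_pos hC _) (Real.rpow_pos_of_pos hC' _) e1
    (sub_pow hT.nonneg hTs hα'0.le hα'1) e2 (le_max_left _ _)
    (lt_of_lt_of_le (by linarith) (le_max_right _ _))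
  have hs3 := hs₃ (sub_pow hT'.nonneg hT's hα0.le hα1)
  let W'' : Submodule ℝ V := W'.comap (Wᗮ.orthogonalProjectionOnto).toLinearMap
  have hW'' : W'' ∈ S := by
    refine ⟨?_, _, max_lt hcl (by linarith), α * α', mul_pos hα0 hα'0, by nlinarith, C₃, T₃, hC₃, hT₃, hs3⟩
    have hinv2 : ∀ᵐ A ∂ν, compr W A ∈ Pres W' :=
      ae_of_ae_map (compr_cont W).measurable.aemeasurable hinv'
    filter_upwards [hinv, hinv2] with A h1 h2 v hv
    have hv : Wᗮ.orthogonalProjectionOnto v ∈ W' := hv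
    show Wᗮ.orthogonalProjectionOnto (A v) ∈ W'
    rw [proj_comp h1]
    exact h2 _ hv
  refine hmax W'' hW'' (lt_of_le_of_ne ?_ ?_)
  · intro w hw
    show Wᗮ.orthogonalProjectionOnto w ∈ W'
    rw [proj_W W hw]; exact W'.zero_mem
  · intro heq
    obtain ⟨u, hu, hu0⟩ := W'.ne_bot_iff.1 hW'b
    have h1 : (u : V) ∈ W'' := by
      show Wᗮ.orthogonalProjectionOnto (u : V) ∈ W'
      rw [Submodule.orthogonalProjectionOnto_mem_subspace_eq_self]; exact hu
    rw [← heq] at h1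
    have h2 := u.2 (u : V) h1
    exact hu0 (by simpa using h2)

/-- Lower growth bounds propagate to multiples. -/
lemma H_mul_low (h : Good ν m M) {n : ℕ} {c : ℝ} (hlow : ∀ v : V, ‖v‖ = 1 → n * c ≤ H ν n v) (k : ℕ) :
    ∀ v : V, v ≠ 0 → (k * n : ℕ) * c + Real.log ‖v‖ ≤ H ν (k * n) v := by
  induction k with
  | zero => intro v hv; simp [H_zero]
  | succ k ih =>
    intro v hv
    have := (h.cp n).prob
    rw [show (k + 1) * n = k * n + n by ring, H_add h _ _ hv]
    have hi := (h.cp n).int_log hv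
    have hi2 : Integrable (fun B : V →L[ℝ] V => H ν (k * n) (B v)) (cp ν n) := by
      have hmeas : Measurable (fun B : V →L[ℝ] V => H ν (k * n) (B v)) := by
        have hm : Measurable (H ν (k * n)) := by
          have := (h.cp (k * n)).prob
          have hc : Continuous (fun p : V × (V →L[ℝ] V) => ‖p.2 p.1‖) := by fun_prop
          exact ((Real.measurable_log.comp hc.measurable).stronglyMeasurable.integral_prod_right'
            (ν := cp ν (k * n))).measurable
        exact hm.comp (meas_app v)
      refine (h.cp n).integrable (C := |(k * n : ℕ) * Real.log m| + |(k * n : ℕ) * Real.log M| +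
        (|Real.log (m ^ n)| + |Real.log (M ^ n)| + |Real.log ‖v‖|)) hmeas fun B hB => ?_
      have h1 := H_bd h (k * n) (Bd_ne (h.cp n).m0 hB hv)
      have h2 := log_bd (h.cp n).m0 hB hv
      rw [abs_le] at h2 ⊢
      constructor
      · linarith [neg_abs_le ((k * n : ℕ) * Real.log m), abs_nonneg ((k * n : ℕ) * Real.log M)]
      · linarith [le_abs_self ((k * n : ℕ) * Real.log M), abs_nonneg ((k * n : ℕ) * Real.log m)]
    calc ((k * n + n : ℕ) : ℝ) * c + Real.log ‖v‖ ≤ (k * n : ℕ) * c + H ν n v := by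
          rw [H_normalize h n hv]
          have := hlow _ (norm_unit hv)
          push_cast; linarith
      _ = ∫ B, ((k * n : ℕ) * c + Real.log ‖B v‖) ∂(cp ν n) := by
          rw [integral_add (integrable_const _) hi]; simp [H]
      _ ≤ _ := by
          refine integral_mono_ae ((integrable_const _).add hi) hi2 ?_
          filter_upwards [(h.cp n).ae] with B hB using ih _ (Bd_ne (h.cp n).m0 hB hv)

end D3

section area
variable {E F : Type*} [NormedAddCommGroup E] [InnerProductSpace ℝ E]
  [NormedAddCommGroup F] [InnerProductSpace ℝ F]

/-- squared area -/
def area2 (x y : E) : ℝ := ‖x‖ ^ 2 * ‖y‖ ^ 2 - (inner ℝ x y : ℝ) ^ 2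

/-- area of the parallelogram -/
def area (x y : E) : ℝ := Real.sqrt (area2 x y)

lemma area2_nonneg (x y : E) : 0 ≤ area2 x y := by
  unfold area2
  have := abs_real_inner_le_norm x y
  have h2 : (inner ℝ x y : ℝ) ^ 2 ≤ (‖x‖ * ‖y‖) ^ 2 := by
    rw [← sq_abs (inner ℝ x y : ℝ)]; gcongr
  nlinarith

lemma area_nonneg (x y : E) : 0 ≤ area x y := Real.sqrt_nonneg _

lemma area_sq (x y : E) : area x y ^ 2 = area2 x y := Real.sq_sqrt (area2_nonneg x y)

lemma area2_shear (x y : E) (c : ℝ) : area2 x (y - c • x) = area2 x y := by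
  unfold area2
  rw [norm_sub_sq_real, inner_sub_right, inner_smul_right, inner_smul_right,
    real_inner_self_eq_norm_sq, norm_smul, mul_pow, Real.norm_eq_abs, sq_abs, real_inner_comm y x]
  ring

lemma area2_smul (x y : E) (s t : ℝ) : area2 (s • x) (t • y) = (s * t) ^ 2 * area2 x y := by
  unfold area2
  rw [norm_smul, norm_smul, inner_smul_left, inner_smul_right, mul_pow, mul_pow, Real.norm_eq_abs,
    Real.norm_eq_abs, sq_abs, sq_abs]
  simp only [conj_trivial]
  ring

lemma area2_le (x y : E) : area2 x y ≤ ‖x‖ ^ 2 * ‖y‖ ^ 2 := by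
  unfold area2; nlinarith [sq_nonneg (inner ℝ x y : ℝ)]

lemma area_le (x y : E) : area x y ≤ ‖x‖ * ‖y‖ := by
  unfold area
  rw [Real.sqrt_le_left (by positivity)]
  have := area2_le x y; nlinarith

/-- orthogonalisation -/
lemma area2_perp {x : E} (hx : x ≠ 0) (y : E) :
    ∃ c : ℝ, inner ℝ x (y - c • x) = (0:ℝ) ∧ area2 x y = ‖x‖ ^ 2 * ‖y - c • x‖ ^ 2 := by
  have hx2 : ‖x‖ ^ 2 ≠ 0 := pow_ne_zero 2 (norm_ne_zero_iff.2 hx)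
  refine ⟨inner ℝ x y / ‖x‖ ^ 2, ?_⟩
  have h1 : inner ℝ x (y - (inner ℝ x y / ‖x‖ ^ 2 : ℝ) • x) = (0:ℝ) := by
    rw [inner_sub_right, inner_smul_right, real_inner_self_eq_norm_sq]
    field_simp; ring
  refine ⟨h1, ?_⟩
  rw [← area2_shear x y (inner ℝ x y / ‖x‖ ^ 2)]
  unfold area2
  rw [h1]; ring

lemma area2_zero (y : E) : area2 0 y = 0 := by simp [area2]

lemma area2_map_le {K : ℝ} (A : E →L[ℝ] F) (hA : ∀ p q : E, ‖p‖ = 1 → ‖q‖ = 1 →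
    inner ℝ p q = (0:ℝ) → area2 (A p) (A q) ≤ K) (x y : E) : area2 (A x) (A y) ≤ K * area2 x y := by
  by_cases hx : x = 0
  · subst hx; simp [area2_zero]
  obtain ⟨c, hc, hc2⟩ := area2_perp hx y
  have e1 : A (y - c • x) = A y - c • A x := by simp
  rw [← area2_shear (A x) (A y) c, ← e1]
  set z := y - c • x with hz
  by_cases hz0 : z = 0
  · rw [hc2, hz0]; simp [area2]
  have hxn := norm_ne_zero_iff.2 hx
  have hzn := norm_ne_zero_iff.2 hz0
  have ex : x = ‖x‖ • (‖x‖⁻¹ • x) := by rw [smul_smul, mul_inv_cancel₀ hxn, one_smul]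
  have ez : z = ‖z‖ • (‖z‖⁻¹ • z) := by rw [smul_smul, mul_inv_cancel₀ hzn, one_smul]
  have e2 : area2 (A x) (A z) = (‖x‖ * ‖z‖) ^ 2 * area2 (A (‖x‖⁻¹ • x)) (A (‖z‖⁻¹ • z)) := by
    rw [← area2_smul, ← map_smul, ← map_smul, ← ex, ← ez]
  have h3 := hA (‖x‖⁻¹ • x) (‖z‖⁻¹ • z) (by rw [norm_smul, norm_inv, norm_norm, inv_mul_cancel₀ hxn])
    (by rw [norm_smul, norm_inv, norm_norm, inv_mul_cancel₀ hzn])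
    (by rw [inner_smul_left, inner_smul_right, hc]; simp)
  rw [e2, hc2]
  calc _ ≤ (‖x‖ * ‖z‖) ^ 2 * K := mul_le_mul_of_nonneg_left h3 (sq_nonneg _)
    _ = _ := by ring

lemma area2_contr (L : E →L[ℝ] F) (hL : ∀ v, ‖L v‖ ≤ ‖v‖) (x y : E) :
    area2 (L x) (L y) ≤ area2 x y := by
  have := area2_map_le (K := 1) L (fun p q hp hq _ => by
    refine (area2_le _ _).trans ?_
    have h1 := hL p; have h2 := hL q
    rw [hp] at h1; rw [hq] at h2
    have h3 := norm_nonneg (L p); have h4 := norm_nonneg (L q)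
    have h5 : ‖L p‖ ^ 2 ≤ 1 := by nlinarith
    have h6 : ‖L q‖ ^ 2 ≤ 1 := by nlinarith
    nlinarith [sq_nonneg ‖L p‖, sq_nonneg ‖L q‖]) x y
  linarith

lemma area2_lower {m : ℝ} (hm : 0 ≤ m) (A : E →L[ℝ] F) (hA : ∀ v, m * ‖v‖ ≤ ‖A v‖) {p q : E}
    (hp : ‖p‖ = 1) (hq : ‖q‖ = 1) (hpq : inner ℝ p q = (0:ℝ)) : (m ^ 2) ^ 2 ≤ area2 (A p) (A q) := by
  by_cases h0 : A p = 0
  · have := hA p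
    rw [h0, hp] at this
    have hm0 : m = 0 := by simp at this; linarith
    rw [h0, area2_zero, hm0]; simp
  obtain ⟨c, _, hc⟩ := area2_perp h0 (A q)
  have h1 := hA p
  have h2 := hA (q - c • p)
  have e : A (q - c • p) = A q - c • A p := by simp
  rw [e] at h2
  rw [hp, mul_one] at h1
  have h3 : 1 ≤ ‖q - c • p‖ := by
    have := norm_sub_sq_real q (c • p)
    rw [inner_smul_right, real_inner_comm, hpq, hq] at this
    have h4 : (1:ℝ) ^ 2 ≤ ‖q - c • p‖ ^ 2 := by nlinarith [sq_nonneg ‖c • p‖]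
    exact le_of_sq_le_sq h4 (norm_nonneg _)
  have h5 : m ≤ ‖A q - c • A p‖ := le_trans (by nlinarith) h2
  rw [hc]
  calc (m ^ 2) ^ 2 = m ^ 2 * m ^ 2 := by ring
    _ ≤ _ := by gcongr

lemma area2_cont : Continuous (fun p : E × E => area2 p.1 p.2) := by
  unfold area2; fun_prop

end area

section n2
variable {V : Type*} [NormedAddCommGroup V] [InnerProductSpace ℝ V] [FiniteDimensional ℝ V]
  [MeasurableSpace V] [BorelSpace V]
variable {ν : Measure (V →L[ℝ] V)} {m M : ℝ}

/-- product of the two largest singular values -/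
def n2 (A : V →L[ℝ] V) : ℝ :=
  sSup { x | ∃ p q : V, ‖p‖ = 1 ∧ ‖q‖ = 1 ∧ (inner ℝ p q : ℝ) = 0 ∧
    x = Real.sqrt (‖A p‖ ^ 2 * ‖A q‖ ^ 2 - (inner ℝ (A p) (A q) : ℝ) ^ 2) }

lemma area_opNorm (A : V →L[ℝ] V) {p q : V} (hp : ‖p‖ = 1) (hq : ‖q‖ = 1) :
    area (A p) (A q) ≤ ‖A‖ ^ 2 := by
  refine (area_le _ _).trans ?_
  have h1 := A.le_opNorm p
  have h2 := A.le_opNorm q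
  rw [hp, mul_one] at h1; rw [hq, mul_one] at h2
  rw [sq]; gcongr

lemma n2_bdd (A : V →L[ℝ] V) : BddAbove { x | ∃ p q : V, ‖p‖ = 1 ∧ ‖q‖ = 1 ∧ (inner ℝ p q : ℝ) = 0 ∧
    x = Real.sqrt (‖A p‖ ^ 2 * ‖A q‖ ^ 2 - (inner ℝ (A p) (A q) : ℝ) ^ 2) } := by
  refine ⟨‖A‖ ^ 2, ?_⟩
  rintro x ⟨p, q, hp, hq, _, rfl⟩
  exact area_opNorm A hp hq

lemma le_n2 (A : V →L[ℝ] V) {p q : V} (hp : ‖p‖ = 1) (hq : ‖q‖ = 1) (hpq : inner ℝ p q = (0:ℝ)) :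
    area (A p) (A q) ≤ n2 A := le_csSup (n2_bdd A) ⟨p, q, hp, hq, hpq, rfl⟩

lemma n2_nonneg (A : V →L[ℝ] V) : 0 ≤ n2 A := by
  refine Real.sSup_nonneg ?_
  rintro x ⟨p, q, _, _, _, rfl⟩
  exact Real.sqrt_nonneg _

lemma n2_le {A : V →L[ℝ] V} {c : ℝ} (hc : 0 ≤ c) (hA : ∀ p q : V, ‖p‖ = 1 → ‖q‖ = 1 →
    inner ℝ p q = (0:ℝ) → area (A p) (A q) ≤ c) : n2 A ≤ c := by
  refine Real.sSup_le ?_ hc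
  rintro x ⟨p, q, hp, hq, hpq, rfl⟩
  exact hA p q hp hq hpq

lemma area_n2 (A : V →L[ℝ] V) (x y : V) : area (A x) (A y) ≤ n2 A * area x y := by
  have h := area2_map_le (K := n2 A ^ 2) A (fun p q hp hq hpq => by
    rw [← area_sq]
    have := le_n2 A hp hq hpq
    have h0 := area_nonneg (A p) (A q)
    gcongr) x y
  rw [← area_sq, ← area_sq, ← mul_pow] at h
  exact le_of_sq_le_sq h (mul_nonneg (n2_nonneg _) (area_nonneg _ _))

lemma n2_mul (A B : V →L[ℝ] V) : n2 (A * B) ≤ n2 A * n2 B := by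
  refine n2_le (mul_nonneg (n2_nonneg _) (n2_nonneg _)) fun p q hp hq hpq => ?_
  exact (area_n2 A (B p) (B q)).trans (mul_le_mul_of_nonneg_left (le_n2 B hp hq hpq) (n2_nonneg _))

lemma n2_meas : Measurable (n2 : (V →L[ℝ] V) → ℝ) := by
  refine measurable_of_Iic fun c => ?_
  by_cases hc : 0 ≤ c
  · have : n2 ⁻¹' Set.Iic c = ⋂ (p : V) (q : V) (_ : ‖p‖ = 1 ∧ ‖q‖ = 1 ∧ inner ℝ p q = (0:ℝ)),
        {A : V →L[ℝ] V | area (A p) (A q) ≤ c} := by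
      ext A
      simp only [Set.mem_preimage, Set.mem_Iic, Set.mem_iInter, Set.mem_ofPred_eq]
      constructor
      · intro h p q hpq; exact (le_n2 A hpq.1 hpq.2.1 hpq.2.2).trans h
      · intro h; exact n2_le hc fun p q hp hq hpq => h p q ⟨hp, hq, hpq⟩
    rw [this]
    refine IsClosed.measurableSet (isClosed_iInter fun p => isClosed_iInter fun q => isClosed_iInter fun _ => ?_)
    refine isClosed_le ?_ continuous_const
    unfold area area2; fun_prop
  · have : n2 ⁻¹' Set.Iic c = (∅ : Set (V →L[ℝ] V)) := by
      ext A; simp only [Set.mem_preimage, Set.mem_Iic, Set.mem_empty_iff_false, iff_false]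
      intro h; exact hc ((n2_nonneg A).trans h)
    rw [this]; exact MeasurableSet.empty

lemma n2_Bd (h2 : ∃ p q : V, ‖p‖ = 1 ∧ ‖q‖ = 1 ∧ inner ℝ p q = (0:ℝ)) (hm : 0 ≤ m) (hM : 0 ≤ M)
    {A : V →L[ℝ] V} (hA : A ∈ Bd m M) : m ^ 2 ≤ n2 A ∧ n2 A ≤ M ^ 2 := by
  constructor
  · obtain ⟨p, q, hp, hq, hpq⟩ := h2
    refine le_trans ?_ (le_n2 A hp hq hpq)
    have := area2_lower hm A (fun v => (hA v).1) hp hq hpq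
    rw [← area_sq] at this
    exact le_of_sq_le_sq this (area_nonneg _ _)
  · refine n2_le (sq_nonneg _) fun p q hp hq _ => (area_opNorm A hp hq).trans ?_
    have := Bd_norm hM hA
    gcongr

lemma logn2_bd (h2 : ∃ p q : V, ‖p‖ = 1 ∧ ‖q‖ = 1 ∧ inner ℝ p q = (0:ℝ)) (hm : 0 < m) (hM : 0 ≤ M)
    {A : V →L[ℝ] V} (hA : A ∈ Bd m M) : |Real.log (n2 A)| ≤ 2 * (|Real.log m| + |Real.log M|) := by
  have h := n2_Bd h2 hm.le hM hA
  have hm2 : 0 < m ^ 2 := by positivity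
  have e1 := Real.log_le_log hm2 h.1
  have e2 := Real.log_le_log (hm2.trans_le h.1) h.2
  rw [Real.log_pow] at e1 e2
  push_cast at e1 e2
  rw [abs_le]
  constructor
  · linarith [neg_abs_le (Real.log m), abs_nonneg (Real.log M)]
  · linarith [le_abs_self (Real.log M), abs_nonneg (Real.log m)]

/-- Kingman for means. -/
lemma subadd_lim (h : Good ν m M) {f : (V →L[ℝ] V) → ℝ} (hf : Measurable f) {K : ℝ}
    (hb : ∀ n : ℕ, ∀ A ∈ (Bd (m ^ n) (M ^ n) : Set (V →L[ℝ] V)), |f A| ≤ K * n)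
    (hsub : ∀ a b : ℕ, ∀ A ∈ (Bd (m ^ a) (M ^ a) : Set (V →L[ℝ] V)),
      ∀ B ∈ (Bd (m ^ b) (M ^ b) : Set (V →L[ℝ] V)), f (A * B) ≤ f A + f B) :
    ∃ l : ℝ, Tendsto (fun n : ℕ => (n : ℝ)⁻¹ * ∫ A, f A ∂(cp ν n)) atTop (nhds l) := by
  have hi : ∀ n, Integrable f (cp ν n) := fun n => (h.cp n).integrable hf (hb n)
  have hs : Subadditive (fun n : ℕ => ∫ A, f A ∂(cp ν n)) := by
    intro a b
    have := (h.cp a).prob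
    have := (h.cp b).prob
    have hg := h.prob
    beta_reduce
    rw [h.integral_add hf (hb (a + b))]
    have hin : ∀ᵐ B ∂(cp ν b), ∫ A, f (A * B) ∂(cp ν a) ≤ ∫ A, f A ∂(cp ν a) + f B := by
      filter_upwards [(h.cp b).ae] with B hB
      calc ∫ A, f (A * B) ∂(cp ν a) ≤ ∫ A, (f A + f B) ∂(cp ν a) := by
            refine integral_mono_ae ?_ ((hi a).add (integrable_const _)) ?_
            · refine (h.cp a).integrable (C := K * (a + b : ℕ)) (hf.comp (by fun_prop)) fun A hA => ?_
              refine hb (a + b) _ ?_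
              rw [pow_add, pow_add]
              exact Bd_mul (h.cp a).m0.le (h.cp a).M0.le hA hB
            · filter_upwards [(h.cp a).ae] with A hA using hsub a b A hA B hB
        _ = _ := by rw [integral_add (hi a) (integrable_const _)]; simp
    have hintg : Integrable (fun B : V →L[ℝ] V => ∫ A, f (A * B) ∂(cp ν a)) (cp ν b) := by
      have hm : Measurable (fun B : V →L[ℝ] V => ∫ A, f (A * B) ∂(cp ν a)) := by
        have : Measurable (fun p : (V →L[ℝ] V) × (V →L[ℝ] V) => f (p.2 * p.1)) :=
          hf.comp (by fun_prop)
        exact (this.stronglyMeasurable.integral_prod_right' (ν := cp ν a)).measurable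
      refine (h.cp b).integrable (C := K * (a + b : ℕ)) hm fun B hB => ?_
      have := norm_integral_le_of_norm_le_const (μ := cp ν a) (f := fun A => f (A * B))
        (C := K * (a + b : ℕ)) (by
          filter_upwards [(h.cp a).ae] with A hA
          refine hb (a + b) _ ?_
          rw [pow_add, pow_add]
          exact Bd_mul (h.cp a).m0.le (h.cp a).M0.le hA hB)
      simpa using this
    calc _ ≤ ∫ B, (∫ A, f A ∂(cp ν a) + f B) ∂(cp ν b) :=
          integral_mono_ae hintg ((integrable_const _).add (hi b)) hin
      _ = _ := by rw [integral_add (integrable_const _) (hi b)]; simp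
  have hK : ∀ n : ℕ, |∫ A, f A ∂(cp ν n)| ≤ K * n := by
    intro n
    have := (h.cp n).prob
    have := norm_integral_le_of_norm_le_const (μ := cp ν n) (f := f) (C := K * n) (by
      filter_upwards [(h.cp n).ae] with A hA using hb n A hA)
    simpa using this
  refine ⟨hs.lim, ?_⟩
  have := hs.tendsto_lim ⟨-|K|, ?_⟩
  · refine this.congr fun n => ?_
    rw [div_eq_inv_mul]
  · rintro x ⟨n, rfl⟩
    rcases Nat.eq_zero_or_pos n with rfl | hn
    · simp
    · have hn0 : (0:ℝ) < n := by exact_mod_cast hn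
      show -|K| ≤ (∫ A, f A ∂(cp ν n)) / n
      rw [le_div_iff₀ hn0]
      have h1 := (abs_le.1 (hK n)).1
      nlinarith [le_abs_self K]

lemma log_pow_abs (x : ℝ) (n : ℕ) : |Real.log (x ^ n)| = |Real.log x| * n := by
  rw [Real.log_pow, abs_mul, Nat.abs_cast, mul_comm]

lemma lim_norm [Nontrivial V] (h : Good ν m M) :
    ∃ l : ℝ, Tendsto (fun n : ℕ => (n : ℝ)⁻¹ * ∫ A, Real.log ‖A‖ ∂(cp ν n)) atTop (nhds l) := by
  refine subadd_lim h (Real.measurable_log.comp continuous_norm.measurable)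
    (K := |Real.log m| + |Real.log M|) ?_ ?_
  · intro n A hA
    have := lognorm_bd (h.cp n).m0 (h.cp n).M0.le hA
    rw [log_pow_abs, log_pow_abs] at this
    linarith
  · intro a b A hA B hB
    have h1 := (h.cp a).m0.trans_le (norm_bd (h.cp a).M0.le hA).1
    have h2 := (h.cp b).m0.trans_le (norm_bd (h.cp b).M0.le hB).1
    have h3 := (mul_pos (h.cp a).m0 (h.cp b).m0).trans_le
      (norm_bd (by have := (h.cp a).M0; have := (h.cp b).M0; positivity)
        (Bd_mul (h.cp a).m0.le (h.cp a).M0.le hA hB)).1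
    show Real.log ‖A * B‖ ≤ Real.log ‖A‖ + Real.log ‖B‖
    rw [← Real.log_mul h1.ne' h2.ne']
    exact Real.log_le_log h3 (norm_mul_le _ _)

lemma lim_n2 (h2 : ∃ p q : V, ‖p‖ = 1 ∧ ‖q‖ = 1 ∧ inner ℝ p q = (0:ℝ)) (h : Good ν m M) :
    ∃ l : ℝ, Tendsto (fun n : ℕ => (n : ℝ)⁻¹ * ∫ A, Real.log (n2 A) ∂(cp ν n)) atTop (nhds l) := by
  refine subadd_lim h (Real.measurable_log.comp n2_meas)
    (K := 2 * (|Real.log m| + |Real.log M|)) ?_ ?_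
  · intro n A hA
    have := logn2_bd h2 (h.cp n).m0 (h.cp n).M0.le hA
    rw [log_pow_abs, log_pow_abs] at this
    show |Real.log (n2 A)| ≤ _
    linarith
  · intro a b A hA B hB
    have pa := (h.cp a).m0
    have pb := (h.cp b).m0
    have qa := (h.cp a).M0
    have qb := (h.cp b).M0
    have h1 : 0 < n2 A := lt_of_lt_of_le (by positivity) (n2_Bd h2 pa.le qa.le hA).1
    have h2' : 0 < n2 B := lt_of_lt_of_le (by positivity) (n2_Bd h2 pb.le qb.le hB).1
    have h3 : 0 < n2 (A * B) := lt_of_lt_of_le (by positivity)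
      (n2_Bd h2 (mul_pos pa pb).le (mul_pos qa qb).le (Bd_mul pa.le qa.le hA hB)).1
    show Real.log (n2 (A * B)) ≤ Real.log (n2 A) + Real.log (n2 B)
    rw [← Real.log_mul h1.ne' h2'.ne']
    exact Real.log_le_log h3 (n2_mul _ _)

end n2

section dl
variable {V : Type*} [NormedAddCommGroup V] [InnerProductSpace ℝ V] [FiniteDimensional ℝ V]
  [MeasurableSpace V] [BorelSpace V]
variable {ν : Measure (V →L[ℝ] V)} {m M : ℝ}

/-- projective distance -/
def dl (x y : V) : ℝ := area x y / (‖x‖ * ‖y‖)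

lemma dl_nonneg (x y : V) : 0 ≤ dl x y := div_nonneg (area_nonneg _ _) (by positivity)

lemma dl_le_one (x y : V) : dl x y ≤ 1 := div_le_one_of_le₀ (area_le _ _) (by positivity)

lemma dlp_nonneg (x y : V) (α : ℝ) : 0 ≤ dl x y ^ α := Real.rpow_nonneg (dl_nonneg _ _) _

lemma dlp_le_one (x y : V) {α : ℝ} (hα : 0 ≤ α) : dl x y ^ α ≤ 1 :=
  Real.rpow_le_one (dl_nonneg _ _) (dl_le_one _ _) hα

lemma dl_meas : Measurable (fun p : V × V => dl p.1 p.2) := by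
  unfold dl area
  refine Measurable.div ?_ ?_
  · exact (Real.continuous_sqrt.comp area2_cont).measurable
  · exact (Continuous.mul (by fun_prop) (by fun_prop)).measurable

lemma dlp_meas (x y : V) (α : ℝ) : Measurable (fun A : V →L[ℝ] V => dl (A x) (A y) ^ α) := by
  have h1 : Measurable (fun A : V →L[ℝ] V => (A x, A y)) := (meas_app x).prodMk (meas_app y)
  exact (dl_meas.comp h1).pow_const α

lemma dlp_int (h : Good ν m M) (x y : V) {α : ℝ} (hα : 0 ≤ α) :
    Integrable (fun A : V →L[ℝ] V => dl (A x) (A y) ^ α) ν :=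
  h.integrable (C := 1) (dlp_meas x y α) fun A _ => by
    rw [abs_of_nonneg (dlp_nonneg _ _ _)]; exact dlp_le_one _ _ hα

lemma dl_lip (hm : 0 < m) (hM : 0 ≤ M) {A : V →L[ℝ] V} (hA : A ∈ Bd m M) {x y : V} (hx : x ≠ 0)
    (hy : y ≠ 0) : dl (A x) (A y) ≤ (M / m) ^ 2 * dl x y := by
  have h1 : area (A x) (A y) ≤ M ^ 2 * area x y := by
    refine (area_n2 A x y).trans (mul_le_mul_of_nonneg_right ?_ (area_nonneg _ _))
    refine n2_le (sq_nonneg _) fun p q hp hq _ => (area_opNorm A hp hq).trans ?_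
    have := Bd_norm hM hA
    gcongr
  have hx' := norm_pos_iff.2 hx
  have hy' := norm_pos_iff.2 hy
  have h2 : m ^ 2 * (‖x‖ * ‖y‖) ≤ ‖A x‖ * ‖A y‖ := by
    calc m ^ 2 * (‖x‖ * ‖y‖) = (m * ‖x‖) * (m * ‖y‖) := by ring
      _ ≤ _ := mul_le_mul (hA x).1 (hA y).1 (by positivity) (norm_nonneg _)
  unfold dl
  calc area (A x) (A y) / (‖A x‖ * ‖A y‖) ≤ (M ^ 2 * area x y) / (m ^ 2 * (‖x‖ * ‖y‖)) := by
        apply div_le_div₀ (mul_nonneg (sq_nonneg _) (area_nonneg _ _)) h1 (by positivity) h2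
    _ = _ := by field_simp

lemma dlp_lip (hm : 0 < m) (hM : 0 ≤ M) (hmM : m ≤ M) {A : V →L[ℝ] V} (hA : A ∈ Bd m M) {x y : V} (hx : x ≠ 0)
    (hy : y ≠ 0) {α : ℝ} (hα : 0 ≤ α) (hα1 : α ≤ 1) : dl (A x) (A y) ^ α ≤ (M / m) ^ 2 * dl x y ^ α := by
  have h1 : 1 ≤ (M / m) ^ 2 := one_le_pow₀ ((one_le_div hm).2 hmM)
  calc dl (A x) (A y) ^ α ≤ ((M / m) ^ 2 * dl x y) ^ α :=
        Real.rpow_le_rpow (dl_nonneg _ _) (dl_lip hm hM hA hx hy) hα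
    _ = ((M / m) ^ 2) ^ α * dl x y ^ α := Real.mul_rpow (by positivity) (dl_nonneg _ _)
    _ ≤ _ := by
        refine mul_le_mul_of_nonneg_right ?_ (dlp_nonneg _ _ _)
        calc ((M / m) ^ 2) ^ α ≤ ((M / m) ^ 2) ^ (1:ℝ) := Real.rpow_le_rpow_of_exponent_le h1 hα1
          _ = _ := Real.rpow_one _

lemma dlp_add (h : Good ν m M) {α : ℝ} (hα : 0 ≤ α) (a b : ℕ) (x y : V) :
    ∫ A, dl (A x) (A y) ^ α ∂(cp ν (a + b)) =
      ∫ B, ∫ A, dl (A (B x)) (A (B y)) ^ α ∂(cp ν a) ∂(cp ν b) := by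
  rw [h.integral_add (C := 1) (dlp_meas x y α) fun A _ => by
    rw [abs_of_nonneg (dlp_nonneg _ _ _)]; exact dlp_le_one _ _ hα]
  rfl

/-- From `n`-step contraction to exponential contraction. -/
lemma contr_iter (h : Good ν m M) {n : ℕ} (hn : 1 ≤ n) {α θ : ℝ} (hα : 0 < α) (hα1 : α ≤ 1)
    (hθ : 0 < θ) (hθ1 : θ < 1) (hc : ∀ x y : V, x ≠ 0 → y ≠ 0 →
      ∫ A, dl (A x) (A y) ^ α ∂(cp ν n) ≤ θ * dl x y ^ α) :
    ∃ K ρ : ℝ, 0 < K ∧ 0 < ρ ∧ ρ < 1 ∧ ∀ (k : ℕ) (x y : V), x ≠ 0 → y ≠ 0 →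
      ∫ A, dl (A x) (A y) ^ α ∂(cp ν k) ≤ K * ρ ^ k * dl x y ^ α := by
  have hmul : ∀ (q : ℕ) (x y : V), x ≠ 0 → y ≠ 0 →
      ∫ A, dl (A x) (A y) ^ α ∂(cp ν (q * n)) ≤ θ ^ q * dl x y ^ α := by
    intro q
    induction q with
    | zero => intro x y _ _; unfold cp; simp only [Nat.zero_mul]; rw [integral_dirac]; simp
    | succ q ih =>
      intro x y hx hy
      rw [show (q + 1) * n = q * n + n by ring, dlp_add h hα.le]
      calc _ ≤ ∫ B, θ ^ q * dl (B x) (B y) ^ α ∂(cp ν n) := by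
            refine integral_mono_of_nonneg (Eventually.of_forall fun B =>
              integral_nonneg fun A => dlp_nonneg _ _ _) ((dlp_int (h.cp n) x y hα.le).const_mul _) ?_
            filter_upwards [(h.cp n).ae] with B hB
            exact ih _ _ (Bd_ne (h.cp n).m0 hB hx) (Bd_ne (h.cp n).m0 hB hy)
        _ = θ ^ q * ∫ B, dl (B x) (B y) ^ α ∂(cp ν n) := integral_const_mul _ _
        _ ≤ θ ^ q * (θ * dl x y ^ α) := mul_le_mul_of_nonneg_left (hc x y hx hy) (by positivity)
        _ = _ := by ring
  have hMm : 1 ≤ M / m := (one_le_div h.m0).2 (h.m1.trans h.M1)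
  set κ := ((M / m) ^ n) ^ 2 with hκ
  have hκ0 : 0 < κ := by have := h.m0; have := h.M0; positivity
  have hn0 : (n:ℝ) ≠ 0 := by positivity
  set ρ := θ ^ ((n:ℝ)⁻¹) with hρ
  have hρ0 : 0 < ρ := Real.rpow_pos_of_pos hθ _
  have hρ1 : ρ < 1 := Real.rpow_lt_one hθ.le hθ1 (by positivity)
  have hρn : ρ ^ n = θ := by
    rw [hρ, ← Real.rpow_natCast, ← Real.rpow_mul hθ.le, inv_mul_cancel₀ hn0, Real.rpow_one]
  refine ⟨κ / θ, ρ, by positivity, hρ0, hρ1, fun k x y hx hy => ?_⟩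
  have hk : k = k / n * n + k % n := (Nat.div_add_mod' k n).symm
  set q := k / n with hq
  set r := k % n with hr
  have hrn : r < n := Nat.mod_lt _ hn
  have h1 : ∫ A, dl (A x) (A y) ^ α ∂(cp ν k) ≤ θ ^ q * (κ * dl x y ^ α) := by
    rw [hk, dlp_add h hα.le]
    calc _ ≤ ∫ B, θ ^ q * (κ * dl x y ^ α) ∂(cp ν r) := by
          have := (h.cp r).prob
          refine integral_mono_of_nonneg (Eventually.of_forall fun B =>
            integral_nonneg fun A => dlp_nonneg _ _ _) (integrable_const _) ?_
          filter_upwards [(h.cp r).ae] with B hB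
          refine (hmul q _ _ (Bd_ne (h.cp r).m0 hB hx) (Bd_ne (h.cp r).m0 hB hy)).trans ?_
          refine mul_le_mul_of_nonneg_left ?_ (by positivity)
          have := dlp_lip (h.cp r).m0 (h.cp r).M0.le ((h.cp r).m1.trans (h.cp r).M1) hB hx hy hα.le hα1
          refine this.trans (mul_le_mul_of_nonneg_right ?_ (dlp_nonneg _ _ _))
          rw [← div_pow, hκ]
          have : (M / m) ^ r ≤ (M / m) ^ n := pow_le_pow_right₀ hMm hrn.le
          have h0 : 0 ≤ (M / m) ^ r := by have := h.m0; have := h.M0; positivity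
          gcongr
      _ = _ := by have := (h.cp r).prob; simp
  refine h1.trans ?_
  have h2 : θ ^ q ≤ ρ ^ k / θ := by
    rw [le_div_iff₀ hθ, ← pow_succ, ← hρn, ← pow_mul]
    refine pow_le_pow_of_le_one hρ0.le hρ1.le ?_
    rw [hk]; nlinarith
  calc θ ^ q * (κ * dl x y ^ α) ≤ ρ ^ k / θ * (κ * dl x y ^ α) :=
        mul_le_mul_of_nonneg_right h2 (mul_nonneg hκ0.le (dlp_nonneg _ _ _))
    _ = _ := by ring

/-- choice of a small exponent -/
lemma small_exp {B η : ℝ} (hB : 0 ≤ B) (hη : 0 < η) :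
    ∃ α : ℝ, 0 < α ∧ α ≤ 1 ∧ α * B ≤ 1 ∧ α * B ^ 2 ≤ η ∧ α * η ≤ 1 := by
  refine ⟨min 1 (min (1 / (B + 1)) (min (η / (B ^ 2 + 1)) (1 / η))), by positivity, min_le_left _ _, ?_, ?_, ?_⟩
  · calc _ ≤ 1 / (B + 1) * B := by
          gcongr; exact (min_le_right _ _).trans (min_le_left _ _)
      _ ≤ 1 := by rw [one_div_mul_eq_div, div_le_one (by positivity)]; linarith
  · calc _ ≤ η / (B ^ 2 + 1) * B ^ 2 := by
          gcongr; exact (min_le_right _ _).trans ((min_le_right _ _).trans (min_le_left _ _))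
      _ ≤ η := by
          rw [div_mul_eq_mul_div, div_le_iff₀ (by positivity)]; nlinarith
  · calc _ ≤ 1 / η * η := by
          gcongr; exact (min_le_right _ _).trans ((min_le_right _ _).trans (min_le_right _ _))
      _ ≤ 1 := by rw [one_div_mul_cancel hη.ne']

lemma contr_main {W : Submodule ℝ V} (h : Good ν m M) (hinv : ∀ᵐ A ∂ν, A ∈ Pres W)
    (h2 : ∃ p q : V, ‖p‖ = 1 ∧ ‖q‖ = 1 ∧ inner ℝ p q = (0:ℝ)) {l l12 : ℝ}
    (hl12 : Tendsto (fun n : ℕ => (n : ℝ)⁻¹ * ∫ A, Real.log (n2 A) ∂(cp ν n)) atTop (nhds l12))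
    (hlow : ∀ c' < l, ∃ n : ℕ, 1 ≤ n ∧ ∀ u : Wᗮ, ‖u‖ = 1 → n * c' ≤ H (ν.map (compr W)) n u)
    (hgap : l12 < 2 * l) :
    ∃ n : ℕ, 1 ≤ n ∧ ∃ α θ : ℝ, 0 < α ∧ α ≤ 1 ∧ 0 < θ ∧ θ < 1 ∧ ∀ x y : Wᗮ, x ≠ 0 → y ≠ 0 →
      ∫ A, dl (A x) (A y) ^ α ∂(cp (ν.map (compr W)) n) ≤ θ * dl x y ^ α := by
  set g := 2 * l - l12 with hg
  have hg0 : 0 < g := by simp only [hg]; linarith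
  have hU := good_compr h hinv
  obtain ⟨n₀, hn₀, hn₀2⟩ := hlow (l - g / 8) (by linarith)
  have hev : ∀ᶠ n : ℕ in atTop, (n : ℝ)⁻¹ * ∫ A, Real.log (n2 A) ∂(cp ν n) < l12 + g / 4 :=
    hl12.eventually (gt_mem_nhds (by linarith))
  obtain ⟨N, hN⟩ := eventually_atTop.1 hev
  obtain ⟨n, hnN, hn1, hnlow⟩ : ∃ n : ℕ, N ≤ n ∧ 1 ≤ n ∧ ∀ u : Wᗮ, u ≠ 0 →
      n * (l - g / 8) + Real.log ‖u‖ ≤ H (ν.map (compr W)) n u := by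
    refine ⟨(N + 1) * n₀, by nlinarith, by nlinarith, fun u hu => ?_⟩
    exact H_mul_low hU hn₀2 (N + 1) u hu
  have hn0 : (0:ℝ) < n := by exact_mod_cast hn1
  have hN2 : ∫ A, Real.log (n2 A) ∂(cp ν n) < n * (l12 + g / 4) := by
    have := hN n hnN
    rw [inv_mul_lt_iff₀ hn0] at this; exact this
  have hgn := h.cp n
  have := hgn.prob
  set b := |Real.log (m ^ n)| + |Real.log (M ^ n)| with hb
  have hb0 : 0 ≤ b := by positivity
  have hη : 0 < n * (g / 4) := by positivity
  obtain ⟨α, hα, hα1, hαB, hαη, hαη1⟩ := small_exp (show 0 ≤ 4 * b by positivity) hη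
  have hcp := cp_compr h hinv n
  have hcm := (compr_cont W).measurable
  have key : ∀ x y : Wᗮ, x ≠ 0 → y ≠ 0 →
      ∫ A, dl (A x) (A y) ^ α ∂(cp (ν.map (compr W)) n) ≤ (1 - α * (n * (g / 4))) * dl x y ^ α := by
    intro x y hx hy
    have hx' := norm_pos_iff.2 hx
    have hy' := norm_pos_iff.2 hy
    rw [← hcp.2, integral_map hcm.aemeasurable (dlp_meas x y α).aestronglyMeasurable]
    let Z : (V →L[ℝ] V) → ℝ := fun A => Real.log (n2 A) - Real.log ‖compr W A x‖ -
      Real.log ‖compr W A y‖ + (Real.log ‖x‖ + Real.log ‖y‖)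
    have m1 : Measurable (fun A : V →L[ℝ] V => Real.log (n2 A)) := Real.measurable_log.comp n2_meas
    have m2 : ∀ x : Wᗮ, Measurable (fun A : V →L[ℝ] V => Real.log ‖compr W A x‖) := fun x =>
      (meas_log x).comp hcm
    have hZm : Measurable Z := ((m1.sub (m2 x)).sub (m2 y)).add_const _
    have hZb : ∀ᵐ A ∂(cp ν n), |Z A| ≤ 4 * b := by
      filter_upwards [hgn.ae, hcp.1] with A hA hP
      have e1 := abs_le.1 (logn2_bd h2 hgn.m0 hgn.M0.le hA)
      have e2 := Bd_log hgn.m0 (compr_Bd hgn.m0 hP hA) hx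
      have e3 := Bd_log hgn.m0 (compr_Bd hgn.m0 hP hA) hy
      have f1 := neg_abs_le (Real.log (m ^ n))
      have f2 := le_abs_self (Real.log (M ^ n))
      have f3 := abs_nonneg (Real.log (m ^ n))
      have f4 := abs_nonneg (Real.log (M ^ n))
      rw [abs_le]
      simp only [Z, hb]
      constructor <;> linarith [e1.1, e1.2, e2.1, e2.2, e3.1, e3.2]
    have hmom := exp_moment (cp ν n) hZm.aestronglyMeasurable hZb hα.le hαB
    have i1 : Integrable (fun A : V →L[ℝ] V => Real.log (n2 A)) (cp ν n) :=
      hgn.integrable m1 fun A hA => logn2_bd h2 hgn.m0 hgn.M0.le hA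
    have i2 : ∀ x : Wᗮ, x ≠ 0 → Integrable (fun A : V →L[ℝ] V => Real.log ‖compr W A x‖) (cp ν n) := by
      intro x hx
      have := (hU.cp n).int_log hx
      rw [← hcp.2] at this
      exact (integrable_map_measure this.1 hcm.aemeasurable).1 this
    have eH : ∀ x : Wᗮ, ∫ A, Real.log ‖compr W A x‖ ∂(cp ν n) = H (ν.map (compr W)) n x := by
      intro x
      unfold H
      rw [← hcp.2, integral_map hcm.aemeasurable (meas_log x).aestronglyMeasurable]
    have hZi : ∫ A, Z A ∂(cp ν n) ≤ -(2 * (n * (g / 4))) := by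
      have : ∫ A, Z A ∂(cp ν n) = ∫ A, Real.log (n2 A) ∂(cp ν n) - H (ν.map (compr W)) n x -
          H (ν.map (compr W)) n y + (Real.log ‖x‖ + Real.log ‖y‖) := by
        have i3 : Integrable (fun A : V →L[ℝ] V => Real.log (n2 A) - Real.log ‖compr W A x‖)
          (cp ν n) := i1.sub (i2 x hx)
        have i4 : Integrable (fun A : V →L[ℝ] V => Real.log (n2 A) - Real.log ‖compr W A x‖ -
          Real.log ‖compr W A y‖) (cp ν n) := i3.sub (i2 y hy)
        rw [← eH, ← eH, ← integral_sub i1 (i2 x hx), ← integral_sub i3 (i2 y hy)]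
        simp only [Z]
        rw [integral_add i4 (integrable_const _), integral_const]
        simp
      rw [this]
      have e1 := hnlow x hx
      have e2 := hnlow y hy
      have : n * (l12 + g / 4) = n * (2 * l - g + g / 4) := by simp only [hg]; ring
      nlinarith
    calc ∫ A, dl (compr W A x) (compr W A y) ^ α ∂(cp ν n)
        ≤ ∫ A, Real.exp (α * Z A) * dl x y ^ α ∂(cp ν n) := by
          refine integral_mono_of_nonneg (Eventually.of_forall fun A => dlp_nonneg _ _ _)
            (hmom.1.mul_const _) ?_
          filter_upwards [hgn.ae, hcp.1] with A hA hP
          have hB := compr_Bd hgn.m0 hP hA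
          have p1 := norm_pos_iff.2 (Bd_ne hgn.m0 hB hx)
          have p2 := norm_pos_iff.2 (Bd_ne hgn.m0 hB hy)
          have p3 : 0 < n2 A := lt_of_lt_of_le (by have := hgn.m0; positivity)
            (n2_Bd h2 hgn.m0.le hgn.M0.le hA).1
          have hexp : Real.exp (Z A) = n2 A / ‖compr W A x‖ / ‖compr W A y‖ * (‖x‖ * ‖y‖) := by
            simp only [Z]
            rw [Real.exp_add, Real.exp_sub, Real.exp_sub, Real.exp_log p3, Real.exp_log p1,
              Real.exp_log p2, Real.exp_add, Real.exp_log hx', Real.exp_log hy']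
          have harea : area (compr W A x) (compr W A y) ≤ n2 A * area x y := by
            have e1 : area (compr W A x) (compr W A y) ≤ area (A x) (A y) := by
              unfold area
              refine Real.sqrt_le_sqrt ?_
              exact area2_contr (Wᗮ.orthogonalProjectionOnto)
                (fun v => Wᗮ.norm_orthogonalProjectionOnto_apply_le v) (A x) (A y)
            exact e1.trans (area_n2 A x y)
          have hd : dl (compr W A x) (compr W A y) ≤ Real.exp (Z A) * dl x y := by
            rw [hexp]
            unfold dl
            calc _ ≤ (n2 A * area x y) / (‖compr W A x‖ * ‖compr W A y‖) := by gcongr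
              _ = _ := by field_simp
          calc dl (compr W A x) (compr W A y) ^ α ≤ (Real.exp (Z A) * dl x y) ^ α :=
                Real.rpow_le_rpow (dl_nonneg _ _) hd hα.le
            _ = _ := by
                rw [Real.mul_rpow (Real.exp_pos _).le (dl_nonneg _ _), ← Real.exp_mul, mul_comm (Z A)]
      _ = (∫ A, Real.exp (α * Z A) ∂(cp ν n)) * dl x y ^ α := integral_mul_const _ _
      _ ≤ _ := by
          refine mul_le_mul_of_nonneg_right (hmom.2.trans ?_) (dlp_nonneg _ _ _)
          have e1 := mul_le_mul_of_nonneg_left hZi hα.le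
          have e2 := mul_le_mul_of_nonneg_left hαη hα.le
          nlinarith
  refine ⟨n, hn1, α, max (1 / 2) (1 - α * (n * (g / 4))), hα, hα1, ?_, ?_, ?_⟩
  · exact lt_of_lt_of_le (by norm_num) (le_max_left _ _)
  · refine max_lt (by norm_num) ?_
    have : 0 < α * (n * (g / 4)) := by positivity
    linarith
  · intro x y hx hy
    exact (key x y hx hy).trans (mul_le_mul_of_nonneg_right (le_max_right _ _) (dlp_nonneg _ _ _))

end dl

section F
variable {V : Type*} [NormedAddCommGroup V] [InnerProductSpace ℝ V] [FiniteDimensional ℝ V]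
  [MeasurableSpace V] [BorelSpace V]
variable {ν : Measure (V →L[ℝ] V)} {m M : ℝ}

/-- Markov operator -/
def Q (ν : Measure (V →L[ℝ] V)) (ψ : V → ℝ) (x : V) : ℝ := ∫ A, ψ (A x) ∂ν

/-- Hölder observables -/
structure Hol (α C : ℝ) (ψ : V → ℝ) : Prop where
  meas : Measurable ψ
  hol : ∀ x y : V, x ≠ 0 → y ≠ 0 → |ψ x - ψ y| ≤ C * dl x y ^ α

lemma Q_meas [SFinite ν] {ψ : V → ℝ} (hψ : Measurable ψ) : Measurable (Q ν ψ) := by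
  have h1 : Measurable (fun p : V × (V →L[ℝ] V) => ψ (p.2 p.1)) := by
    refine hψ.comp ?_
    have : Continuous (fun p : V × (V →L[ℝ] V) => p.2 p.1) := by fun_prop
    exact this.measurable
  exact (h1.stronglyMeasurable.integral_prod_right (ν := ν)).measurable

lemma Hol.bd {α C : ℝ} {ψ : V → ℝ} (hψ : Hol α C ψ) (hα : 0 ≤ α) (hC : 0 ≤ C) {x y : V} (hx : x ≠ 0)
    (hy : y ≠ 0) : |ψ x| ≤ |ψ y| + C := by
  have h1 := hψ.hol x y hx hy
  have h2 : C * dl x y ^ α ≤ C := mul_le_of_le_one_right hC (dlp_le_one x y hα)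
  have h3 := abs_sub_abs_le_abs_sub (ψ x) (ψ y)
  linarith

lemma Q_int (h : Good ν m M) {α C : ℝ} {ψ : V → ℝ} (hψ : Hol α C ψ) (hα : 0 ≤ α) (hC : 0 ≤ C)
    {x : V} (hx : x ≠ 0) : Integrable (fun A : V →L[ℝ] V => ψ (A x)) ν :=
  h.integrable (hψ.meas.comp (meas_app x)) fun _ hA => hψ.bd hα hC (Bd_ne h.m0 hA hx) hx

lemma Q_hol (h : Good ν m M) {α C : ℝ} {ψ : V → ℝ} (hψ : Hol α C ψ) (hα : 0 ≤ α) (hC : 0 ≤ C)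
    {x y : V} (hx : x ≠ 0) (hy : y ≠ 0) :
    |Q ν ψ x - Q ν ψ y| ≤ C * ∫ A, dl (A x) (A y) ^ α ∂ν := by
  have hi := Q_int h hψ hα hC hx
  have hi2 := Q_int h hψ hα hC hy
  unfold Q
  rw [← integral_sub hi hi2, ← integral_const_mul]
  refine (abs_integral_le_integral_abs).trans ?_
  refine integral_mono_ae (hi.sub hi2).abs ((dlp_int h x y hα).const_mul _) ?_
  filter_upwards [h.ae] with A hA
  exact hψ.hol _ _ (Bd_ne h.m0 hA hx) (Bd_ne h.m0 hA hy)

lemma Q_hol1 (h : Good ν m M) {α C : ℝ} {ψ : V → ℝ} (hψ : Hol α C ψ) (hα : 0 ≤ α) (hα1 : α ≤ 1) (hC : 0 ≤ C) :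
    Hol α (C * (M / m) ^ 2) (Q ν ψ) := by
  have := h.prob
  refine ⟨Q_meas hψ.meas, fun x y hx hy => (Q_hol h hψ hα hC hx hy).trans ?_⟩
  rw [mul_assoc]
  refine mul_le_mul_of_nonneg_left ?_ hC
  calc ∫ A, dl (A x) (A y) ^ α ∂ν ≤ ∫ A, (M / m) ^ 2 * dl x y ^ α ∂ν := by
        refine integral_mono_ae (dlp_int h x y hα) (integrable_const _) ?_
        filter_upwards [h.ae] with A hA
        exact dlp_lip h.m0 h.M0.le (h.m1.trans h.M1) hA hx hy hα hα1
    _ = _ := by simp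

lemma Q_add (h : Good ν m M) {α C : ℝ} {ψ : V → ℝ} (hψ : Hol α C ψ) (hα : 0 ≤ α) (hC : 0 ≤ C)
    (n : ℕ) {x : V} (hx : x ≠ 0) : Q (cp ν (n + 1)) ψ x = Q ν (Q (cp ν n) ψ) x := by
  have := h.prob
  unfold Q
  rw [h.integral_add (f := fun A => ψ (A x)) (hψ.meas.comp (meas_app x))
    (fun _ hA => hψ.bd hα hC (Bd_ne (h.cp (n + 1)).m0 hA hx) hx), cp_one]
  rfl

lemma Q_zero (ψ : V → ℝ) (x : V) : Q (cp ν 0) ψ x = ψ x := by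
  unfold Q cp; rw [integral_dirac]; simp

/-- Solution of the Poisson equation. -/
lemma poisson (h : Good ν m M) {α K ρ : ℝ} (hα : 0 ≤ α) (hK : 0 < K) (hρ : 0 < ρ) (hρ1 : ρ < 1)
    (hc : ∀ (k : ℕ) (x y : V), x ≠ 0 → y ≠ 0 →
      ∫ A, dl (A x) (A y) ^ α ∂(cp ν k) ≤ K * ρ ^ k * dl x y ^ α) {e : V} (he : e ≠ 0) (ψ : V → ℝ) :
    ∃ (u : V → ℝ) (c : ℝ), ∀ C, 0 ≤ C → Hol α C ψ → Hol α (K / (1 - ρ) * C) u ∧ u e = 0 ∧ u 0 = 0 ∧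
      ∀ x, x ≠ 0 → u x - Q ν u x = ψ x - c := by
  classical
  have := h.prob
  let f : ℕ → V → ℝ := fun n x => if x = 0 then 0 else Q (cp ν n) ψ x - Q (cp ν n) ψ e
  let u : V → ℝ := fun x => ∑' n, f n x
  refine ⟨u, Q ν u e + ψ e, fun C hC hψ => ?_⟩
  have hge : ∀ n {x y : V}, x ≠ 0 → y ≠ 0 → |Q (cp ν n) ψ x - Q (cp ν n) ψ y| ≤ C * K * dl x y ^ α * ρ ^ n := by
    intro n x y hx hy
    calc _ ≤ C * ∫ A, dl (A x) (A y) ^ α ∂(cp ν n) := Q_hol (h.cp n) hψ hα hC hx hy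
      _ ≤ C * (K * ρ ^ n * dl x y ^ α) := mul_le_mul_of_nonneg_left (hc n x y hx hy) hC
      _ = _ := by ring
  have hgeo := summable_geometric_of_lt_one hρ.le hρ1
  have hf : ∀ n x, |f n x| ≤ C * K * ρ ^ n := by
    intro n x
    by_cases hx : x = 0
    · simp only [f, hx, if_true, abs_zero]; positivity
    · simp only [f, hx, if_false]
      refine (hge n hx he).trans ?_
      refine mul_le_mul_of_nonneg_right ?_ (by positivity)
      exact mul_le_of_le_one_right (by positivity) (dlp_le_one _ _ hα)
  have hsum : ∀ x, Summable (fun n => f n x) := fun x =>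
    Summable.of_norm_bounded (hgeo.mul_left (C * K)) fun n => hf n x
  have hfm : ∀ n, Measurable (f n) := fun n => by
    have := (h.cp n).prob
    exact Measurable.ite (measurableSet_singleton 0) measurable_const ((Q_meas hψ.meas).sub_const _)
  have hum : Measurable u := by
    refine measurable_of_tendsto_metrizable (f := fun N x => ∑ n ∈ Finset.range N, f n x)
      (fun N => Finset.measurable_sum _ fun n _ => hfm n) ?_
    rw [tendsto_pi_nhds]
    exact fun x => (hsum x).hasSum.tendsto_sum_nat
  have hu : Hol α (K / (1 - ρ) * C) u := by
    refine ⟨hum, fun x y hx hy => ?_⟩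
    simp only [u]
    rw [← (hsum x).tsum_sub (hsum y)]
    have hb : HasSum (fun n => C * K * dl x y ^ α * ρ ^ n) (K / (1 - ρ) * C * dl x y ^ α) := by
      have e1 : K / (1 - ρ) * C * dl x y ^ α = C * K * dl x y ^ α * (1 - ρ)⁻¹ := by
        rw [div_eq_mul_inv]; ring
      rw [e1]
      exact (hasSum_geometric_of_lt_one hρ.le hρ1).mul_left (C * K * dl x y ^ α)
    rw [← Real.norm_eq_abs]
    refine tsum_of_norm_bounded hb fun n => ?_
    simp only [f, hx, hy, if_false]
    rw [Real.norm_eq_abs, sub_sub_sub_cancel_right]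
    exact hge n hx hy
  have hue : u e = 0 := by simp [u, f]
  have hu0 : u 0 = 0 := by simp [u, f]
  refine ⟨hu, hue, hu0, ?_⟩
  -- limits
  have key : ∀ x, x ≠ 0 → Tendsto (fun n => Q (cp ν n) ψ x) atTop (nhds (ψ x - (u x - Q ν u x))) := by
    intro x hx
    have hintg : ∀ n, Integrable (fun A : V →L[ℝ] V => f n (A x)) ν := fun n =>
      h.integrable ((hfm n).comp (meas_app x)) fun A _ => hf n (A x)
    have h1 : HasSum (fun n => ∫ A, f n (A x) ∂ν) (Q ν u x) := by
      refine hasSum_integral_of_summable_integral_norm hintg ?_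
      refine Summable.of_nonneg_of_le (fun n => integral_nonneg fun _ => norm_nonneg _) (fun n => ?_)
        (hgeo.mul_left (C * K))
      calc ∫ A, ‖f n (A x)‖ ∂ν ≤ ∫ A, C * K * ρ ^ n ∂ν :=
            integral_mono_ae (hintg n).norm (integrable_const _) (Eventually.of_forall fun A => hf n (A x))
        _ = _ := by simp
    have h2 : ∀ n, ∫ A, f n (A x) ∂ν = Q (cp ν (n + 1)) ψ x - Q (cp ν n) ψ e := by
      intro n
      have hQ : Hol α (C * ((M ^ n) / (m ^ n)) ^ 2 + C * K * ρ ^ n) (Q (cp ν n) ψ) := by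
        have := (h.cp n).prob
        refine ⟨Q_meas hψ.meas, fun x y hx hy => (hge n hx hy).trans ?_⟩
        have := dlp_nonneg x y α
        have : 0 ≤ C * ((M ^ n) / (m ^ n)) ^ 2 * dl x y ^ α := by positivity
        linarith
      rw [Q_add h hψ hα hC n hx]
      have : ∀ᵐ A ∂ν, f n (A x) = Q (cp ν n) ψ (A x) - Q (cp ν n) ψ e := by
        filter_upwards [h.ae] with A hA
        simp only [f, Bd_ne h.m0 hA hx, if_false]
      rw [integral_congr_ae this, integral_sub (Q_int h hQ hα (by positivity) hx) (integrable_const _)]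
      simp [Q]
    have h3 : HasSum (fun n => f n x) (u x) := (hsum x).hasSum
    have h4 := h3.sub h1
    have h5 : ∀ n, f n x - ∫ A, f n (A x) ∂ν = Q (cp ν n) ψ x - Q (cp ν (n + 1)) ψ x := by
      intro n; rw [h2]; simp only [f, hx, if_false]; ring
    simp only [h5] at h4
    have h6 := h4.tendsto_sum_nat
    simp only [Finset.sum_range_sub'] at h6
    rw [Q_zero] at h6
    have h7 := h6.const_sub (ψ x)
    simpa using h7
  intro x hx
  have h1 := (key x hx).sub (key e he)
  have h2 : Tendsto (fun n => Q (cp ν n) ψ x - Q (cp ν n) ψ e) atTop (nhds 0) := by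
    refine squeeze_zero_norm (fun n => hge n hx he) ?_
    simpa using (tendsto_pow_atTop_nhds_zero_of_lt_one hρ.le hρ1).const_mul (C * K * dl x e ^ α)
  have h3 := tendsto_nhds_unique h1 h2
  rw [hue] at h3
  linarith

end F

section F
variable {V : Type*} [NormedAddCommGroup V] [InnerProductSpace ℝ V] [FiniteDimensional ℝ V]
  [MeasurableSpace V] [BorelSpace V]
variable {ν : Measure (V →L[ℝ] V)} {m M : ℝ}

lemma dl_smul (x y : V) {s t : ℝ} (hs : s ≠ 0) (ht : t ≠ 0) : dl (s • x) (t • y) = dl x y := by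
  unfold dl area
  rw [area2_smul, norm_smul, norm_smul, Real.sqrt_mul (sq_nonneg _), Real.sqrt_sq_eq_abs, abs_mul,
    Real.norm_eq_abs, Real.norm_eq_abs]
  have h1 := abs_pos.2 hs
  have h2 := abs_pos.2 ht
  by_cases h : ‖x‖ * ‖y‖ = 0
  · rw [h]; rw [show |s| * ‖x‖ * (|t| * ‖y‖) = |s| * |t| * (‖x‖ * ‖y‖) by ring, h]; simp
  · rw [show |s| * ‖x‖ * (|t| * ‖y‖) = |s| * |t| * (‖x‖ * ‖y‖) by ring]
    rw [mul_div_mul_left _ _ (by positivity)]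

lemma log_lip_unit (hm : 0 < m) {A : V →L[ℝ] V} (hA : A ∈ Bd m M) {x y : V} (hx : ‖x‖ = 1)
    (hy : ‖y‖ = 1) (hxy : 0 ≤ (inner ℝ x y : ℝ)) :
    Real.log ‖A x‖ - Real.log ‖A y‖ ≤ 2 * (M / m) * dl x y := by
  have h1 := hA x
  have h2 := hA y
  rw [hx] at h1; rw [hy] at h2
  have hM : 0 ≤ M := by linarith
  have hAx : 0 < ‖A x‖ := by linarith
  have hAy : 0 < ‖A y‖ := by linarith
  have hn : ‖x - y‖ ≤ 2 * dl x y := by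
    have e1 : dl x y = area x y := by unfold dl; rw [hx, hy]; simp
    rw [e1]
    refine abs_le_of_sq_le_sq' ?_ (by have := area_nonneg x y; positivity) |>.2
    rw [mul_pow, area_sq, norm_sub_sq_real, hx, hy]
    unfold area2
    rw [hx, hy]
    have h3 : (inner ℝ x y : ℝ) ≤ 1 := by
      have := real_inner_le_norm x y; rwa [hx, hy, one_mul] at this
    nlinarith
  calc Real.log ‖A x‖ - Real.log ‖A y‖ = Real.log (‖A x‖ / ‖A y‖) := (Real.log_div hAx.ne' hAy.ne').symm
    _ ≤ ‖A x‖ / ‖A y‖ - 1 := Real.log_le_sub_one_of_pos (by positivity)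
    _ = (‖A x‖ - ‖A y‖) / ‖A y‖ := by field_simp
    _ ≤ (M * ‖x - y‖) / m := by
        have h3 : ‖A x‖ - ‖A y‖ ≤ M * ‖x - y‖ := by
          refine (norm_sub_norm_le _ _).trans ?_
          rw [← map_sub]; exact (hA _).2
        have h4 : 0 ≤ M * ‖x - y‖ := by positivity
        calc _ ≤ (M * ‖x - y‖) / ‖A y‖ := by gcongr
          _ ≤ _ := by gcongr; linarith
    _ ≤ (M * (2 * dl x y)) / m := by gcongr
    _ = _ := by ring

lemma log_lip (hm : 0 < m) {A : V →L[ℝ] V} (hA : A ∈ Bd m M) {x y : V} (hx : x ≠ 0) (hy : y ≠ 0) :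
    (Real.log ‖A x‖ - Real.log ‖x‖) - (Real.log ‖A y‖ - Real.log ‖y‖) ≤ 2 * (M / m) * dl x y := by
  have inv : ∀ (s : ℝ) (x : V), s ≠ 0 → x ≠ 0 →
      Real.log ‖A (s • x)‖ - Real.log ‖s • x‖ = Real.log ‖A x‖ - Real.log ‖x‖ := by
    intro s x hs hx
    rw [map_smul, norm_smul, norm_smul, Real.log_mul (norm_ne_zero_iff.2 hs)
      (norm_ne_zero_iff.2 (Bd_ne hm hA hx)), Real.log_mul (norm_ne_zero_iff.2 hs) (norm_ne_zero_iff.2 hx)]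
    ring
  have main : ∀ y : V, y ≠ 0 → 0 ≤ (inner ℝ x y : ℝ) →
    (Real.log ‖A x‖ - Real.log ‖x‖) - (Real.log ‖A y‖ - Real.log ‖y‖) ≤ 2 * (M / m) * dl x y := by
    intro y hy hxy
    have sx : ‖x‖⁻¹ ≠ 0 := inv_ne_zero (norm_ne_zero_iff.2 hx)
    have sy : ‖y‖⁻¹ ≠ 0 := inv_ne_zero (norm_ne_zero_iff.2 hy)
    rw [← inv _ x sx hx, ← inv _ y sy hy, ← dl_smul x y sx sy, norm_unit hx, norm_unit hy]
    have := log_lip_unit hm hA (norm_unit hx) (norm_unit hy) (by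
      rw [inner_smul_left, inner_smul_right]; simp only [conj_trivial]; positivity)
    linarith
  rcases le_total 0 (inner ℝ x y : ℝ) with h | h
  · exact main y hy h
  · have h1 := main ((-1:ℝ) • y) (by simpa using hy) (by rw [inner_smul_right]; linarith)
    rw [inv _ y (by norm_num) hy] at h1
    have h2 := dl_smul x y (s := 1) (t := -1) (by norm_num) (by norm_num)
    rw [one_smul] at h2
    rwa [h2] at h1

/-- one-step mean log growth -/
def phi (ν : Measure (V →L[ℝ] V)) (x : V) : ℝ := ∫ A, Real.log ‖A x‖ ∂ν - Real.log ‖x‖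

lemma phi_hol (h : Good ν m M) {α : ℝ} (hα1 : α ≤ 1) (hα : 0 < α) : Hol α (2 * (M / m)) (phi ν) := by
  have := h.prob
  have h0 := h.m0
  have h1 := h.M0
  have lm : Measurable (fun x : V => Real.log ‖x‖) := Real.measurable_log.comp measurable_norm
  have half : ∀ x y : V, x ≠ 0 → y ≠ 0 → phi ν x - phi ν y ≤ 2 * (M / m) * dl x y := by
    intro x y hx hy
    have e : ∀ x : V, x ≠ 0 → phi ν x = ∫ A, (Real.log ‖A x‖ - Real.log ‖x‖) ∂ν := by
      intro x hx
      rw [integral_sub (h.int_log hx) (integrable_const _)]; simp [phi]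
    have i : ∀ x : V, x ≠ 0 → Integrable (fun A : V →L[ℝ] V => Real.log ‖A x‖ - Real.log ‖x‖) ν :=
      fun x hx => (h.int_log hx).sub (integrable_const _)
    rw [e x hx, e y hy, ← integral_sub (i x hx) (i y hy)]
    calc _ ≤ ∫ A : V →L[ℝ] V, 2 * (M / m) * dl x y ∂ν := by
          refine integral_mono_ae ((i x hx).sub (i y hy)) (integrable_const _) ?_
          filter_upwards [h.ae] with A hA
          exact log_lip h0 hA hx hy
      _ = _ := by simp
  refine ⟨(Q_meas (ν := ν) lm).sub lm, fun x y hx hy => ?_⟩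
  have hd : dl x y ≤ dl x y ^ α := by
    rcases (dl_nonneg x y).eq_or_lt with h | h
    · rw [← h, Real.zero_rpow hα.ne']
    · calc dl x y = dl x y ^ (1:ℝ) := (Real.rpow_one _).symm
        _ ≤ _ := Real.rpow_le_rpow_of_exponent_ge h (dl_le_one _ _) hα1
  have hs : dl y x = dl x y := by unfold dl area area2; rw [real_inner_comm]; ring_nf
  have e1 := half x y hx hy
  have e2 := half y x hy hx
  rw [hs] at e2
  have e3 : 2 * (M / m) * dl x y ≤ 2 * (M / m) * dl x y ^ α := by gcongr
  rw [abs_le]; constructor <;> linarith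

end F

section F
variable {V : Type*} [NormedAddCommGroup V] [InnerProductSpace ℝ V] [FiniteDimensional ℝ V]
  [MeasurableSpace V] [BorelSpace V]
variable {ν : Measure (V →L[ℝ] V)} {m M : ℝ}

lemma Hol.add {α C C' : ℝ} {f g : V → ℝ} (hf : Hol α C f) (hg : Hol α C' g) :
    Hol α (C + C') (fun x => f x + g x) := by
  refine ⟨hf.meas.add hg.meas, fun x y hx hy => ?_⟩
  have h1 := abs_le.1 (hf.hol x y hx hy)
  have h2 := abs_le.1 (hg.hol x y hx hy)
  rw [abs_le]; constructor <;> linarith [h1.1, h1.2, h2.1, h2.2]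

lemma Hol.sub {α C C' : ℝ} {f g : V → ℝ} (hf : Hol α C f) (hg : Hol α C' g) :
    Hol α (C + C') (fun x => f x - g x) := by
  refine ⟨hf.meas.sub hg.meas, fun x y hx hy => ?_⟩
  have h1 := abs_le.1 (hf.hol x y hx hy)
  have h2 := abs_le.1 (hg.hol x y hx hy)
  rw [abs_le]; constructor <;> linarith [h1.1, h1.2, h2.1, h2.2]

lemma Hol.mono {α C C' : ℝ} {f : V → ℝ} (hf : Hol α C f) (h : C ≤ C') : Hol α C' f :=
  ⟨hf.meas, fun x y hx hy => (hf.hol x y hx hy).trans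
    (mul_le_mul_of_nonneg_right h (dlp_nonneg _ _ _))⟩

lemma abs_Q_le (h : Good ν m M) {u : V → ℝ} {B : ℝ} (hm : Measurable u) (hB : ∀ x, |u x| ≤ B) (x : V) :
    |Q ν u x| ≤ B := by
  have := h.prob
  have hi : Integrable (fun A : V →L[ℝ] V => u (A x)) ν :=
    h.integrable (hm.comp (meas_app x)) fun A _ => hB _
  calc |Q ν u x| ≤ ∫ A, |u (A x)| ∂ν := abs_integral_le_integral_abs
    _ ≤ ∫ A : V →L[ℝ] V, B ∂ν := integral_mono hi.abs (integrable_const _) fun A => hB _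
    _ = B := by simp

lemma series {ν₀ ν₁ : Measure (V →L[ℝ] V)} (h₀ : Good ν₀ m M) (h₁ : Good ν₁ m M) {α K ρ : ℝ}
    (hα : 0 < α) (hα1 : α ≤ 1) (hK : 0 < K) (hρ : 0 < ρ) (hρ1 : ρ < 1)
    (hc : ∀ (k : ℕ) (x y : V), x ≠ 0 → y ≠ 0 →
      ∫ A, dl (A x) (A y) ^ α ∂(cp ν₀ k) ≤ K * ρ ^ k * dl x y ^ α) {e : V} (he : e ≠ 0) :
    ∃ ε : ℝ, 0 < ε ∧ ε ≤ 1 ∧ ∃ a : ℕ → ℝ, (Summable fun k : ℕ => |a k| * ε ^ k) ∧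
      ∀ t : ℝ, 0 ≤ t → t < ε → ∃ (u : V → ℝ) (B : ℝ), Measurable u ∧ (∀ x, |u x| ≤ B) ∧
        ∀ x, x ≠ 0 → (1 - t) * ∫ A, (Real.log ‖A x‖ + u (A x)) ∂ν₀ +
          t * ∫ A, (Real.log ‖A x‖ + u (A x)) ∂ν₁ = ∑' k, a k * t ^ k + Real.log ‖x‖ + u x := by
  have hp₀ := h₀.prob
  have hp₁ := h₁.prob
  have hm0 := h₀.m0
  have hM0 := h₀.M0
  choose R cc hR using poisson h₀ hα.le hK hρ hρ1 hc he
  set G := K / (1 - ρ) with hG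
  have hG0 : 0 < G := div_pos hK (by linarith)
  set κ := (M / m) ^ 2 with hκ
  have hκ0 : 0 < κ := by positivity
  set C₁ := 2 * (M / m) with hC₁
  have hC₁0 : 0 < C₁ := by positivity
  set Λ := 1 + 2 * κ * G with hΛ
  have hΛ1 : 1 ≤ Λ := by simp only [hΛ]; have : 0 < 2 * κ * G := by positivity
                         linarith
  have hΛ0 : 0 < Λ := by linarith
  let Dd : (V → ℝ) → V → ℝ := fun u x => Q ν₁ u x - Q ν₀ u x
  let δ : ℕ → V → ℝ := fun k x => if k = 0 then phi ν₁ x - phi ν₀ x else 0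
  let ψ : ℕ → V → ℝ := fun k => Nat.rec (phi ν₀) (fun k p x => δ k x + Dd (R p) x) k
  have ψ0 : ψ 0 = phi ν₀ := rfl
  have ψs : ∀ k x, ψ (k + 1) x = δ k x + Dd (R (ψ k)) x := fun k x => rfl
  have hδ : ∀ k, Hol α (2 * C₁) (δ k) := by
    intro k
    by_cases hk : k = 0
    · subst hk
      have := (phi_hol h₁ hα1 hα).sub (phi_hol h₀ hα1 hα)
      exact this.mono (by simp only [hC₁]; linarith)
    · have : δ k = fun _ => 0 := by funext x; simp [δ, hk]
      rw [this]
      refine ⟨measurable_const, fun x y _ _ => ?_⟩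
      have := dlp_nonneg x y α
      simp; positivity
  have hψ : ∀ k, Hol α (2 * C₁ * Λ ^ k) (ψ k) := by
    intro k
    induction k with
    | zero => exact (phi_hol h₀ hα1 hα).mono (by simp; linarith)
    | succ k ih =>
      have hu := (hR (ψ k) _ (by positivity) ih).1
      have hD : Hol α _ (Dd (R (ψ k))) :=
        (Q_hol1 h₁ hu hα.le hα1 (by positivity)).sub (Q_hol1 h₀ hu hα.le hα1 (by positivity))
      refine ((hδ k).add hD).mono ?_
      have h1 : 2 * C₁ ≤ 2 * C₁ * Λ ^ k := le_mul_of_one_le_right (by positivity) (one_le_pow₀ hΛ1)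
      have h2 : 2 * C₁ * Λ ^ (k + 1) = 2 * C₁ * Λ ^ k + (G * (2 * C₁ * Λ ^ k) * κ + G * (2 * C₁ * Λ ^ k) * κ) := by
        rw [pow_succ]; conv_lhs => rw [show Λ ^ k * Λ = Λ ^ k * (1 + 2 * κ * G) by rw [hΛ]]
        ring
      rw [h2]; linarith
  have hu := fun k => hR (ψ k) _ (by positivity) (hψ k)
  have hub : ∀ k x, |R (ψ k) x| ≤ G * (2 * C₁) * Λ ^ k := by
    intro k x
    by_cases hx : x = 0
    · rw [hx, (hu k).2.2.1]; simp; positivity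
    · have := (hu k).1.bd hα.le (by positivity) hx he
      rw [(hu k).2.1, abs_zero, zero_add] at this
      linarith
  let a : ℕ → ℝ := fun k => cc (ψ k)
  have ha : ∀ k, a k = ψ k e + Q ν₀ (R (ψ k)) e := by
    intro k
    have := (hu k).2.2.2 e he
    rw [(hu k).2.1] at this
    simp only [a]; linarith
  set P := |phi ν₀ e| + |phi ν₁ e - phi ν₀ e| with hP
  have hP0 : 0 ≤ P := by positivity
  have hab : ∀ k, |a k| ≤ (P + 3 * (G * (2 * C₁))) * Λ ^ k := by
    have hq0 := fun k => abs_Q_le h₀ (hu k).1.meas (hub k) e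
    have hq1 := fun k => abs_Q_le h₁ (hu k).1.meas (hub k) e
    have hGC : 0 < G * (2 * C₁) := by positivity
    intro k
    rw [ha]
    have t1 := abs_add_le (ψ k e) (Q ν₀ (R (ψ k)) e)
    have t2 := hq0 k
    cases k with
    | zero =>
      rw [ψ0] at t1 t2 ⊢
      have : |phi ν₀ e| ≤ P := by simp only [hP]; linarith [abs_nonneg (phi ν₁ e - phi ν₀ e)]
      rw [pow_zero, mul_one] at t2 ⊢
      linarith
    | succ k =>
      have hk1 : Λ ^ k ≤ Λ ^ (k + 1) := pow_le_pow_right₀ hΛ1 (Nat.le_succ k)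
      have hk2 : 1 ≤ Λ ^ (k + 1) := one_le_pow₀ hΛ1
      have t3 : |ψ (k + 1) e| ≤ P + 2 * (G * (2 * C₁) * Λ ^ k) := by
        rw [ψs]
        have s1 : |δ k e| ≤ P := by
          simp only [δ]; split_ifs
          · simp only [hP]; linarith [abs_nonneg (phi ν₀ e)]
          · simpa using hP0
        have s2 : |Dd (R (ψ k)) e| ≤ 2 * (G * (2 * C₁) * Λ ^ k) := by
          have := abs_sub (Q ν₁ (R (ψ k)) e) (Q ν₀ (R (ψ k)) e)
          have := hq0 k
          have := hq1 k
          simp only [Dd]; linarith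
        exact (abs_add_le _ _).trans (by linarith)
      have t4 : P ≤ P * Λ ^ (k + 1) := le_mul_of_one_le_right hP0 hk2
      have t5 : G * (2 * C₁) * Λ ^ k ≤ G * (2 * C₁) * Λ ^ (k + 1) := by gcongr
      linarith
  refine ⟨1 / (2 * Λ), by positivity, ?_, a, ?_, ?_⟩
  · rw [div_le_one (by positivity)]; linarith
  · refine Summable.of_nonneg_of_le (fun k => by positivity) (fun k => ?_)
      ((summable_geometric_two).mul_left (P + 3 * (G * (2 * C₁))))
    calc |a k| * (1 / (2 * Λ)) ^ k ≤ (P + 3 * (G * (2 * C₁))) * Λ ^ k * (1 / (2 * Λ)) ^ k := by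
          gcongr; exact hab k
      _ = (P + 3 * (G * (2 * C₁))) * (Λ * (1 / (2 * Λ))) ^ k := by rw [mul_pow]; ring
      _ = _ := by congr 2; field_simp
  intro t ht0 ht
  have htΛ : t * Λ ≤ 1 / 2 := by
    rw [lt_div_iff₀ (by positivity)] at ht; linarith
  have hpow : ∀ k, t ^ k * Λ ^ k ≤ (1 / 2) ^ k := fun k => by
    rw [← mul_pow]; exact pow_le_pow_left₀ (by positivity) htΛ k
  have hv : ∀ k x, |t ^ k * R (ψ k) x| ≤ G * (2 * C₁) * (1 / 2) ^ k := by
    intro k x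
    rw [abs_mul, abs_of_nonneg (pow_nonneg ht0 k)]
    calc t ^ k * |R (ψ k) x| ≤ t ^ k * (G * (2 * C₁) * Λ ^ k) := by gcongr; exact hub k x
      _ = G * (2 * C₁) * (t ^ k * Λ ^ k) := by ring
      _ ≤ _ := by gcongr; exact hpow k
  have hgeo : HasSum (fun k : ℕ => G * (2 * C₁) * (1 / 2 : ℝ) ^ k) (G * (2 * C₁) * 2) :=
    hasSum_geometric_two.mul_left _
  let u : V → ℝ := fun x => ∑' k, t ^ k * R (ψ k) x
  have hus : ∀ x, HasSum (fun k => t ^ k * R (ψ k) x) (u x) := fun x =>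
    (Summable.of_norm_bounded hgeo.summable fun k => hv k x).hasSum
  have hum : Measurable u := by
    refine measurable_of_tendsto_metrizable (f := fun N x => ∑ n ∈ Finset.range N, t ^ n * R (ψ n) x)
      (fun N => Finset.measurable_sum _ fun n _ => (hu n).1.meas.const_mul _) ?_
    rw [tendsto_pi_nhds]
    exact fun x => (hus x).tendsto_sum_nat
  have huB : ∀ x, |u x| ≤ G * (2 * C₁) * 2 := fun x => by
    rw [← Real.norm_eq_abs]; exact tsum_of_norm_bounded hgeo fun k => hv k x
  have hQs : ∀ {ν : Measure (V →L[ℝ] V)}, Good ν m M → ∀ x,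
      HasSum (fun k => t ^ k * Q ν (R (ψ k)) x) (Q ν u x) := by
    intro ν h x
    have := h.prob
    have hintg : ∀ k, Integrable (fun A : V →L[ℝ] V => t ^ k * R (ψ k) (A x)) ν := fun k =>
      h.integrable (((hu k).1.meas.comp (meas_app x)).const_mul _) fun A _ => hv k (A x)
    have h1 : HasSum (fun k => ∫ A, t ^ k * R (ψ k) (A x) ∂ν) (Q ν u x) := by
      refine hasSum_integral_of_summable_integral_norm hintg ?_
      refine Summable.of_nonneg_of_le (fun n => integral_nonneg fun _ => norm_nonneg _) (fun n => ?_)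
        hgeo.summable
      calc ∫ A, ‖t ^ n * R (ψ n) (A x)‖ ∂ν ≤ ∫ A : V →L[ℝ] V, G * (2 * C₁) * (1 / 2) ^ n ∂ν :=
            integral_mono_ae (hintg n).norm (integrable_const _) (Eventually.of_forall fun A => hv n (A x))
        _ = _ := by simp
    simp only [integral_const_mul] at h1
    exact h1
  have has : HasSum (fun k => a k * t ^ k) (∑' k, a k * t ^ k) := by
    refine (Summable.of_norm_bounded ((summable_geometric_two).mul_left (P + 3 * (G * (2 * C₁)))) fun k => ?_).hasSum
    rw [Real.norm_eq_abs, abs_mul, abs_of_nonneg (pow_nonneg ht0 k)]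
    calc |a k| * t ^ k ≤ (P + 3 * (G * (2 * C₁))) * Λ ^ k * t ^ k := by gcongr; exact hab k
      _ = (P + 3 * (G * (2 * C₁))) * (t ^ k * Λ ^ k) := by ring
      _ ≤ _ := by gcongr; exact hpow k
  refine ⟨u, _, hum, huB, fun x hx => ?_⟩
  have s1 : HasSum (fun k => t ^ k * ψ k x) (u x - Q ν₀ u x + ∑' k, a k * t ^ k) := by
    have e1 : ∀ k, t ^ k * ψ k x = t ^ k * R (ψ k) x - t ^ k * Q ν₀ (R (ψ k)) x + a k * t ^ k := by
      intro k
      have := (hu k).2.2.2 x hx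
      have e2 : ψ k x = R (ψ k) x - Q ν₀ (R (ψ k)) x + a k := by simp only [a]; linarith
      rw [e2]; ring
    simp only [e1]
    exact ((hus x).sub (hQs h₀ x)).add has
  have s2 : HasSum (fun k => t ^ (k + 1) * ψ (k + 1) x)
      (t * ((phi ν₁ x - phi ν₀ x) + (Q ν₁ u x - Q ν₀ u x))) := by
    have s3 : HasSum (fun k => t ^ k * δ k x) (phi ν₁ x - phi ν₀ x) := by
      have := hasSum_single (f := fun k => t ^ k * δ k x) 0 (fun k hk => by simp [δ, hk])
      simpa [δ] using this
    have e1 : ∀ k, t ^ (k + 1) * ψ (k + 1) x =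
        t * (t ^ k * δ k x + (t ^ k * Q ν₁ (R (ψ k)) x - t ^ k * Q ν₀ (R (ψ k)) x)) := by
      intro k
      rw [ψs]; simp only [Dd]; ring
    simp only [e1]
    exact (s3.add ((hQs h₁ x).sub (hQs h₀ x))).mul_left t
  have s4 := (hasSum_nat_add_iff (f := fun k => t ^ k * ψ k x) 1).1 s2
  have s5 := s1.unique s4
  simp only [Finset.range_one, Finset.sum_singleton, pow_zero, one_mul, ψ0] at s5
  have e : ∀ {ν : Measure (V →L[ℝ] V)}, Good ν m M →
      ∫ A, (Real.log ‖A x‖ + u (A x)) ∂ν = phi ν x + Real.log ‖x‖ + Q ν u x := by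
    intro ν h
    have := h.prob
    have i2 : Integrable (fun A : V →L[ℝ] V => u (A x)) ν :=
      h.integrable (hum.comp (meas_app x)) fun A _ => huB (A x)
    rw [integral_add (h.int_log hx) i2]
    unfold phi Q; ring
  rw [e h₀, e h₁]
  linear_combination -s5

end F

section G
variable {V : Type*} [NormedAddCommGroup V] [InnerProductSpace ℝ V] [FiniteDimensional ℝ V]
  [MeasurableSpace V] [BorelSpace V]
variable {ν : Measure (V →L[ℝ] V)} {m M : ℝ}

lemma lu_meas {u : V → ℝ} (hu : Measurable u) : Measurable (fun x : V => Real.log ‖x‖ + u x) :=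
  (Real.measurable_log.comp measurable_norm).add hu

lemma lu_bd {u : V → ℝ} {B : ℝ} (hB : ∀ x, |u x| ≤ B) (hm : 0 < m) {A : V →L[ℝ] V} (hA : A ∈ Bd m M)
    {x : V} (hx : x ≠ 0) : |Real.log ‖A x‖ + u (A x)| ≤
      |Real.log m| + |Real.log M| + |Real.log ‖x‖| + B :=
  (abs_add_le _ _).trans (add_le_add (log_bd hm hA hx) (hB _))

/-- iterating the cohomological equation -/
lemma coh_iter (h : Good ν m M) {u : V → ℝ} {B l : ℝ} (hu : Measurable u) (hB : ∀ x, |u x| ≤ B)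
    (heq : ∀ x, x ≠ 0 → ∫ A, (Real.log ‖A x‖ + u (A x)) ∂ν = l + Real.log ‖x‖ + u x) (n : ℕ) :
    ∀ x, x ≠ 0 → ∫ A, (Real.log ‖A x‖ + u (A x)) ∂(cp ν n) = n * l + Real.log ‖x‖ + u x := by
  have := h.prob
  induction n with
  | zero => intro x hx; unfold cp; rw [integral_dirac]; simp
  | succ n ih =>
    intro x hx
    have hm : Measurable (fun A : V →L[ℝ] V => Real.log ‖A x‖ + u (A x)) :=
      (lu_meas hu).comp (meas_app x)
    rw [h.integral_add (f := fun A => Real.log ‖A x‖ + u (A x)) hm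
      (fun A hA => lu_bd hB (h.cp (n + 1)).m0 hA hx), cp_one]
    have : ∀ᵐ A ∂ν, ∫ A', (Real.log ‖(A' * A) x‖ + u ((A' * A) x)) ∂(cp ν n) =
        n * l + (Real.log ‖A x‖ + u (A x)) := by
      filter_upwards [h.ae] with A hA
      have := ih (A x) (Bd_ne h.m0 hA hx)
      rw [← add_assoc]; exact this
    have hi : Integrable (fun A : V →L[ℝ] V => Real.log ‖A x‖ + u (A x)) ν :=
      h.integrable hm fun A hA => lu_bd hB h.m0 hA hx
    rw [integral_congr_ae this, integral_add (integrable_const _) hi, heq x hx]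
    simp; ring

lemma coh_lower (h : Good ν m M) {u : V → ℝ} {B l : ℝ} (hu : Measurable u) (hB : ∀ x, |u x| ≤ B)
    (heq : ∀ x, x ≠ 0 → ∫ A, (Real.log ‖A x‖ + u (A x)) ∂ν = l + Real.log ‖x‖ + u x) (n : ℕ)
    {x : V} (hx : x ≠ 0) : |H ν n x - (n * l + Real.log ‖x‖)| ≤ 2 * B := by
  have := h.prob
  have h1 := coh_iter h hu hB heq n x hx
  have i2 : Integrable (fun A : V →L[ℝ] V => u (A x)) (cp ν n) :=
    (h.cp n).integrable (hu.comp (meas_app x)) fun A _ => hB (A x)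
  rw [integral_add ((h.cp n).int_log hx) i2] at h1
  have h2 : |∫ A, u (A x) ∂(cp ν n)| ≤ B := abs_Q_le (h.cp n) hu hB x
  have h3 := abs_le.1 h2
  have h4 := abs_le.1 (hB x)
  unfold H
  rw [abs_le]; constructor <;> linarith [h3.1, h3.2, h4.1, h4.2]

/-- gauge from the cohomological equation -/
lemma coh_gauge (h : Good ν m M) {u : V → ℝ} {B l : ℝ} (hu : Measurable u) (hB : ∀ x, |u x| ≤ B)
    (heq : ∀ x, x ≠ 0 → ∫ A, (Real.log ‖A x‖ + u (A x)) ∂ν = l + Real.log ‖x‖ + u x) {α η : ℝ}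
    (hα : 0 < α) (h1 : α * (|Real.log m| + |Real.log M| + 2 * B) ≤ 1)
    (h2 : α * (|Real.log m| + |Real.log M| + 2 * B) ^ 2 ≤ η) :
    OneStep ν α (Real.exp (α * (2 * B))) (l + η) Set.univ
      (fun x => Real.exp (α * B) * (‖x‖ ^ α * Real.exp (α * u x))) := by
  have := h.prob
  refine ⟨?_, fun v => ?_, fun v => ?_, fun v _ => ?_⟩
  · exact ((measurable_norm.pow_const α).mul (Real.measurable_exp.comp (hu.const_mul α))).const_mul _
  · have : 1 ≤ Real.exp (α * B) * Real.exp (α * u v) := by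
      rw [← Real.exp_add]; apply Real.one_le_exp
      have := (abs_le.1 (hB v)).1
      nlinarith
    have h0 : 0 ≤ ‖v‖ ^ α := by positivity
    nlinarith
  · have : Real.exp (α * B) * Real.exp (α * u v) ≤ Real.exp (α * (2 * B)) := by
      rw [← Real.exp_add]; apply Real.exp_le_exp.2
      have := (abs_le.1 (hB v)).2
      nlinarith
    have h0 : 0 ≤ ‖v‖ ^ α := by positivity
    nlinarith
  · by_cases hv : v = 0
    · subst hv
      simp [Real.zero_rpow hα.ne']
    let Z : (V →L[ℝ] V) → ℝ := fun A => Real.log ‖A v‖ + u (A v) - (Real.log ‖v‖ + u v)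
    have hm : Measurable (fun A : V →L[ℝ] V => Real.log ‖A v‖ + u (A v)) :=
      (lu_meas hu).comp (meas_app v)
    have hi : Integrable (fun A : V →L[ℝ] V => Real.log ‖A v‖ + u (A v)) ν :=
      h.integrable hm fun A hA => lu_bd hB h.m0 hA hv
    have hZb : ∀ᵐ A ∂ν, |Z A| ≤ |Real.log m| + |Real.log M| + 2 * B := by
      filter_upwards [h.ae] with A hA
      have e1 := Bd_log h.m0 hA hv
      have e2 := abs_le.1 (hB v)
      have e3 := abs_le.1 (hB (A v))
      have f1 := neg_abs_le (Real.log m)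
      have f2 := le_abs_self (Real.log M)
      have f3 := abs_nonneg (Real.log m)
      have f4 := abs_nonneg (Real.log M)
      simp only [Z]
      rw [abs_le]; constructor <;> linarith [e1.1, e1.2, e2.1, e2.2, e3.1, e3.2]
    have hmom := exp_moment ν (hm.sub_const _).aestronglyMeasurable hZb hα.le h1
    have hZi : ∫ A, Z A ∂ν = l := by
      simp only [Z]
      rw [integral_sub hi (integrable_const _), heq v hv]; simp
    rw [hZi] at hmom
    have hexp : ∀ w : V, w ≠ 0 → ‖w‖ ^ α * Real.exp (α * u w) = Real.exp (α * (Real.log ‖w‖ + u w)) := by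
      intro w hw
      rw [mul_add, Real.exp_add, Real.rpow_def_of_pos (norm_pos_iff.2 hw), mul_comm α (Real.log _)]
    have hcong : ∀ᵐ A ∂ν, Real.exp (α * B) * (‖A v‖ ^ α * Real.exp (α * u (A v))) =
        Real.exp (α * B) * (‖v‖ ^ α * Real.exp (α * u v)) * Real.exp (α * Z A) := by
      filter_upwards [h.ae] with A hA
      rw [hexp _ (Bd_ne h.m0 hA hv), hexp v hv]
      simp only [← Real.exp_add, Z]; ring_nf
    rw [integral_congr_ae hcong, integral_const_mul, mul_comm]
    refine mul_le_mul_of_nonneg_right ?_ (by positivity)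
    refine hmom.2.trans ?_
    have := Real.add_one_le_exp (α * (l + η))
    nlinarith

/-- the mixture of two measures -/
def mix (t : ℝ) (ν₀ ν₁ : Measure (V →L[ℝ] V)) : Measure (V →L[ℝ] V) :=
  Real.toNNReal (1 - t) • ν₀ + Real.toNNReal t • ν₁

lemma mix_integral {t : ℝ} (ht0 : 0 ≤ t) (ht1 : t ≤ 1) {ν₀ ν₁ : Measure (V →L[ℝ] V)}
    {f : (V →L[ℝ] V) → ℝ} (h0 : Integrable f ν₀) (h1 : Integrable f ν₁) :
    ∫ A, f A ∂(mix t ν₀ ν₁) = (1 - t) * ∫ A, f A ∂ν₀ + t * ∫ A, f A ∂ν₁ := by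
  unfold mix
  rw [integral_add_measure h0.smul_measure_nnreal h1.smul_measure_nnreal, integral_smul_nnreal_measure,
    integral_smul_nnreal_measure]
  simp only [NNReal.smul_def, Real.coe_toNNReal _ ht0, Real.coe_toNNReal _ (sub_nonneg.2 ht1), smul_eq_mul]

lemma mix_ae {t : ℝ} {ν₀ ν₁ : Measure (V →L[ℝ] V)} {p : (V →L[ℝ] V) → Prop}
    (h0 : ∀ᵐ A ∂ν₀, p A) (h1 : ∀ᵐ A ∂ν₁, p A) : ∀ᵐ A ∂(mix t ν₀ ν₁), p A := by
  unfold mix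
  rw [ae_add_measure_iff]
  exact ⟨Measure.ae_smul_measure h0 _, Measure.ae_smul_measure h1 _⟩

lemma mix_good {t : ℝ} (ht0 : 0 ≤ t) (ht1 : t ≤ 1) {ν₀ ν₁ : Measure (V →L[ℝ] V)}
    (h0 : Good ν₀ m M) (h1 : Good ν₁ m M) : Good (mix t ν₀ ν₁) m M := by
  have := h0.prob
  have := h1.prob
  refine ⟨⟨?_⟩, h0.m0, h0.m1, h0.M1, mix_ae h0.ae h1.ae⟩
  unfold mix
  simp only [Measure.add_apply, Measure.smul_apply, measure_univ]
  rw [ENNReal.smul_def, ENNReal.smul_def, smul_eq_mul, smul_eq_mul, mul_one, mul_one, ← ENNReal.coe_add,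
    ← Real.toNNReal_add (by linarith) ht0]
  simp

lemma mix_map {U : Type*} [NormedAddCommGroup U] [InnerProductSpace ℝ U] [FiniteDimensional ℝ U]
    [MeasurableSpace U] [BorelSpace U] {t : ℝ} {ν₀ ν₁ : Measure (V →L[ℝ] V)}
    {c : (V →L[ℝ] V) → (U →L[ℝ] U)} (hc : Measurable c) :
    (mix t ν₀ ν₁).map c = mix t (ν₀.map c) (ν₁.map c) := by
  unfold mix
  rw [Measure.map_add _ _ hc, Measure.map_smul, Measure.map_smul]

end G

lemma power_lower {a : ℕ → ℝ} {ε c : ℝ} (hε : 0 < ε) (hs : Summable fun k : ℕ => |a k| * ε ^ k)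
    (hc : c < a 0) : ∃ ε' : ℝ, 0 < ε' ∧ ε' ≤ ε ∧ ∀ t, 0 ≤ t → t < ε' → c < ∑' k, a k * t ^ k := by
  have hs1 : Summable fun k : ℕ => |a (k + 1)| * ε ^ (k + 1) := (summable_nat_add_iff 1).2 hs
  set S := ∑' k : ℕ, |a (k + 1)| * ε ^ (k + 1) with hS
  have hS0 : 0 ≤ S := tsum_nonneg fun k => by positivity
  refine ⟨min ε (ε * (a 0 - c) / (S + 1)), ?_, min_le_left _ _, fun t ht0 ht => ?_⟩
  · have : 0 < a 0 - c := by linarith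
    positivity
  have ht1 : t < ε := ht.trans_le (min_le_left _ _)
  have ht2 : t < ε * (a 0 - c) / (S + 1) := ht.trans_le (min_le_right _ _)
  have hsum : Summable fun k : ℕ => a k * t ^ k := by
    refine Summable.of_norm_bounded hs fun k => ?_
    rw [Real.norm_eq_abs, abs_mul, abs_of_nonneg (pow_nonneg ht0 k)]
    gcongr
  rw [hsum.tsum_eq_zero_add]
  have h1 : ‖∑' k : ℕ, a (k + 1) * t ^ (k + 1)‖ ≤ t / ε * S := by
    refine tsum_of_norm_bounded (hs1.hasSum.mul_left (t / ε)) fun k => ?_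
    rw [Real.norm_eq_abs, abs_mul, abs_of_nonneg (pow_nonneg ht0 _)]
    calc |a (k + 1)| * t ^ (k + 1) = |a (k + 1)| * (t ^ k * t) := by rw [pow_succ]
      _ ≤ |a (k + 1)| * (ε ^ k * t) := by gcongr
      _ = _ := by rw [pow_succ]; field_simp
  rw [Real.norm_eq_abs] at h1
  have h2 := (abs_le.1 h1).1
  have h3 : t / ε * S < a 0 - c := by
    rw [lt_div_iff₀ (by positivity)] at ht2
    rw [div_mul_eq_mul_div, div_lt_iff₀ hε]
    nlinarith
  simp only [pow_zero, mul_one]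
  linarith

section G
variable {V : Type*} [NormedAddCommGroup V] [InnerProductSpace ℝ V] [FiniteDimensional ℝ V]
  [MeasurableSpace V] [BorelSpace V]
variable {m M : ℝ}

lemma slow_mix {ν₀ ν₁ : Measure (V →L[ℝ] V)} (h₀ : Good ν₀ m M) (h₁ : Good ν₁ m M)
    {α C c c₂ : ℝ} {W : Set V} {T : V → ℝ} (hα : 0 < α) (hC : 0 < C) (hT : OneStep ν₀ α C c W T)
    (hc : c < c₂) : ∃ ε : ℝ, 0 < ε ∧ ∀ t, 0 ≤ t → t ≤ 1 → t < ε → OneStep (mix t ν₀ ν₁) α C c₂ W T := by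
  have := h₁.prob
  have hE : Real.exp (α * c) < Real.exp (α * c₂) := Real.exp_lt_exp.2 (mul_lt_mul_of_pos_left hc hα)
  have hM : 0 < M ^ α := Real.rpow_pos_of_pos h₀.M0 _
  refine ⟨(Real.exp (α * c₂) - Real.exp (α * c)) / (C * M ^ α),
    div_pos (by linarith) (by positivity), fun t ht0 ht1 ht => ⟨hT.meas, hT.lo, hT.up, fun v hv => ?_⟩⟩
  have i0 := gauge_int h₀ hα.le hC.le hT.meas hT.nonneg hT.up v
  have i1 := gauge_int h₁ hα.le hC.le hT.meas hT.nonneg hT.up v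
  rw [mix_integral ht0 ht1 i0 i1]
  rw [lt_div_iff₀ (by positivity)] at ht
  have e0 := hT.step v hv
  have hTv := hT.nonneg v
  have e1 : ∫ A, T (A v) ∂ν₁ ≤ C * M ^ α * T v := by
    calc ∫ A, T (A v) ∂ν₁ ≤ ∫ A : V →L[ℝ] V, C * M ^ α * T v ∂ν₁ := by
          refine integral_mono_ae i1 (integrable_const _) ?_
          filter_upwards [h₁.ae] with A hA
          calc T (A v) ≤ C * ‖A v‖ ^ α := hT.up _
            _ ≤ C * (M * ‖v‖) ^ α := by gcongr; exact (hA v).2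
            _ = C * M ^ α * ‖v‖ ^ α := by rw [Real.mul_rpow h₀.M0.le (norm_nonneg _)]; ring
            _ ≤ _ := by gcongr; exact hT.lo v
      _ = _ := by simp
  have p := Real.exp_pos (α * c)
  calc (1 - t) * ∫ A, T (A v) ∂ν₀ + t * ∫ A, T (A v) ∂ν₁
      ≤ (1 - t) * (Real.exp (α * c) * T v) + t * (C * M ^ α * T v) := by
        gcongr
    _ = ((1 - t) * Real.exp (α * c) + t * (C * M ^ α)) * T v := by ring
    _ ≤ _ := by
        refine mul_le_mul_of_nonneg_right ?_ hTv
        nlinarith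

lemma tendsto_of_bounds {f : ℕ → ℝ} {l D : ℝ} (hlo : ∀ n : ℕ, n * l - D ≤ f n)
    (hup : ∀ η > 0, ∃ C', ∀ n : ℕ, f n ≤ (l + η) * n + C') :
    Tendsto (fun n : ℕ => (n:ℝ)⁻¹ * f n) atTop (nhds l) := by
  have hinv : Tendsto (fun n : ℕ => (n:ℝ)⁻¹) atTop (nhds 0) := tendsto_inv_atTop_nhds_zero_nat
  have hlin : ∀ b D : ℝ, Tendsto (fun n : ℕ => b + (n:ℝ)⁻¹ * D) atTop (nhds b) := by
    intro b D
    simpa using (hinv.mul_const D).const_add b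
  refine tendsto_order.2 ⟨fun b hb => ?_, fun b hb => ?_⟩
  · filter_upwards [(hlin l (-D)).eventually (lt_mem_nhds hb), eventually_gt_atTop 0] with n hn hn0
    have hn0' : (0:ℝ) < n := by exact_mod_cast hn0
    refine hn.trans_le ?_
    calc l + (n:ℝ)⁻¹ * (-D) = (n:ℝ)⁻¹ * (n * l - D) := by field_simp; ring
      _ ≤ _ := by gcongr; exact hlo n
  · obtain ⟨C', hC'⟩ := hup ((b - l) / 2) (by linarith)
    filter_upwards [(hlin (l + (b - l) / 2) C').eventually (gt_mem_nhds (show l + (b - l) / 2 < b by linarith)),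
      eventually_gt_atTop 0] with n hn hn0
    have hn0' : (0:ℝ) < n := by exact_mod_cast hn0
    refine lt_of_le_of_lt ?_ hn
    calc (n:ℝ)⁻¹ * f n ≤ (n:ℝ)⁻¹ * ((l + (b - l) / 2) * n + C') := by gcongr; exact hC' n
      _ = _ := by field_simp

theorem main_end [Nontrivial V] {ν₀ ν₁ : Measure (V →L[ℝ] V)} (h₀ : Good ν₀ m M) (h₁ : Good ν₁ m M)
    (hcl : ∀ F : Set (V →L[ℝ] V), IsClosed F → (∀ᵐ A ∂ν₀, A ∈ F) → ∀ᵐ A ∂ν₁, A ∈ F)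
    (h2 : ∃ p q : V, ‖p‖ = 1 ∧ ‖q‖ = 1 ∧ inner ℝ p q = (0:ℝ)) {l l12 : ℝ}
    (hl : Tendsto (fun n : ℕ => (n : ℝ)⁻¹ * ∫ A, Real.log ‖A‖ ∂(cp ν₀ n)) atTop (nhds l))
    (hl12 : Tendsto (fun n : ℕ => (n : ℝ)⁻¹ * ∫ A, Real.log (n2 A) ∂(cp ν₀ n)) atTop (nhds l12))
    (hgap : l12 < 2 * l) :
    ∃ ε : ℝ, 0 < ε ∧ ε ≤ 1 ∧ ∃ a : ℕ → ℝ, (Summable fun k : ℕ => |a k| * ε ^ k) ∧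
      ∀ t : ℝ, 0 ≤ t → t < ε →
        Tendsto (fun n : ℕ => (n : ℝ)⁻¹ * ∫ A, Real.log ‖A‖ ∂(cp (mix t ν₀ ν₁) n)) atTop
          (nhds (∑' k, a k * t ^ k)) := by
  obtain ⟨W, hinv₀, ⟨c, hcl', hslow⟩, hWtop, hlow⟩ := exists_max_slow h₀ hl
  have hinv₁ := hcl _ (Pres_closed W) hinv₀
  have hU₀ := good_compr h₀ hinv₀
  have hU₁ := good_compr h₁ hinv₁
  obtain ⟨n₀, hn₀, α, θ, hα, hα1, hθ, hθ1, hcon⟩ := contr_main h₀ hinv₀ h2 hl12 hlow hgap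
  obtain ⟨K, ρ, hK, hρ, hρ1, hcontr⟩ := contr_iter hU₀ hn₀ hα hα1 hθ hθ1 hcon
  obtain ⟨e, he1⟩ : ∃ e : Wᗮ, ‖e‖ = 1 := by
    have : Wᗮ ≠ ⊥ := fun h => hWtop ((Submodule.orthogonal_eq_bot_iff).1 h)
    obtain ⟨x, hx, hx0⟩ := Submodule.exists_mem_ne_zero_of_ne_bot this
    have hx' : (⟨x, hx⟩ : Wᗮ) ≠ 0 := fun h => hx0 (by simpa using congrArg Subtype.val h)
    exact ⟨_, norm_unit hx'⟩
  have he := unit_ne he1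
  obtain ⟨ε₀, hε₀, hε₀1, a, hasum, hser⟩ := series hU₀ hU₁ hα hα1 hK hρ hρ1 hcontr he
  have hcm := (compr_cont W).measurable
  -- equation for mixtures
  have hmix : ∀ t : ℝ, 0 ≤ t → t < ε₀ → ∃ (u : Wᗮ → ℝ) (B : ℝ), Measurable u ∧ (∀ x, |u x| ≤ B) ∧
      ∀ x, x ≠ 0 → ∫ A, (Real.log ‖A x‖ + u (A x)) ∂((mix t ν₀ ν₁).map (compr W)) =
        ∑' k, a k * t ^ k + Real.log ‖x‖ + u x := by
    intro t ht0 ht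
    obtain ⟨u, B, hu, hB, heq⟩ := hser t ht0 ht
    refine ⟨u, B, hu, hB, fun x hx => ?_⟩
    have hm : Measurable (fun A : Wᗮ →L[ℝ] Wᗮ => Real.log ‖A x‖ + u (A x)) :=
      (lu_meas hu).comp (meas_app x)
    rw [mix_map hcm, mix_integral ht0 (by linarith)
      (hU₀.integrable hm fun A hA => lu_bd hB hU₀.m0 hA hx)
      (hU₁.integrable hm fun A hA => lu_bd hB hU₁.m0 hA hx)]
    exact heq x hx
  have hUt : ∀ t : ℝ, 0 ≤ t → t < ε₀ → Good ((mix t ν₀ ν₁).map (compr W)) m M := by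
    intro t ht0 ht
    exact good_compr (mix_good ht0 (by linarith) h₀ h₁) (mix_ae hinv₀ hinv₁)
  -- the value at zero
  have hl0 : l ≤ a 0 := by
    refine le_of_forall_lt fun c' hc' => ?_
    obtain ⟨c'', hc1, hc2⟩ := exists_between hc'
    refine hc1.trans_le ?_
    obtain ⟨n, hn, hn2⟩ := hlow c'' hc2
    obtain ⟨u, B, hu, hB, heq⟩ := hmix 0 le_rfl hε₀
    have hm0 : mix 0 ν₀ ν₁ = ν₀ := by unfold mix; simp
    have ha0 : ∑' k, a k * (0:ℝ) ^ k = a 0 := by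
      rw [tsum_eq_single 0 (fun k hk => by simp [hk])]; simp
    rw [hm0, ha0] at heq
    by_contra hlt
    push Not at hlt
    have hn0 : (0:ℝ) < n := by exact_mod_cast hn
    obtain ⟨k, hk⟩ := exists_nat_gt (2 * B / (n * (c'' - a 0)))
    rw [div_lt_iff₀ (mul_pos hn0 (by linarith))] at hk
    have e1 := H_mul_low hU₀ hn2 k e he
    have e2 := (abs_le.1 (coh_lower hU₀ hu hB heq (k * n) he)).2
    push_cast at e1 e2
    nlinarith
  -- slow part
  obtain ⟨α₁, hα₁, hα₁1, C₁, T₁, hC₁, hT₁, hsub₁⟩ := hslow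
  obtain ⟨c₂, hcc₂, hc₂l⟩ := exists_between hcl'
  obtain ⟨ε₁, hε₁, hε₁0, hlam⟩ := power_lower hε₀ hasum (hc₂l.trans_le hl0)
  obtain ⟨ε₂, hε₂, hsl⟩ := slow_mix h₀ h₁ hα₁ hC₁ hT₁ hcc₂
  refine ⟨min ε₁ ε₂, lt_min hε₁ hε₂, (min_le_left _ _).trans (hε₁0.trans hε₀1), a, ?_, ?_⟩
  · refine Summable.of_nonneg_of_le (fun k => by positivity) (fun k => ?_) hasum
    have : min ε₁ ε₂ ≤ ε₀ := (min_le_left _ _).trans hε₁0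
    gcongr
  intro t ht0 ht
  have ht1 : t < ε₁ := ht.trans_le (min_le_left _ _)
  have ht2 : t < ε₂ := ht.trans_le (min_le_right _ _)
  have ht3 : t < ε₀ := ht1.trans_le hε₁0
  have ht4 : t ≤ 1 := by linarith
  set L := ∑' k, a k * t ^ k with hL
  have hLc : c₂ < L := hlam t ht0 ht1
  have hg := mix_good ht0 ht4 h₀ h₁
  have hinv : ∀ᵐ A ∂(mix t ν₀ ν₁), A ∈ Pres W := mix_ae hinv₀ hinv₁
  have hgU := hUt t ht0 ht3
  obtain ⟨u, B, hu, hB, heq⟩ := hmix t ht0 ht3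
  refine tendsto_of_bounds (D := 2 * B) (fun n => ?_) (fun η hη => ?_)
  · have e1 := (abs_le.1 (coh_lower hgU hu hB heq n he)).1
    rw [he1, Real.log_one] at e1
    have e2 : H ((mix t ν₀ ν₁).map (compr W)) n e ≤ ∫ A, Real.log ‖A‖ ∂(cp (mix t ν₀ ν₁) n) := by
      have hcp := cp_compr hg hinv n
      have i1 := (hgU.cp n).int_log he
      unfold H
      rw [← hcp.2] at i1 ⊢
      rw [integral_map hcm.aemeasurable (meas_log e).aestronglyMeasurable]
      refine integral_mono_ae ((integrable_map_measure i1.1 hcm.aemeasurable).1 i1)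
        (int_lognorm (hg.cp n)) ?_
      filter_upwards [(hg.cp n).ae, hcp.1] with A hA hP
      have hB := compr_Bd (hg.cp n).m0 hP hA
      refine Real.log_le_log (norm_pos_iff.2 (Bd_ne (hg.cp n).m0 hB he)) ?_
      refine (compr_norm_le W A e).trans ((A.le_opNorm _).trans ?_)
      have : ‖(e : V)‖ = 1 := he1
      rw [this, mul_one]
    linarith
  · have hb0 : 0 ≤ |Real.log m| + |Real.log M| + 2 * B := by
      have := (abs_nonneg _).trans (hB e)
      positivity
    obtain ⟨s, hs, hs1, hsb, hsη, -⟩ := small_exp hb0 (half_pos hη)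
    have hαs : 0 < α₁ * s := mul_pos hα₁ hs
    have hle : α₁ * s ≤ s := mul_le_of_le_one_left hs.le hα₁1
    have hTU := coh_gauge hgU hu hB heq hαs
      ((mul_le_mul_of_nonneg_right hle hb0).trans hsb)
      ((mul_le_mul_of_nonneg_right hle (sq_nonneg _)).trans hsη)
    have hTW := (hsl t ht0 ht4 ht2).pow hg hα₁.le hC₁.le hs hs1
    have hsubW := sub_pow (fun v => hT₁.nonneg v) hsub₁ hs.le hs1
    obtain ⟨C, T, hC, hT, -⟩ := combine hg hinv hαs (hle.trans hs1) (Real.rpow_pos_of_pos hC₁ s)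
      (Real.exp_pos _) hTW hsubW hTU (c := L + η) (by linarith) (by linarith)
    have hT' : OneStep (mix t ν₀ ν₁) (α₁ * s) C (L + η) Set.univ T := by
      simpa using hT
    exact hT'.upper hg hαs hC.le
end G
end LyapAux

namespace LyapAux
section final

lemma glCLM_cont : Continuous (glCLM : GLd d → Ed d →L[ℝ] Ed d) := by
  unfold glCLM
  have h : Continuous (Matrix.toEuclideanCLM (n := Fin d) (𝕜 := ℝ)) :=
    LinearMap.continuous_of_finiteDimensional
      (Matrix.toEuclideanCLM (n := Fin d) (𝕜 := ℝ)).toAlgEquiv.toLinearMap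
  exact h.comp Units.continuous_val

lemma glCLM_mul (g h : GLd d) : glCLM (g * h) = glCLM g * glCLM h := by
  unfold glCLM
  rw [← map_mul]; rfl

lemma glCLM_one : glCLM (1 : GLd d) = 1 := by
  unfold glCLM
  exact map_one _

instance glSCT : SecondCountableTopology (GLd d) := by
  have h : Topology.IsInducing (Units.embedProduct (Matrix (Fin d) (Fin d) ℝ)) :=
    Units.isEmbedding_embedProduct.toIsInducing
  have : SecondCountableTopology (Matrix (Fin d) (Fin d) ℝ) :=
    inferInstanceAs (SecondCountableTopology (Fin d → Fin d → ℝ))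
  have : SecondCountableTopology (Matrix (Fin d) (Fin d) ℝ)ᵐᵒᵖ :=
    (MulOpposite.opHomeomorph (M := Matrix (Fin d) (Fin d) ℝ)).symm.isInducing.secondCountableTopology
  exact h.secondCountableTopology

lemma mconvN_eq (μ : Measure (GLd d)) [IsProbabilityMeasure μ] (n : ℕ) : mconvN μ n = cp μ n := by
  induction n with
  | zero => rfl
  | succ n ih =>
    by_cases hn : n = 0
    · subst hn
      simp only [mconvN, if_true]
      exact (cp_one μ).symm
    · simp only [mconvN, if_neg hn]
      rw [ih]; rfl

lemma mconvN_map (μ : Measure (GLd d)) [IsProbabilityMeasure μ] (n : ℕ) :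
    (mconvN μ n).map glCLM = cp (μ.map glCLM) n := by
  rw [mconvN_eq]
  exact (cp_map μ glCLM glCLM_cont.measurable Set.univ MeasurableSet.univ trivial
    (fun _ _ _ _ => trivial) glCLM_one (fun x _ y _ => glCLM_mul x y) (by simp) n).2

lemma int_gnorm (μ : Measure (GLd d)) [IsProbabilityMeasure μ] (n : ℕ) :
    ∫ g, Real.log (gnorm g) ∂(mconvN μ n) = ∫ A, Real.log ‖A‖ ∂(cp (μ.map glCLM) n) := by
  rw [← mconvN_map, integral_map glCLM_cont.measurable.aemeasurable]
  · rfl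
  · exact (Real.measurable_log.comp measurable_norm).aestronglyMeasurable

lemma int_N2 (μ : Measure (GLd d)) [IsProbabilityMeasure μ] (n : ℕ) :
    ∫ g, Real.log (N2 g) ∂(mconvN μ n) = ∫ A, Real.log (n2 A) ∂(cp (μ.map glCLM) n) := by
  rw [← mconvN_map, integral_map glCLM_cont.measurable.aemeasurable]
  · rfl
  · exact (Real.measurable_log.comp (n2_meas)).aestronglyMeasurable

lemma L1_of_tendsto {μ : Measure (GLd d)} [IsProbabilityMeasure μ] {l : ℝ}
    (h : Tendsto (fun n : ℕ => (n : ℝ)⁻¹ * ∫ A, Real.log ‖A‖ ∂(cp (μ.map glCLM) n)) atTop (nhds l)) :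
    L1 μ = l := by
  unfold L1
  simp_rw [int_gnorm]
  exact h.limUnder_eq

lemma L12_of_tendsto {μ : Measure (GLd d)} [IsProbabilityMeasure μ] {l : ℝ}
    (h : Tendsto (fun n : ℕ => (n : ℝ)⁻¹ * ∫ A, Real.log (n2 A) ∂(cp (μ.map glCLM) n)) atTop (nhds l)) :
    L12 μ = l := by
  unfold L12
  simp_rw [int_N2]
  exact h.limUnder_eq

lemma gl_good {S : Set (GLd d)} (hS : IsCompact S) : ∃ m M : ℝ, ∀ μ : Measure (GLd d),
    IsProbabilityMeasure μ → μ Sᶜ = 0 → Good (μ.map glCLM) m M := by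
  obtain ⟨a, ha⟩ := (hS.image (glCLM_cont (d := d)).norm).bddAbove
  obtain ⟨b, hb⟩ := (hS.image ((glCLM_cont (d := d)).comp continuous_inv).norm).bddAbove
  set M := max 1 (max a b) with hM
  have hM1 : 1 ≤ M := le_max_left _ _
  have hM0 : 0 < M := by linarith
  refine ⟨M⁻¹, M, fun μ hμ hμS => ?_⟩
  refine ⟨Measure.isProbabilityMeasure_map glCLM_cont.measurable.aemeasurable, by positivity,
    inv_le_one_of_one_le₀ hM1, hM1, ?_⟩
  refine (ae_map_iff (p := fun x => x ∈ Bd M⁻¹ M) glCLM_cont.measurable.aemeasurable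
    (Bd_closed _ _).measurableSet).2 ?_
  have hae : ∀ᵐ g ∂μ, g ∈ S := mem_ae_iff.2 hμS
  filter_upwards [hae] with g hg
  have h1 : ‖glCLM g‖ ≤ M :=
    (ha ⟨g, hg, rfl⟩).trans ((le_max_left _ _).trans (le_max_right _ _))
  have h2 : ‖glCLM g⁻¹‖ ≤ M :=
    (hb ⟨g, hg, rfl⟩).trans ((le_max_right _ _).trans (le_max_right _ _))
  intro v
  constructor
  · rw [inv_mul_le_iff₀ hM0]
    calc ‖v‖ = ‖glCLM g⁻¹ (glCLM g v)‖ := by rw [glCLM_leftInv]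
      _ ≤ ‖glCLM g⁻¹‖ * ‖glCLM g v‖ := ContinuousLinearMap.le_opNorm _ _
      _ ≤ _ := by gcongr
  · exact ((glCLM g).le_opNorm v).trans (by gcongr)

end final
end LyapAux

theorem analyticity_bernoulli_full_support
    (d : ℕ) (hd : 2 ≤ d) (S : Set (GLd d)) (hS : IsCompact S)
    (μ₀ μ₁ : Measure (GLd d)) [IsProbabilityMeasure μ₀] [IsProbabilityMeasure μ₁]
    (hsupp : IsSupport μ₀ S) (hμ₁S : μ₁ Sᶜ = 0)
    (hgap : L2 μ₀ < L1 μ₀) :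
    ∃ ε : ℝ, 0 < ε ∧ ε ≤ 1 ∧ ∃ a : ℕ → ℝ,
      (Summable fun k : ℕ => |a k| * ε ^ k) ∧
      ∀ t : ℝ, 0 ≤ t → t < ε →
        L1 (Real.toNNReal (1 - t) • μ₀ + Real.toNNReal t • μ₁ : Measure (GLd d)) = ∑' k : ℕ, a k * t ^ k := by
  obtain ⟨m, M, hgood⟩ := LyapAux.gl_good hS
  have g0 := hgood μ₀ inferInstance hsupp.1
  have g1 := hgood μ₁ inferInstance hμ₁S
  have p1 : ‖(EuclideanSpace.single (⟨0, by omega⟩ : Fin d) (1 : ℝ) : Ed d)‖ = 1 := by simp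
  have h2 : ∃ p q : Ed d, ‖p‖ = 1 ∧ ‖q‖ = 1 ∧ inner ℝ p q = (0 : ℝ) := by
    refine ⟨EuclideanSpace.single ⟨0, by omega⟩ 1, EuclideanSpace.single ⟨1, by omega⟩ 1, p1,
      by simp, ?_⟩
    rw [EuclideanSpace.inner_single_left]
    simp
  have : Nontrivial (Ed d) :=
    ⟨EuclideanSpace.single (⟨0, by omega⟩ : Fin d) (1 : ℝ), 0, fun h => by
      rw [h, norm_zero] at p1; exact zero_ne_one p1⟩
  obtain ⟨l, hl⟩ := LyapAux.lim_norm g0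
  obtain ⟨l12, hl12⟩ := LyapAux.lim_n2 h2 g0
  have e1 := LyapAux.L1_of_tendsto hl
  have e2 := LyapAux.L12_of_tendsto hl12
  have hcl : ∀ F : Set (Ed d →L[ℝ] Ed d), IsClosed F → (∀ᵐ A ∂(μ₀.map glCLM), A ∈ F) →
      ∀ᵐ A ∂(μ₁.map glCLM), A ∈ F := by
    intro F hF h
    have hc := (LyapAux.glCLM_cont (d := d))
    have h' := (ae_map_iff (p := fun x => x ∈ F) hc.measurable.aemeasurable hF.measurableSet).1 h
    refine (ae_map_iff (p := fun x => x ∈ F) hc.measurable.aemeasurable hF.measurableSet).2 ?_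
    have hae : ∀ᵐ g ∂μ₁, g ∈ S := mem_ae_iff.2 hμ₁S
    filter_upwards [hae] with g hg
    by_contra hgF
    have hpos := hsupp.2 g hg (glCLM ⁻¹' Fᶜ) (hF.isOpen_compl.preimage hc) hgF
    have hz : μ₀ (glCLM ⁻¹' Fᶜ) = 0 := h'
    exact hpos.ne' hz
  have hgap2 : l12 < 2 * l := by
    unfold L2 at hgap
    rw [e1, e2] at hgap
    linarith
  obtain ⟨ε, hε0, hε1, a, ha, H⟩ := LyapAux.main_end g0 g1 hcl h2 hl hl12 hgap2
  refine ⟨ε, hε0, hε1, a, ha, fun t ht0 ht => ?_⟩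
  have hlim := H t ht0 ht
  have hmap : (Real.toNNReal (1 - t) • μ₀ + Real.toNNReal t • μ₁ : Measure (GLd d)).map glCLM =
      LyapAux.mix t (μ₀.map glCLM) (μ₁.map glCLM) := by
    unfold LyapAux.mix
    rw [Measure.map_add _ _ LyapAux.glCLM_cont.measurable, Measure.map_smul, Measure.map_smul]
  have hgm := LyapAux.mix_good ht0 (ht.le.trans hε1) g0 g1
  rw [← hmap] at hlim hgm
  have hp : IsProbabilityMeasure (Real.toNNReal (1 - t) • μ₀ + Real.toNNReal t • μ₁) := by
    refine ⟨?_⟩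
    have hu := hgm.prob.measure_univ
    rwa [Measure.map_apply LyapAux.glCLM_cont.measurable MeasurableSet.univ,
      Set.preimage_univ] at hu
  exact LyapAux.L1_of_tendsto hlim

end
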